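/- Finite-time blow-up (Section 2): For every choice of admissible initial data u₀, v₀, the classical solution of problem (1.1) is not global: its maximal existence time T is finite, sup_{cl(B_R)}(u(·,t)+v(·,t)) → ∞ as t → T⁻, and every point of ∂B_R is a blow-up point. -/

import Mathlib

/-!
Existence times are bounded by a comparison principle: a pair that starts above the constant `a`
stays above `-log (e^{-a} - λ t)` with `λ = min λ₁ λ₂`, which becomes infinite at time `e^{-a} / λ`.
The same principle yields uniqueness and, applied in doubled variables to `f x - f y` with
`‖x‖ ≤ ‖y‖`, preserves the radial monotonicity of the data. Hence at each time the supremum over the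
closed ball is attained at every boundary point.

If `u + v` stayed bounded there along times approaching `T`, the solution would be bounded at these
times, and local existence with a time depending only on the size of the data would continue it
beyond `T`. Local existence is obtained by working with radial profiles in `C([0,1])`, where the
Laplacian with Neumann condition is inverted by an explicit integral operator.

* The linear heat problem with given source and boundary flux satisfies an a priori estimate, so the
  data with a generalised solution form a closed subspace. Yosida approximation provides initial
  values in the domain of `Δ²`; stability under integration in time adds the data polynomial in
  time, and these are dense.
* In the estimate the flux carries a coefficient that is arbitrarily small for short times. The time
  derivatives of the nonlinear solution are therefore a fixed point of a contracting map, the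
  solution operator of the differentiated problem.
-/

open Set Real Metric MeasureTheory Filter Topology

/-- The Euclidean Laplacian of `f : ℝⁿ → ℝ` at `x`, computed as the sum of second
directional derivatives along the coordinate directions. -/
noncomputable def lap {n : ℕ} (f : EuclideanSpace ℝ (Fin n) → ℝ)
    (x : EuclideanSpace ℝ (Fin n)) : ℝ :=
  ∑ i : Fin n, iteratedDeriv 2 (fun s : ℝ => f (x + s • EuclideanSpace.single i (1 : ℝ))) 0

/-- The outward normal derivative `∇f · (x/R)` on the sphere of radius `R`. -/
noncomputable def normalDeriv {n : ℕ} (R : ℝ) (f : EuclideanSpace ℝ (Fin n) → ℝ)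
    (x : EuclideanSpace ℝ (Fin n)) : ℝ :=
  deriv (fun s : ℝ => f (x + s • (R⁻¹ • x))) 0

/-- Admissible initial data for problem (1.1): nonnegative, smooth, radial with
nondecreasing radial profiles, and satisfying the compatibility conditions. -/
structure AdmissibleData (n : ℕ) (R : ℝ)
    (u₀ v₀ : EuclideanSpace ℝ (Fin n) → ℝ) : Prop where
  u0_nonneg : ∀ x ∈ closedBall (0 : EuclideanSpace ℝ (Fin n)) R, 0 ≤ u₀ x
  v0_nonneg : ∀ x ∈ closedBall (0 : EuclideanSpace ℝ (Fin n)) R, 0 ≤ v₀ x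
  u0_smooth : ContDiffOn ℝ (⊤ : ℕ∞) u₀ (closedBall (0 : EuclideanSpace ℝ (Fin n)) R)
  v0_smooth : ContDiffOn ℝ (⊤ : ℕ∞) v₀ (closedBall (0 : EuclideanSpace ℝ (Fin n)) R)
  u0_radial_mono : ∀ x ∈ closedBall (0 : EuclideanSpace ℝ (Fin n)) R,
    ∀ y ∈ closedBall (0 : EuclideanSpace ℝ (Fin n)) R, ‖x‖ ≤ ‖y‖ → u₀ x ≤ u₀ y
  v0_radial_mono : ∀ x ∈ closedBall (0 : EuclideanSpace ℝ (Fin n)) R,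
    ∀ y ∈ closedBall (0 : EuclideanSpace ℝ (Fin n)) R, ‖x‖ ≤ ‖y‖ → v₀ x ≤ v₀ y
  compat_u : ∀ x : EuclideanSpace ℝ (Fin n), ‖x‖ = R → normalDeriv R u₀ x = Real.exp (v₀ x)
  compat_v : ∀ x : EuclideanSpace ℝ (Fin n), ‖x‖ = R → normalDeriv R v₀ x = Real.exp (u₀ x)
  compat_u' : ∀ x ∈ closedBall (0 : EuclideanSpace ℝ (Fin n)) R, 0 ≤ lap u₀ x + Real.exp (v₀ x)
  compat_v' : ∀ x ∈ closedBall (0 : EuclideanSpace ℝ (Fin n)) R, 0 ≤ lap v₀ x + Real.exp (u₀ x)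

/-- A classical solution of problem (1.1) on `[0,T)` on the ball of radius `R`:
continuous on `cl(B_R) × [0,T)`, of class C²,¹ on `cl(B_R) × (0,T)`, satisfying the
equations `u_t = Δu + λ₁ e^v`, `v_t = Δv + λ₂ e^u` in `B_R × (0,T)`, the boundary
conditions `∂u/∂η = e^v`, `∂v/∂η = e^u` on `∂B_R × (0,T)`, and the initial conditions. -/
structure IsClassicalSolution (n : ℕ) (R T lam1 lam2 : ℝ)
    (u v : EuclideanSpace ℝ (Fin n) → ℝ → ℝ)
    (u₀ v₀ : EuclideanSpace ℝ (Fin n) → ℝ) : Prop where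
  cont_u : ContinuousOn (fun p : EuclideanSpace ℝ (Fin n) × ℝ => u p.1 p.2)
    ((closedBall (0 : EuclideanSpace ℝ (Fin n)) R) ×ˢ Ico (0 : ℝ) T)
  cont_v : ContinuousOn (fun p : EuclideanSpace ℝ (Fin n) × ℝ => v p.1 p.2)
    ((closedBall (0 : EuclideanSpace ℝ (Fin n)) R) ×ˢ Ico (0 : ℝ) T)
  reg_space_u : ∀ t ∈ Ioo (0 : ℝ) T,
    ContDiffOn ℝ 2 (fun x => u x t) (closedBall (0 : EuclideanSpace ℝ (Fin n)) R)
  reg_space_v : ∀ t ∈ Ioo (0 : ℝ) T,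
    ContDiffOn ℝ 2 (fun x => v x t) (closedBall (0 : EuclideanSpace ℝ (Fin n)) R)
  reg_time_u : ∀ x ∈ closedBall (0 : EuclideanSpace ℝ (Fin n)) R, ∀ t ∈ Ioo (0 : ℝ) T,
    DifferentiableAt ℝ (u x) t
  reg_time_v : ∀ x ∈ closedBall (0 : EuclideanSpace ℝ (Fin n)) R, ∀ t ∈ Ioo (0 : ℝ) T,
    DifferentiableAt ℝ (v x) t
  pde_u : ∀ x ∈ ball (0 : EuclideanSpace ℝ (Fin n)) R, ∀ t ∈ Ioo (0 : ℝ) T,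
    deriv (u x) t = lap (fun y => u y t) x + lam1 * Real.exp (v x t)
  pde_v : ∀ x ∈ ball (0 : EuclideanSpace ℝ (Fin n)) R, ∀ t ∈ Ioo (0 : ℝ) T,
    deriv (v x) t = lap (fun y => v y t) x + lam2 * Real.exp (u x t)
  bc_u : ∀ x : EuclideanSpace ℝ (Fin n), ‖x‖ = R → ∀ t ∈ Ioo (0 : ℝ) T,
    normalDeriv R (fun y => u y t) x = Real.exp (v x t)
  bc_v : ∀ x : EuclideanSpace ℝ (Fin n), ‖x‖ = R → ∀ t ∈ Ioo (0 : ℝ) T,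
    normalDeriv R (fun y => v y t) x = Real.exp (u x t)
  init_u : ∀ x ∈ closedBall (0 : EuclideanSpace ℝ (Fin n)) R, u x 0 = u₀ x
  init_v : ∀ x ∈ closedBall (0 : EuclideanSpace ℝ (Fin n)) R, v x 0 = v₀ x

/-- `(u,v)` blows up at time `T`: `limsup_{t→T⁻} sup_{cl(B_R)} (u(·,t) + v(·,t)) = ∞`. -/
def BlowsUpAt (n : ℕ) (R T : ℝ) (u v : EuclideanSpace ℝ (Fin n) → ℝ → ℝ) : Prop :=
  ∀ M : ℝ, ∃ᶠ t in 𝓝[<] T, ∃ x ∈ closedBall (0 : EuclideanSpace ℝ (Fin n)) R, M < u x t + v x t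

/-- `x` is a blow-up point of `(u,v)` at time `T`: there exist sequences `x_k → x` in
`cl(B_R)` and `t_k → T⁻` with `u(x_k,t_k) → ∞` or `v(x_k,t_k) → ∞`. -/
def IsBlowUpPoint (n : ℕ) (R T : ℝ) (u v : EuclideanSpace ℝ (Fin n) → ℝ → ℝ)
    (x : EuclideanSpace ℝ (Fin n)) : Prop :=
  ∃ (xs : ℕ → EuclideanSpace ℝ (Fin n)) (ts : ℕ → ℝ),
    (∀ k, xs k ∈ closedBall (0 : EuclideanSpace ℝ (Fin n)) R) ∧
    (∀ k, ts k ∈ Ioo (0 : ℝ) T) ∧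
    Tendsto xs atTop (𝓝 x) ∧ Tendsto ts atTop (𝓝 T) ∧
    (Tendsto (fun k => u (xs k) (ts k)) atTop atTop ∨
     Tendsto (fun k => v (xs k) (ts k)) atTop atTop)

/-! ### Weighted means and integrals on the unit interval -/

section UnitInterval

variable {F : Type*} [NormedAddCommGroup F]

/-- Extension of a continuous function on `[0,1]` to `ℝ` by its values at the end points; it makes
interval integrals of the function available. -/
noncomputable def unitExtend (q : C(unitInterval, F)) : C(ℝ, F) := q.IccExtend zero_le_one

lemma unitExtend_of_mem (q : C(unitInterval, F)) {x : ℝ} (hx : x ∈ Icc (0 : ℝ) 1) :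
    unitExtend q x = q ⟨x, hx⟩ := IccExtend_of_mem _ _ hx

lemma unitExtend_coe (q : C(unitInterval, F)) (r : unitInterval) : unitExtend q r = q r :=
  unitExtend_of_mem q r.2

lemma norm_unitExtend_le (q : C(unitInterval, F)) (x : ℝ) : ‖unitExtend q x‖ ≤ ‖q‖ :=
  q.norm_coe_le_norm _

variable [NormedSpace ℝ F]

lemma norm_integral_pow_smul_unitExtend_le (j : ℕ) (q : C(unitInterval, F)) (r : ℝ) :
    ‖∫ s in (0 : ℝ)..1, s ^ j • unitExtend q (s * r)‖ ≤ ‖q‖ := by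
  have hbound : ∀ s ∈ Set.uIoc (0 : ℝ) 1, ‖s ^ j • unitExtend q (s * r)‖ ≤ ‖q‖ := by
    intro s hs
    rw [uIoc_of_le zero_le_one] at hs
    rw [norm_smul, norm_pow, Real.norm_eq_abs, abs_of_pos hs.1]
    exact (mul_le_mul (pow_le_one₀ hs.1.le hs.2) (norm_unitExtend_le q _) (norm_nonneg _)
      zero_le_one).trans_eq (one_mul _)
  simpa using intervalIntegral.norm_integral_le_of_norm_le_const hbound

/-- The weighted mean `q ↦ (r ↦ ∫₀¹ s^j q(sr) ds)`. Up to normalisation it is the mean of a radial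
function over the ball of radius `r` of `ℝ^(j+1)`. -/
noncomputable def weightedMean (j : ℕ) : C(unitInterval, F) →L[ℝ] C(unitInterval, F) :=
  LinearMap.mkContinuous
    { toFun := fun q => ⟨fun r => ∫ s in (0 : ℝ)..1, s ^ j • unitExtend q (s * r), by
        apply intervalIntegral.continuous_parametric_intervalIntegral_of_continuous'
        unfold Function.uncurry
        fun_prop⟩
      map_add' := fun p q => by
        ext r
        have hint (f : C(unitInterval, F)) :
            IntervalIntegrable (fun s : ℝ => s ^ j • unitExtend f (s * r)) volume 0 1 :=
          Continuous.intervalIntegrable (by fun_prop) _ _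
        simp only [ContinuousMap.coe_mk, ContinuousMap.add_apply]
        rw [← intervalIntegral.integral_add (hint p) (hint q)]
        simp only [← smul_add]
        rfl
      map_smul' := fun c q => by
        ext r
        simp only [ContinuousMap.coe_mk, ContinuousMap.smul_apply, RingHom.id_apply,
          ← intervalIntegral.integral_smul, smul_comm c]
        rfl }
    1 fun q => by
      rw [one_mul, ContinuousMap.norm_le _ (norm_nonneg _)]
      exact fun r => norm_integral_pow_smul_unitExtend_le j q r

lemma weightedMean_apply (j : ℕ) (q : C(unitInterval, F)) (r : unitInterval) :
    weightedMean j q r = ∫ s in (0 : ℝ)..1, s ^ j • unitExtend q (s * r) := rfl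

lemma norm_weightedMean_le (j : ℕ) (q : C(unitInterval, F)) : ‖weightedMean j q‖ ≤ ‖q‖ :=
  (ContinuousMap.norm_le _ (norm_nonneg _)).2 fun r => norm_integral_pow_smul_unitExtend_le j q r

lemma pow_smul_weightedMean (j : ℕ) (q : C(unitInterval, F)) (r : unitInterval) :
    (r : ℝ) ^ (j + 1) • weightedMean j q r = ∫ s in (0 : ℝ)..r, s ^ j • unitExtend q s := by
  have hsubst := intervalIntegral.smul_integral_comp_mul_right (a := 0) (b := 1)
    (fun s : ℝ => s ^ j • unitExtend q s) (r : ℝ)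
  rw [zero_mul, one_mul] at hsubst
  rw [weightedMean_apply, pow_succ', mul_smul, ← intervalIntegral.integral_smul, ← hsubst]
  simp only [mul_pow, smul_smul, mul_comm]

/-- The antiderivative `q ↦ (t ↦ τ ∫₀ᵗ q)`: integration in time over `[0,τ]`, with time rescaled to
the unit interval. -/
noncomputable def timeIntegral (τ : ℝ) : C(unitInterval, F) →L[ℝ] C(unitInterval, F) :=
  LinearMap.mkContinuous
    { toFun := fun q => ⟨fun t => (τ * t) • weightedMean 0 q t, by fun_prop⟩
      map_add' := fun p q => by ext t; simp
      map_smul' := fun c q => by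
        ext t
        simp only [map_smul, ContinuousMap.coe_mk, ContinuousMap.smul_apply, RingHom.id_apply,
          smul_comm c] }
    |τ| fun q => by
      refine (ContinuousMap.norm_le _ (by positivity)).2 fun t => ?_
      have ht : |(t : ℝ)| ≤ 1 := by rw [abs_of_nonneg t.2.1]; exact t.2.2
      have hmean := ((weightedMean 0 q).norm_coe_le_norm t).trans (norm_weightedMean_le 0 q)
      calc ‖(τ * t) • weightedMean 0 q t‖ = |τ| * |(t : ℝ)| * ‖weightedMean 0 q t‖ := by
            rw [norm_smul, norm_mul, Real.norm_eq_abs, Real.norm_eq_abs]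
        _ ≤ |τ| * 1 * ‖q‖ := by gcongr
        _ = |τ| * ‖q‖ := by rw [mul_one]

lemma timeIntegral_apply (τ : ℝ) (q : C(unitInterval, F)) (t : unitInterval) :
    timeIntegral τ q t = τ • ∫ s in (0 : ℝ)..t, unitExtend q s := by
  have h := pow_smul_weightedMean 0 q t
  simp only [zero_add, pow_one, pow_zero, one_smul] at h
  rw [← h, smul_smul]
  rfl

lemma mem_of_forall_pow_smul_mem {V : Submodule ℝ C(unitInterval, F)}
    (hV : IsClosed (V : Set C(unitInterval, F)))
    (h : ∀ (j : ℕ) (b : F), (⟨fun t => (t : ℝ) ^ j • b, by fun_prop⟩ : C(unitInterval, F)) ∈ V)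
    (f : C(unitInterval, F)) : f ∈ V := by
  have hpoly : ∀ (p : Polynomial ℝ) (b : F),
      (⟨fun t => p.eval (t : ℝ) • b, by fun_prop⟩ : C(unitInterval, F)) ∈ V := by
    intro p b
    induction p using Polynomial.induction_on' with
    | add p q hp hq =>
      convert V.add_mem hp hq using 1
      ext t
      simp [add_smul]
    | monomial j a =>
      convert V.smul_mem a (h j b) using 1
      ext t
      simp [mul_smul]
  refine hV.mem_of_tendsto (bernsteinApproximation_uniform f) (Eventually.of_forall fun N => ?_)
  have hsum : bernsteinApproximation N f = ∑ k : Fin (N + 1),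
      (⟨fun t => (bernsteinPolynomial ℝ N k).eval (t : ℝ) • f (bernstein.z k), by fun_prop⟩ :
        C(unitInterval, F)) := by
    ext t
    rw [bernsteinApproximation.apply, ContinuousMap.sum_apply]
    rfl
  rw [hsum]
  exact V.sum_mem fun k _ => hpoly _ _

lemma integral_unitExtend_of_forall_eq {q : C(unitInterval, F)} {G : ℝ → F}
    (h : ∀ t : unitInterval, q t = G t) (t : unitInterval) :
    ∫ s in (0 : ℝ)..t, unitExtend q s = ∫ s in (0 : ℝ)..t, G s := by
  refine intervalIntegral.integral_congr fun s hs => ?_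
  rw [uIcc_of_le t.2.1] at hs
  rw [unitExtend_of_mem _ ⟨hs.1, hs.2.trans t.2.2⟩, h]

variable [CompleteSpace F]

lemma timeIntegral_pow_smul (τ : ℝ) (j : ℕ) (b : F) :
    timeIntegral τ (⟨fun t => (t : ℝ) ^ j • b, by fun_prop⟩ : C(unitInterval, F)) =
      (τ / (j + 1)) • (⟨fun t => (t : ℝ) ^ (j + 1) • b, by fun_prop⟩ : C(unitInterval, F)) := by
  ext t
  rw [timeIntegral_apply, integral_unitExtend_of_forall_eq (G := fun s => s ^ j • b) fun _ => rfl,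
    intervalIntegral.integral_smul_const, integral_pow, zero_pow j.succ_ne_zero, sub_zero,
    smul_smul]
  simp only [ContinuousMap.smul_apply, ContinuousMap.coe_mk, smul_smul]
  congr 1
  ring

lemma mem_of_timeIntegral_mem {τ : ℝ} (hτ : τ ≠ 0) {V : Submodule ℝ C(unitInterval, F)}
    (hV : IsClosed (V : Set C(unitInterval, F))) (hconst : ∀ b, ContinuousMap.const _ b ∈ V)
    (hint : ∀ q ∈ V, timeIntegral τ q ∈ V) (f : C(unitInterval, F)) : f ∈ V := by
  refine mem_of_forall_pow_smul_mem hV (fun j b => ?_) f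
  induction j with
  | zero =>
    convert hconst b using 1
    ext t
    simp
  | succ j ih =>
    convert V.smul_mem ((j + 1) / τ) (hint _ ih) using 1
    rw [timeIntegral_pow_smul, smul_smul, div_mul_div_cancel₀ hτ, div_self (by positivity),
      one_smul]

lemma hasDerivAt_integral_unitExtend (q : C(unitInterval, F)) (t : unitInterval) :
    HasDerivAt (fun s : ℝ => ∫ x in (0 : ℝ)..s, unitExtend q x) (q t) t := by
  rw [← unitExtend_coe]
  exact ((map_continuous (unitExtend q)).integral_hasStrictDerivAt 0 t).hasDerivAt

lemma apply_timeIntegral {E : Type*} [NormedAddCommGroup E] [NormedSpace ℝ E] [CompleteSpace E]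
    (L : E →L[ℝ] F) (τ : ℝ) {q : C(unitInterval, E)} {p : C(unitInterval, F)}
    (h : ∀ t, L (q t) = p t) (t : unitInterval) :
    L (timeIntegral τ q t) = timeIntegral τ p t := by
  rw [timeIntegral_apply, timeIntegral_apply, map_smul, ← L.intervalIntegral_comp_comm
    ((map_continuous (unitExtend q)).intervalIntegrable _ _)]
  congr 2
  ext s
  exact h _

end UnitInterval

/-! ### The radial Newtonian potential -/

/-- Real continuous functions on `[0,1]`. They serve as radial profiles, with the radius divided by
`R`, and also as real functions of rescaled time. -/
abbrev Profile := C(unitInterval, ℝ)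

/-- The monomial `r ↦ r ^ i`. -/
noncomputable def powProfile (i : ℕ) : Profile := ⟨fun r => (r : ℝ) ^ i, by fun_prop⟩

lemma powProfile_apply (i : ℕ) (r : unitInterval) : powProfile i r = (r : ℝ) ^ i := rfl

/-- The radial solution of `Δ U = q` on the ball of radius `R` of `ℝ^(m+1)` vanishing at the
origin. -/
noncomputable def radialPotential (m : ℕ) (R : ℝ) : Profile →L[ℝ] Profile :=
  R ^ 2 • (ContinuousLinearMap.mul ℝ Profile (powProfile 2)).comp
    ((weightedMean 1).comp (weightedMean m))

lemma radialPotential_apply (m : ℕ) (R : ℝ) (q : Profile) (r : unitInterval) :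
    radialPotential m R q r = R ^ 2 * ∫ s in (0 : ℝ)..r, s * unitExtend (weightedMean m q) s := by
  have h := pow_smul_weightedMean 1 (weightedMean m q) r
  simp only [pow_one, smul_eq_mul, one_add_one_eq_two] at h
  rw [← h]
  rfl

lemma radialPotential_zero (m : ℕ) (R : ℝ) (q : Profile) : radialPotential m R q 0 = 0 := by
  simp [radialPotential_apply]

lemma radialPotential_sub (m : ℕ) (R : ℝ) (q : Profile) (x y : unitInterval) :
    radialPotential m R q y - radialPotential m R q x =
      R ^ 2 * ∫ s in (x : ℝ)..y, s * unitExtend (weightedMean m q) s := by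
  have hint (a b : ℝ) :
      IntervalIntegrable (fun s => s * unitExtend (weightedMean m q) s) volume a b :=
    Continuous.intervalIntegrable (by fun_prop) _ _
  rw [radialPotential_apply, radialPotential_apply, ← mul_sub,
    intervalIntegral.integral_interval_sub_left (hint _ _) (hint _ _)]

lemma radialPotential_lt_of_forall_pos {m : ℕ} {R : ℝ} (hR : 0 < R) {q : Profile}
    {x y : unitInterval} (hxy : x < y)
    (hpos : ∀ s ∈ Ioo (x : ℝ) y, 0 < unitExtend (weightedMean m q) s) :
    radialPotential m R q x < radialPotential m R q y := by
  rw [← sub_pos, radialPotential_sub]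
  refine mul_pos (by positivity) (intervalIntegral.intervalIntegral_pos_of_pos_on
    (Continuous.intervalIntegrable (by fun_prop) _ _) (fun s hs => ?_) hxy)
  exact mul_pos (x.2.1.trans_lt hs.1) (hpos s hs)

lemma weightedMean_nonpos_of_radialPotential_le {m : ℕ} {R : ℝ} (hR : 0 < R) {q : Profile}
    {x : unitInterval} (hx : x < 1)
    (hmax : ∀ r, radialPotential m R q r ≤ radialPotential m R q x) : weightedMean m q x ≤ 0 := by
  by_contra! hpos
  rw [← unitExtend_coe] at hpos
  have hnear : ∀ᶠ s in 𝓝[≥] (x : ℝ), 0 < unitExtend (weightedMean m q) s :=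
    nhdsWithin_le_nhds
      ((map_continuous (unitExtend (weightedMean m q))).continuousAt.eventually_const_lt hpos)
  obtain ⟨y, hy, hsub⟩ :=
    (mem_nhdsGE_iff_exists_mem_Ioc_Ico_subset (Subtype.coe_lt_coe.2 hx)).1 hnear
  have hy' : y ∈ unitInterval := ⟨x.2.1.trans hy.1.le, hy.2⟩
  exact (hmax ⟨y, hy'⟩).not_gt
    (radialPotential_lt_of_forall_pos (y := ⟨y, hy'⟩) hR hy.1 fun s hs => hsub ⟨hs.1.le, hs.2⟩)

lemma weightedMean_zero_apply (m : ℕ) (q : Profile) :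
    weightedMean m q 0 = q 0 / (m + 1) := by
  simp [weightedMean_apply, unitExtend_of_mem, div_eq_inv_mul]

lemma weightedMean_neg_of_forall_pos {m : ℕ} {q : Profile} {r x : unitInterval} (hr : 0 < r)
    (hrx : r < x) (hpos : ∀ s ∈ Ioo (r : ℝ) x, 0 < unitExtend q s) (hx : weightedMean m q x ≤ 0) :
    weightedMean m q r < 0 := by
  have hr' : (0 : ℝ) < r := hr
  have hint (a b : ℝ) : IntervalIntegrable (fun s => s ^ m • unitExtend q s) volume a b :=
    Continuous.intervalIntegrable (by fun_prop) _ _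
  have hdiff : 0 < ∫ s in (r : ℝ)..x, s ^ m • unitExtend q s :=
    intervalIntegral.intervalIntegral_pos_of_pos_on (hint _ _)
      (fun s hs => smul_pos (pow_pos (hr'.trans hs.1) m) (hpos s hs)) hrx
  rw [← intervalIntegral.integral_interval_sub_left (hint 0 x) (hint 0 r),
    ← pow_smul_weightedMean, ← pow_smul_weightedMean, sub_pos] at hdiff
  exact neg_of_smul_neg_left
    (hdiff.trans_le (smul_nonpos_of_nonneg_of_nonpos (pow_nonneg x.2.1 _) hx)) (by positivity)

lemma nonpos_of_radialPotential_le {m : ℕ} {R : ℝ} (hR : 0 < R) {q : Profile} {x : unitInterval}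
    (hmax : ∀ r, radialPotential m R q r ≤ radialPotential m R q x)
    (hflux : weightedMean m q 1 ≤ 0) : q x ≤ 0 := by
  have hmean : weightedMean m q x ≤ 0 := by
    rcases (unitInterval.le_one' (t := x)).eq_or_lt with rfl | hx
    · exact hflux
    · exact weightedMean_nonpos_of_radialPotential_le hR hx hmax
  rcases (unitInterval.nonneg' (t := x)).eq_or_lt with rfl | hx0
  · rw [weightedMean_zero_apply] at hmean
    exact nonpos_of_mul_nonpos_left hmean (by positivity)
  by_contra! hq
  rw [← unitExtend_coe] at hq
  have hnear : ∀ᶠ s in 𝓝[≤] (x : ℝ), 0 < unitExtend q s :=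
    nhdsWithin_le_nhds ((map_continuous (unitExtend q)).continuousAt.eventually_const_lt hq)
  obtain ⟨y, hy, hsub⟩ :=
    (mem_nhdsLE_iff_exists_mem_Ico_Ioc_subset (Subtype.coe_lt_coe.2 hx0)).1 hnear
  have hy' : y ∈ unitInterval := ⟨hy.1, hy.2.le.trans x.2.2⟩
  have hneg : ∀ s ∈ Ioo y x, unitExtend (weightedMean m q) s < 0 := by
    intro s hs
    have hs' : s ∈ unitInterval := ⟨hy.1.trans hs.1.le, hs.2.le.trans x.2.2⟩
    rw [unitExtend_of_mem _ hs']
    exact weightedMean_neg_of_forall_pos (hy.1.trans_lt hs.1) hs.2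
      (fun z hz => hsub ⟨hs.1.trans hz.1, hz.2.le⟩) hmean
  have hlt := radialPotential_lt_of_forall_pos (m := m) (q := -q) (x := ⟨y, hy'⟩) hR hy.2
    fun s hs => by
      rw [map_neg]
      exact neg_pos.2 (hneg s hs)
  simp only [map_neg, ContinuousMap.neg_apply, neg_lt_neg_iff] at hlt
  exact (hmax ⟨y, hy'⟩).not_gt hlt

/-! ### The Neumann Laplacian and its resolvent -/

/-- `U` is in the domain of the radial Neumann Laplacian and `Δ U = q`, in integrated form: `U` is
`U(0)` plus the potential of `q`, and the boundary flux of this potential vanishes. -/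
def HasNeumannLaplacian (m : ℕ) (R : ℝ) (U q : Profile) : Prop :=
  U = U 0 • (1 : Profile) + radialPotential m R q ∧ weightedMean m q 1 = 0

lemma exists_forall_le_and_nonpos {m : ℕ} {R : ℝ} (hR : 0 < R) {U q : Profile} {c : ℝ}
    (hU : U = c • (1 : Profile) + radialPotential m R q) (hflux : weightedMean m q 1 ≤ 0) :
    ∃ x, (∀ r, U r ≤ U x) ∧ q x ≤ 0 := by
  obtain ⟨x, -, hx⟩ := isCompact_univ.exists_isMaxOn univ_nonempty U.continuous.continuousOn
  have hmax : ∀ r, U r ≤ U x := fun r => hx (mem_univ r)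
  refine ⟨x, hmax, nonpos_of_radialPotential_le hR (fun r => ?_) hflux⟩
  have hr := hmax r
  rw [hU] at hr
  exact le_of_add_le_add_left hr

namespace HasNeumannLaplacian

variable {m : ℕ} {R : ℝ} {U q U' q' : Profile}

lemma add (h : HasNeumannLaplacian m R U q) (h' : HasNeumannLaplacian m R U' q') :
    HasNeumannLaplacian m R (U + U') (q + q') := by
  refine ⟨?_, by rw [map_add, ContinuousMap.add_apply, h.2, h'.2, add_zero]⟩
  rw [map_add]
  nth_rw 1 [h.1, h'.1]
  simp only [ContinuousMap.add_apply]
  module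

lemma smul (h : HasNeumannLaplacian m R U q) (c : ℝ) :
    HasNeumannLaplacian m R (c • U) (c • q) := by
  refine ⟨?_, by rw [map_smul, ContinuousMap.smul_apply, h.2, smul_zero]⟩
  rw [map_smul]
  nth_rw 1 [h.1]
  simp only [ContinuousMap.smul_apply, smul_eq_mul]
  module

lemma neg (h : HasNeumannLaplacian m R U q) : HasNeumannLaplacian m R (-U) (-q) := by
  simpa using h.smul (-1)

lemma sub (h : HasNeumannLaplacian m R U q) (h' : HasNeumannLaplacian m R U' q') :
    HasNeumannLaplacian m R (U - U') (q - q') := by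
  simpa only [sub_eq_add_neg] using h.add h'.neg

lemma apply_le_norm_sub_smul (hR : 0 < R) (h : HasNeumannLaplacian m R U q) {κ : ℝ} (hκ : 0 ≤ κ)
    (r : unitInterval) : U r ≤ ‖U - κ • q‖ := by
  obtain ⟨x, hx, hqx⟩ := exists_forall_le_and_nonpos hR h.1 h.2.le
  calc U r ≤ U x := hx r
    _ ≤ (U - κ • q) x := le_sub_self_iff _ |>.2 (mul_nonpos_of_nonneg_of_nonpos hκ hqx)
    _ ≤ ‖U - κ • q‖ := (le_abs_self _).trans ((U - κ • q).norm_coe_le_norm x)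

lemma norm_le_norm_sub_smul (hR : 0 < R) (h : HasNeumannLaplacian m R U q) {κ : ℝ} (hκ : 0 ≤ κ) :
    ‖U‖ ≤ ‖U - κ • q‖ := by
  refine (ContinuousMap.norm_le _ (norm_nonneg _)).2 fun r => abs_le'.2
    ⟨h.apply_le_norm_sub_smul hR hκ r, ?_⟩
  have hneg := h.neg.apply_le_norm_sub_smul hR hκ r
  rwa [smul_neg, ← neg_sub', norm_neg] at hneg

end HasNeumannLaplacian

lemma abs_weightedMean_le {i j : ℕ} {q : Profile} {C : ℝ}
    (hq : ∀ r : unitInterval, |q r| ≤ C * (r : ℝ) ^ j) (r : unitInterval) :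
    |weightedMean i q r| ≤ C / (i + j + 1) * (r : ℝ) ^ j := by
  have hbound : ∀ s ∈ Ioc (0 : ℝ) 1,
      ‖s ^ i • unitExtend q (s * r)‖ ≤ C * (r : ℝ) ^ j * s ^ (i + j) := by
    intro s hs
    have hsr : s * r ∈ Icc (0 : ℝ) 1 :=
      ⟨mul_nonneg hs.1.le r.2.1, mul_le_one₀ hs.2 r.2.1 r.2.2⟩
    rw [norm_smul, norm_pow, Real.norm_eq_abs, abs_of_pos hs.1, unitExtend_of_mem _ hsr]
    calc s ^ i * ‖q ⟨s * r, hsr⟩‖ ≤ s ^ i * (C * (s * r) ^ j) :=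
          mul_le_mul_of_nonneg_left (hq _) (pow_nonneg hs.1.le i)
      _ = C * (r : ℝ) ^ j * s ^ (i + j) := by ring
  calc |weightedMean i q r| ≤ ∫ s in (0 : ℝ)..1, C * (r : ℝ) ^ j * s ^ (i + j) :=
        intervalIntegral.norm_integral_le_of_norm_le zero_le_one
          (Eventually.of_forall hbound) (Continuous.intervalIntegrable (by fun_prop) _ _)
    _ = C / (i + j + 1) * (r : ℝ) ^ j := by
        rw [intervalIntegral.integral_const_mul, integral_pow]
        simp
        ring

lemma abs_radialPotential_le {m : ℕ} {R : ℝ} {q : Profile} {C : ℝ} {j : ℕ}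
    (hq : ∀ r : unitInterval, |q r| ≤ C * (r : ℝ) ^ (2 * j)) (r : unitInterval) :
    |radialPotential m R q r| ≤ R ^ 2 * C / (j + 1) * (r : ℝ) ^ (2 * (j + 1)) := by
  have hC : 0 ≤ C := by simpa using (abs_nonneg _).trans (hq 1)
  have hmean : ∀ r : unitInterval, |weightedMean m q r| ≤ C * (r : ℝ) ^ (2 * j) := fun r =>
    (abs_weightedMean_le hq r).trans (mul_le_mul_of_nonneg_right
      (div_le_self hC (le_add_of_nonneg_left (by positivity))) (pow_nonneg r.2.1 _))
  calc |radialPotential m R q r|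
      = R ^ 2 * ((r : ℝ) ^ 2 * |weightedMean 1 (weightedMean m q) r|) := by
        rw [← abs_sq R, ← abs_sq (r : ℝ), ← abs_mul, ← abs_mul]
        rfl
    _ ≤ R ^ 2 * ((r : ℝ) ^ 2 * (C / ((1 : ℕ) + (2 * j : ℕ) + 1) * (r : ℝ) ^ (2 * j))) := by
        gcongr
        exact abs_weightedMean_le hmean r
    _ = R ^ 2 * C / (2 * (j + 1)) * (r : ℝ) ^ (2 * (j + 1)) := by
        push_cast
        ring
    _ ≤ R ^ 2 * C / (j + 1) * (r : ℝ) ^ (2 * (j + 1)) := by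
        have hr : (0 : ℝ) ≤ r := r.2.1
        gcongr
        linarith [(j.cast_nonneg : (0 : ℝ) ≤ j)]

lemma abs_iterate_radialPotential_le (m : ℕ) (R κ : ℝ) (q : Profile) (j : ℕ) (r : unitInterval) :
    |((κ • radialPotential m R) ^ j) q r| ≤
      (|κ| * R ^ 2) ^ j * ‖q‖ / j.factorial * (r : ℝ) ^ (2 * j) := by
  induction j generalizing r with
  | zero => simpa using q.norm_coe_le_norm r
  | succ j ih =>
    calc |((κ • radialPotential m R) ^ (j + 1)) q r|
        = |κ| * |radialPotential m R (((κ • radialPotential m R) ^ j) q) r| := by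
          rw [pow_succ', ← abs_mul]
          rfl
      _ ≤ |κ| * (R ^ 2 * ((|κ| * R ^ 2) ^ j * ‖q‖ / j.factorial) / (j + 1) *
            (r : ℝ) ^ (2 * (j + 1))) :=
          mul_le_mul_of_nonneg_left (abs_radialPotential_le ih r) (abs_nonneg κ)
      _ = (|κ| * R ^ 2) ^ (j + 1) * ‖q‖ / (j + 1).factorial * (r : ℝ) ^ (2 * (j + 1)) := by
          rw [Nat.factorial_succ]
          push_cast
          field_simp
          ring

lemma isUnit_one_sub_of_norm_pow_lt_one {A : Type*} [NormedRing A] [HasSummableGeomSeries A]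
    {a : A} {j : ℕ} (ha : ‖a ^ j‖ < 1) : IsUnit (1 - a) := by
  have hunit : IsUnit (1 - a ^ j) := isUnit_one_sub_of_norm_lt_one ha
  rw [← mul_neg_geom_sum] at hunit
  have hcomm : Commute (1 - a) (∑ i ∈ Finset.range j, a ^ i) := by
    rw [Commute, SemiconjBy, mul_neg_geom_sum, geom_sum_mul_neg]
  exact (hcomm.isUnit_mul_iff.1 hunit).1

lemma isUnit_one_sub_smul_radialPotential (m : ℕ) (R κ : ℝ) :
    IsUnit (1 - κ • radialPotential m R) := by
  have hlim : Tendsto (fun j : ℕ => (|κ| * R ^ 2) ^ j / j.factorial) atTop (𝓝 0) :=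
    FloorSemiring.tendsto_pow_div_factorial_atTop _
  obtain ⟨j, hj⟩ := (hlim.eventually_lt_const zero_lt_one).exists
  refine isUnit_one_sub_of_norm_pow_lt_one (A := Profile →L[ℝ] Profile) (j := j)
    (lt_of_le_of_lt ?_ hj)
  refine ContinuousLinearMap.opNorm_le_bound _ (by positivity) fun q => ?_
  refine (ContinuousMap.norm_le _ (by positivity)).2 fun r => ?_
  calc |((κ • radialPotential m R) ^ j) q r|
      ≤ (|κ| * R ^ 2) ^ j * ‖q‖ / j.factorial * (r : ℝ) ^ (2 * j) :=
        abs_iterate_radialPotential_le m R κ q j r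
    _ ≤ (|κ| * R ^ 2) ^ j * ‖q‖ / j.factorial * 1 := by
        gcongr
        exact pow_le_one₀ r.2.1 r.2.2
    _ = (|κ| * R ^ 2) ^ j / j.factorial * ‖q‖ := by ring

lemma exists_eq_add_smul_radialPotential (m : ℕ) (R κ : ℝ) :
    ∃ B : Profile →L[ℝ] Profile, ∀ f, B f = f + κ • radialPotential m R (B f) := by
  obtain ⟨w, hw⟩ := isUnit_one_sub_smul_radialPotential m R κ
  refine ⟨↑w⁻¹, fun f => ?_⟩
  have h := DFunLike.congr_fun w.mul_inv f
  rw [hw] at h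
  exact sub_eq_iff_eq_add.1 h

/-- `J` is the resolvent `(1 - κ⁻¹Δ)⁻¹` of the radial Neumann Laplacian, characterised by
`Δ (J f) = κ (J f - f)`. -/
def IsNeumannResolvent (m : ℕ) (R κ : ℝ) (J : Profile →L[ℝ] Profile) : Prop :=
  ∀ f, HasNeumannLaplacian m R (J f) (κ • (J f - f))

lemma apply_zero_of_eq_add_smul_radialPotential {m : ℕ} {R κ : ℝ} {U f : Profile}
    (h : U = f + κ • radialPotential m R U) : U 0 = f 0 := by
  rw [h]
  simp [radialPotential_zero]

lemma weightedMean_one_ne_zero_of_eq {m : ℕ} {R κ : ℝ} (hR : 0 < R) (hκ : 0 < κ) {U : Profile}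
    (hU : U = 1 + κ • radialPotential m R U) : weightedMean m U 1 ≠ 0 := by
  intro hmean
  have hU0 : U 0 = 1 := apply_zero_of_eq_add_smul_radialPotential hU
  have hlap : HasNeumannLaplacian m R U (κ • U) := by
    refine ⟨?_, by rw [map_smul, ContinuousMap.smul_apply, hmean, smul_zero]⟩
    rw [hU0, one_smul, map_smul]
    exact hU
  have hnorm := hlap.norm_le_norm_sub_smul hR (inv_nonneg.2 hκ.le)
  rw [inv_smul_smul₀ hκ.ne', sub_self, norm_zero] at hnorm
  rw [norm_le_zero_iff.1 hnorm] at hU0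
  exact zero_ne_one hU0

/-- With `B = (1 - κK)⁻¹`, the function `B (κ K f)` solves the resolvent equation up to sign and up
to the boundary condition, which is restored by adding a multiple of the homogeneous solution
`B 1`. -/
lemma exists_isNeumannResolvent (m : ℕ) {R : ℝ} (hR : 0 < R) {κ : ℝ} (hκ : 0 < κ) :
    ∃ J, IsNeumannResolvent m R κ J := by
  obtain ⟨B, hB⟩ := exists_eq_add_smul_radialPotential m R κ
  set K := radialPotential m R with hK
  set φ : Profile →L[ℝ] ℝ := (ContinuousMap.evalCLM ℝ (1 : unitInterval)).comp (weightedMean m)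
  have hφB : φ (B 1) ≠ 0 := weightedMean_one_ne_zero_of_eq hR hκ (hB 1)
  have hB0 (f : Profile) : B f 0 = f 0 := apply_zero_of_eq_add_smul_radialPotential (hB f)
  set c : Profile →L[ℝ] ℝ := (φ (B 1))⁻¹ • (φ + φ.comp (B.comp (κ • K)))
  have hc (f : Profile) : c f * φ (B 1) = φ f + φ (B (κ • K f)) := by
    change (φ (B 1))⁻¹ * (φ f + φ (B (κ • K f))) * φ (B 1) = _
    field_simp
  refine ⟨c.smulRight (B 1) - B.comp (κ • K), fun f => ?_⟩
  obtain ⟨J, hJ⟩ : ∃ J : Profile, J = c f • B 1 - B (κ • K f) := ⟨_, rfl⟩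
  change HasNeumannLaplacian m R (c f • B 1 - B (κ • K f)) (κ • (c f • B 1 - B (κ • K f) - f))
  rw [← hJ]
  constructor
  · have hJ0 : J 0 = c f := by simp [hJ, hB0, hK, radialPotential_zero]
    have hKJ : K J = c f • K (B 1) - K (B (κ • K f)) := by rw [hJ, map_sub, map_smul]
    rw [hJ0, ← hK, map_smul, map_sub, hKJ]
    nth_rw 1 [hJ, hB 1, hB (κ • K f)]
    module
  · change φ (κ • (J - f)) = 0
    rw [map_smul, map_sub, hJ, map_sub, map_smul, smul_eq_mul, smul_eq_mul, hc]
    ring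

namespace IsNeumannResolvent

variable {m : ℕ} {R κ : ℝ} {J : Profile →L[ℝ] Profile} {U q : Profile}

lemma norm_apply_le (hJ : IsNeumannResolvent m R κ J) (hR : 0 < R) (hκ : 0 < κ) (f : Profile) :
    ‖J f‖ ≤ ‖f‖ := by
  have h := (hJ f).norm_le_norm_sub_smul hR (inv_nonneg.2 hκ.le)
  rwa [inv_smul_smul₀ hκ.ne', sub_sub_cancel] at h

lemma apply_sub_inv_smul (hJ : IsNeumannResolvent m R κ J) (hR : 0 < R) (hκ : 0 < κ)
    (h : HasNeumannLaplacian m R U q) : J (U - κ⁻¹ • q) = U := by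
  have hnorm := ((hJ (U - κ⁻¹ • q)).sub h).norm_le_norm_sub_smul hR (inv_nonneg.2 hκ.le)
  have hzero : J (U - κ⁻¹ • q) - U -
      κ⁻¹ • (κ • (J (U - κ⁻¹ • q) - (U - κ⁻¹ • q)) - q) = 0 := by
    rw [smul_sub κ⁻¹, inv_smul_smul₀ hκ.ne']
    abel
  rw [hzero, norm_zero] at hnorm
  exact sub_eq_zero.1 (norm_le_zero_iff.1 hnorm)

lemma smul_apply_sub (hJ : IsNeumannResolvent m R κ J) (hR : 0 < R) (hκ : 0 < κ)
    (h : HasNeumannLaplacian m R U q) : κ • (J U - U) = J q := by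
  have hU := hJ.apply_sub_inv_smul hR hκ h
  rw [map_sub, map_smul, sub_eq_iff_eq_add] at hU
  rw [hU, add_sub_cancel_left, smul_inv_smul₀ hκ.ne']

end IsNeumannResolvent

lemma weightedMean_powProfile (m i : ℕ) :
    weightedMean m (powProfile i) = ((m : ℝ) + 1 + i)⁻¹ • powProfile i := by
  ext r
  have hcongr : ∫ s in (0 : ℝ)..1, s ^ m • unitExtend (powProfile i) (s * r) =
      ∫ s in (0 : ℝ)..1, (r : ℝ) ^ i * s ^ (m + i) := by
    refine intervalIntegral.integral_congr fun s hs => ?_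
    rw [uIcc_of_le zero_le_one] at hs
    simp only [smul_eq_mul]
    rw [unitExtend_of_mem _ ⟨mul_nonneg hs.1 r.2.1, mul_le_one₀ hs.2 r.2.1 r.2.2⟩,
      powProfile_apply]
    ring
  rw [weightedMean_apply, hcongr, intervalIntegral.integral_const_mul, integral_pow]
  simp only [one_pow, ContinuousMap.smul_apply, powProfile_apply, smul_eq_mul]
  rw [zero_pow (by omega)]
  push_cast
  field_simp
  ring

lemma radialPotential_powProfile (m i : ℕ) (R : ℝ) :
    radialPotential m R (powProfile i) =
      (R ^ 2 / ((m + 1 + i) * (i + 2))) • powProfile (i + 2) := by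
  change R ^ 2 • (powProfile 2 * weightedMean 1 (weightedMean m (powProfile i))) = _
  rw [weightedMean_powProfile, map_smul, weightedMean_powProfile]
  ext r
  simp only [ContinuousMap.smul_apply, ContinuousMap.mul_apply, smul_eq_mul, powProfile_apply]
  push_cast
  field_simp
  ring

/-- The Laplacian of `fluxProfile R i`: a radial density of total flux one through the sphere of
radius `R`. -/
noncomputable def fluxDensity (m : ℕ) (R : ℝ) (i : ℕ) : Profile := ((m + 1 + i) / R) • powProfile i

/-- A radial profile with normal derivative `1` on the sphere of radius `R` although its sup norm
`R / (i + 2)` is small; subtracting a multiple of it corrects the flux of a profile. -/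
noncomputable def fluxProfile (R : ℝ) (i : ℕ) : Profile := (R / (i + 2)) • powProfile (i + 2)

section Flux

variable {R : ℝ} (hR : 0 < R) (m i : ℕ)
include hR

lemma radialPotential_fluxDensity :
    radialPotential m R (fluxDensity m R i) = fluxProfile R i := by
  rw [fluxDensity, map_smul, radialPotential_powProfile, fluxProfile, smul_smul]
  congr 1
  field_simp

lemma mul_weightedMean_fluxDensity_one : R * weightedMean m (fluxDensity m R i) 1 = 1 := by
  rw [fluxDensity, map_smul, weightedMean_powProfile]
  simp only [ContinuousMap.smul_apply, powProfile_apply, Icc.coe_one, one_pow, smul_eq_mul]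
  field_simp

omit hR in
lemma fluxProfile_zero (R : ℝ) : fluxProfile R i 0 = 0 := by simp [fluxProfile, powProfile_apply]

lemma fluxProfile_nonneg (r : unitInterval) : 0 ≤ fluxProfile R i r :=
  mul_nonneg (by positivity) (pow_nonneg r.2.1 _)

lemma fluxProfile_le (r : unitInterval) : fluxProfile R i r ≤ R / (i + 2) :=
  mul_le_of_le_one_right (by positivity) (pow_le_one₀ r.2.1 r.2.2)

lemma fluxDensity_le (r : unitInterval) : fluxDensity m R i r ≤ (m + 1 + i) / R :=
  mul_le_of_le_one_right (by positivity) (pow_le_one₀ r.2.1 r.2.2)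

lemma tendsto_fluxProfile : Tendsto (fluxProfile R) atTop (𝓝 0) := by
  have hlim : Tendsto (fun i : ℕ => R / ((i : ℝ) + 2)) atTop (𝓝 0) :=
    tendsto_const_nhds.div_atTop
      (tendsto_atTop_add_const_right _ _ tendsto_natCast_atTop_atTop)
  refine squeeze_zero_norm (fun i => ?_) hlim
  refine (ContinuousMap.norm_le _ (by positivity)).2 fun r => ?_
  rw [Real.norm_eq_abs, abs_of_nonneg (fluxProfile_nonneg hR i r)]
  exact fluxProfile_le hR i r

end Flux

/-- The domain of the radial Neumann Laplacian. -/
def neumannDomain (m : ℕ) (R : ℝ) : Submodule ℝ Profile where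
  carrier := {U | ∃ q, HasNeumannLaplacian m R U q}
  add_mem' := fun ⟨_, h⟩ ⟨_, h'⟩ => ⟨_, h.add h'⟩
  zero_mem' := ⟨0, by constructor <;> simp⟩
  smul_mem' := fun c _ ⟨_, h⟩ => ⟨_, h.smul c⟩

lemma powProfile_sub_smul_fluxProfile_mem_neumannDomain {m : ℕ} {R : ℝ} (hR : 0 < R) (j : ℕ) :
    ∃ d : ℝ, ∀ i, powProfile (j + 2) - d • fluxProfile R i ∈ neumannDomain m R := by
  set c : ℝ := (R ^ 2 / ((m + 1 + j) * (j + 2)))⁻¹ with hc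
  refine ⟨R * weightedMean m (c • powProfile j) 1, fun i => ?_⟩
  set d : ℝ := R * weightedMean m (c • powProfile j) 1 with hd
  refine ⟨c • powProfile j - d • fluxDensity m R i, ?_, ?_⟩
  · rw [map_sub, map_smul, map_smul, radialPotential_fluxDensity hR, radialPotential_powProfile,
      smul_smul, hc, inv_mul_cancel₀ (by positivity), one_smul]
    simp [fluxProfile_zero, powProfile_apply]
  · rw [map_sub, map_smul (weightedMean m) d, ContinuousMap.sub_apply, ContinuousMap.smul_apply,
      hd, smul_eq_mul, mul_comm R, mul_assoc, mul_weightedMean_fluxDensity_one hR, mul_one,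
      sub_self]

lemma powProfile_mem_closure_neumannDomain {m : ℕ} {R : ℝ} (hR : 0 < R) (j : ℕ) :
    powProfile (2 * j) ∈ (neumannDomain m R).topologicalClosure := by
  rcases j with _ | j
  · refine Submodule.le_topologicalClosure _ ⟨0, ?_, by simp⟩
    ext r
    simp [powProfile_apply]
  · obtain ⟨d, hd⟩ := powProfile_sub_smul_fluxProfile_mem_neumannDomain (m := m) hR (2 * j)
    have hlim : Tendsto (fun i => powProfile (2 * (j + 1)) - d • fluxProfile R i) atTop
        (𝓝 (powProfile (2 * (j + 1)))) := by
      simpa using ((tendsto_fluxProfile hR).const_smul d).const_sub (powProfile (2 * (j + 1)))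
    exact (Submodule.isClosed_topologicalClosure _).mem_of_tendsto hlim
      (Eventually.of_forall fun i => Submodule.le_topologicalClosure _ (hd i))

lemma mem_of_forall_powProfile_two_mul_mem {V : Submodule ℝ Profile}
    (hV : IsClosed (V : Set Profile)) (h : ∀ j, powProfile (2 * j) ∈ V) (f : Profile) :
    f ∈ V := by
  let square : C(unitInterval, unitInterval) :=
    ⟨fun r => ⟨(r : ℝ) ^ 2, by positivity, pow_le_one₀ r.2.1 r.2.2⟩, by fun_prop⟩
  let L : Profile →L[ℝ] Profile := ContinuousMap.compCLM ℝ ℝ square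
  have hL : ∀ g, g ∈ V.comap (L : Profile →ₗ[ℝ] Profile) := by
    refine mem_of_forall_pow_smul_mem (hV.preimage L.continuous) fun j b => ?_
    have hpow : L (⟨fun t => (t : ℝ) ^ j • b, by fun_prop⟩ : Profile) =
        b • powProfile (2 * j) := by
      ext r
      change ((r : ℝ) ^ 2) ^ j * b = b * (r : ℝ) ^ (2 * j)
      rw [pow_mul, mul_comm]
    rw [Submodule.mem_comap, ContinuousLinearMap.coe_coe, hpow]
    exact V.smul_mem _ (h j)
  have hsqrt := hL ⟨fun s => f ⟨√s, Real.sqrt_nonneg _, Real.sqrt_le_one.2 s.2.2⟩, by fun_prop⟩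
  rw [Submodule.mem_comap, ContinuousLinearMap.coe_coe] at hsqrt
  convert hsqrt using 1
  ext r
  exact congrArg f (Subtype.ext (Real.sqrt_sq r.2.1).symm)

lemma neumannDomain_topologicalClosure {m : ℕ} {R : ℝ} (hR : 0 < R) :
    (neumannDomain m R).topologicalClosure = ⊤ :=
  Submodule.eq_top_iff'.2 (mem_of_forall_powProfile_two_mul_mem
    (Submodule.isClosed_topologicalClosure _) (powProfile_mem_closure_neumannDomain hR))

lemma tendsto_neumannResolvent_apply {m : ℕ} {R : ℝ} (hR : 0 < R) {κ : ℕ → ℝ}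
    (hκ : ∀ k, 0 < κ k) (hκ_top : Tendsto κ atTop atTop) {J : ℕ → Profile →L[ℝ] Profile}
    (hJ : ∀ k, IsNeumannResolvent m R (κ k) (J k)) {U q : Profile}
    (hU : HasNeumannLaplacian m R U q) : Tendsto (fun k => J k U) atTop (𝓝 U) := by
  rw [tendsto_iff_norm_sub_tendsto_zero]
  refine squeeze_zero (fun _ => norm_nonneg _) (fun k => ?_)
    ((tendsto_const_nhds (x := ‖q‖)).div_atTop hκ_top)
  have hbound := (hJ k).norm_apply_le hR (hκ k) q
  rw [← (hJ k).smul_apply_sub hR (hκ k) hU, norm_smul, Real.norm_eq_abs,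
    abs_of_pos (hκ k)] at hbound
  rwa [le_div_iff₀' (hκ k)]

/-- The domain of the square of the Neumann Laplacian is dense. -/
lemma mem_of_forall_hasNeumannLaplacian_mem {m : ℕ} {R : ℝ} (hR : 0 < R) {V : Submodule ℝ Profile}
    (hV : IsClosed (V : Set Profile))
    (h : ∀ U q q', HasNeumannLaplacian m R U q → HasNeumannLaplacian m R q q' → U ∈ V)
    (f : Profile) : f ∈ V := by
  have hdom : neumannDomain m R ≤ V := by
    rintro U ⟨q, hU⟩
    have hpos (k : ℕ) : (0 : ℝ) < k + 1 := by positivity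
    choose J hJ using fun k : ℕ => exists_isNeumannResolvent m hR (hpos k)
    refine hV.mem_of_tendsto (tendsto_neumannResolvent_apply hR hpos
      (tendsto_atTop_add_const_right _ _ tendsto_natCast_atTop_atTop) hJ hU)
      (Eventually.of_forall fun k => ?_)
    have hlap := hJ k U
    rw [(hJ k).smul_apply_sub hR (hpos k) hU] at hlap
    exact h _ _ _ hlap (hJ k q)
  refine Submodule.topologicalClosure_minimal _ hdom hV ?_
  rw [neumannDomain_topologicalClosure hR]
  trivial

/-! ### The semigroup of a bounded dissipative operator -/

section Semigroup

variable {E : Type*} [NormedAddCommGroup E] [NormedSpace ℝ E]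

/-- The semigroup generated by the bounded operator `κ (T - 1)`; for `T` the resolvent of the
Neumann Laplacian it is the Yosida approximation of the heat semigroup. -/
noncomputable def yosidaSemigroup (T : E →L[ℝ] E) (κ t : ℝ) : E →L[ℝ] E :=
  NormedSpace.exp (t • κ • (T - 1))

lemma yosidaSemigroup_zero (T : E →L[ℝ] E) (κ : ℝ) (f : E) : yosidaSemigroup T κ 0 f = f := by
  let _ : NormedAlgebra ℚ (E →L[ℝ] E) := NormedAlgebra.restrictScalars ℚ ℝ _
  simp [yosidaSemigroup]

lemma apply_yosidaSemigroup (T : E →L[ℝ] E) (κ t : ℝ) (f : E) :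
    T (yosidaSemigroup T κ t f) = yosidaSemigroup T κ t (T f) := by
  let _ : NormedAlgebra ℚ (E →L[ℝ] E) := NormedAlgebra.restrictScalars ℚ ℝ _
  have hcomm : Commute T (T - 1) := (Commute.refl T).sub_right (Commute.one_right T)
  exact DFunLike.congr_fun ((hcomm.smul_right κ).smul_right t).exp_right.eq f

variable [CompleteSpace E]

lemma norm_exp_smul_le {T : E →L[ℝ] E} (hT : ‖T‖ ≤ 1) {s : ℝ} (hs : 0 ≤ s) :
    ‖NormedSpace.exp (s • T)‖ ≤ Real.exp s := by
  have hsum := NormedSpace.exp_series_hasSum_exp' (𝕂 := ℝ) s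
  rw [← Real.exp_eq_exp_ℝ] at hsum
  refine (NormedSpace.exp_series_hasSum_exp' (𝕂 := ℝ) (s • T)).norm_le_of_bounded hsum
    fun k => ?_
  have hpow : ‖T ^ k‖ ≤ 1 := by
    rcases k.eq_zero_or_pos with rfl | hk
    · exact ContinuousLinearMap.norm_id_le
    · exact (norm_pow_le' T hk).trans (pow_le_one₀ (norm_nonneg T) hT)
  rw [norm_smul, smul_pow, norm_smul, Real.norm_eq_abs, abs_of_nonneg (by positivity),
    Real.norm_eq_abs, abs_of_nonneg (by positivity), smul_eq_mul]
  exact mul_le_mul_of_nonneg_left (mul_le_of_le_one_right (by positivity) hpow) (by positivity)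

lemma yosidaSemigroup_eq_exp_smul (T : E →L[ℝ] E) (κ t : ℝ) :
    yosidaSemigroup T κ t = Real.exp (-(t * κ)) • NormedSpace.exp ((t * κ) • T) := by
  let _ : NormedAlgebra ℚ (E →L[ℝ] E) := NormedAlgebra.restrictScalars ℚ ℝ _
  have hsplit : t • κ • (T - 1) = (t * κ) • T + (-(t * κ)) • (1 : E →L[ℝ] E) := by module
  rw [yosidaSemigroup, hsplit, NormedSpace.exp_add_of_commute
    (((Commute.one_right T).smul_left _).smul_right _), ← Algebra.algebraMap_eq_smul_one,
    ← NormedSpace.algebraMap_exp_comm, ← Real.exp_eq_exp_ℝ, Algebra.algebraMap_eq_smul_one,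
    mul_smul_one]

lemma norm_yosidaSemigroup_apply_le {T : E →L[ℝ] E} (hT : ∀ f, ‖T f‖ ≤ ‖f‖) {κ t : ℝ}
    (hκ : 0 ≤ κ) (ht : 0 ≤ t) (f : E) : ‖yosidaSemigroup T κ t f‖ ≤ ‖f‖ := by
  have hT' : ‖T‖ ≤ 1 := T.opNorm_le_bound zero_le_one (by simpa using hT)
  rw [yosidaSemigroup_eq_exp_smul, smul_apply, norm_smul, Real.norm_eq_abs, Real.abs_exp]
  calc Real.exp (-(t * κ)) * ‖NormedSpace.exp ((t * κ) • T) f‖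
      ≤ Real.exp (-(t * κ)) * (Real.exp (t * κ) * ‖f‖) := by
        gcongr
        exact ContinuousLinearMap.le_of_opNorm_le _ (norm_exp_smul_le hT' (by positivity)) f
    _ = ‖f‖ := by rw [← mul_assoc, ← Real.exp_add, neg_add_cancel, Real.exp_zero, one_mul]

lemma hasDerivAt_yosidaSemigroup_apply (T : E →L[ℝ] E) (κ t : ℝ) (f : E) :
    HasDerivAt (fun t => yosidaSemigroup T κ t f) (yosidaSemigroup T κ t (κ • (T f - f))) t := by
  simpa [yosidaSemigroup] using (hasDerivAt_exp_smul_const (𝕂 := ℝ) (κ • (T - 1)) t).clm_apply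
    (hasDerivAt_const t f)

end Semigroup

/-! ### The linear parabolic problem with flux data -/

lemma hasDerivAt_nonneg_of_forall_le {h : ℝ → ℝ} {h' a t : ℝ} (hat : a < t)
    (hd : HasDerivAt h h' t) (hmax : ∀ s ∈ Icc a t, h s ≤ h t) : 0 ≤ h' := by
  have hle := IsLocalMaxOn.hasFDerivWithinAt_nonpos (s := Icc a t)
    (IsMaxOn.localize fun s hs => hmax s hs) hd.hasFDerivAt.hasFDerivWithinAt
    (sub_mem_posTangentConeAt_of_segment_subset
      ((segment_symm ℝ t a).trans (segment_eq_Icc hat.le)).subset)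
  exact nonneg_of_mul_nonpos_right (by simpa using hle) (sub_neg.2 hat)

/-- Functions of rescaled time with values in the radial profiles. -/
abbrev Evolution := C(unitInterval, Profile)

/-- Data of the linear problem: initial profile, source, and boundary flux as a function of time. -/
abbrev HeatData := Profile × Evolution × Profile

/-- The operator `q ↦ R ∫₀¹ s^m q(s) ds`, the normal derivative of the potential of `q`. -/
noncomputable def boundaryFlux (m : ℕ) (R : ℝ) : Profile →L[ℝ] ℝ :=
  R • (ContinuousMap.evalCLM ℝ (1 : unitInterval)).comp (weightedMean m)

lemma boundaryFlux_apply (m : ℕ) (R : ℝ) (q : Profile) :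
    boundaryFlux m R q = R * weightedMean m q 1 := rfl

lemma boundaryFlux_fluxDensity {R : ℝ} (hR : 0 < R) (m i : ℕ) :
    boundaryFlux m R (fluxDensity m R i) = 1 := mul_weightedMean_fluxDensity_one hR m i

/-- Subtraction of the value at the centre, which normalises a profile to be the potential of its
Laplacian. -/
noncomputable def recenter : Profile →L[ℝ] Profile :=
  ContinuousLinearMap.id ℝ Profile -
    (ContinuousMap.evalCLM ℝ (0 : unitInterval)).smulRight (1 : Profile)

lemma recenter_apply (U : Profile) : recenter U = U - U 0 • (1 : Profile) := rfl

/-- The radial function with profile `U` satisfies `Δ U = q` in the ball and `∂U/∂η = b` on its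
boundary, in integrated form. -/
def HasRadialLaplacian (m : ℕ) (R b : ℝ) (U q : Profile) : Prop :=
  recenter U = radialPotential m R q ∧ boundaryFlux m R q = b

namespace HasRadialLaplacian

variable {m : ℕ} {R b b' : ℝ} {U U' q q' : Profile}

lemma add (h : HasRadialLaplacian m R b U q) (h' : HasRadialLaplacian m R b' U' q') :
    HasRadialLaplacian m R (b + b') (U + U') (q + q') :=
  ⟨by rw [map_add, map_add, h.1, h'.1], by rw [map_add, h.2, h'.2]⟩

lemma smul (h : HasRadialLaplacian m R b U q) (c : ℝ) :
    HasRadialLaplacian m R (c * b) (c • U) (c • q) :=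
  ⟨by rw [map_smul, map_smul, h.1], by rw [map_smul, h.2, smul_eq_mul]⟩

lemma sub (h : HasRadialLaplacian m R b U q) (h' : HasRadialLaplacian m R b' U' q') :
    HasRadialLaplacian m R (b - b') (U - U') (q - q') :=
  ⟨by rw [map_sub, map_sub, h.1, h'.1], by rw [map_sub, h.2, h'.2]⟩

lemma nonpos_of_forall_le (hR : 0 < R) (h : HasRadialLaplacian m R b U q) (hb : b ≤ 0)
    {x : unitInterval} (hmax : ∀ r, U r ≤ U x) : q x ≤ 0 := by
  refine nonpos_of_radialPotential_le (m := m) hR (fun r => ?_) ?_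
  · rw [← h.1, recenter_apply]
    exact sub_le_sub_right (hmax r) _
  · rw [← h.2, boundaryFlux_apply] at hb
    exact nonpos_of_mul_nonpos_right hb hR

end HasRadialLaplacian

lemma hasRadialLaplacian_fluxProfile {R : ℝ} (hR : 0 < R) (m i : ℕ) :
    HasRadialLaplacian m R 1 (fluxProfile R i) (fluxDensity m R i) :=
  ⟨by rw [recenter_apply, fluxProfile_zero, zero_smul, sub_zero, radialPotential_fluxDensity hR],
    boundaryFlux_fluxDensity hR m i⟩

lemma HasNeumannLaplacian.hasRadialLaplacian {m : ℕ} {R : ℝ} {U q : Profile}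
    (h : HasNeumannLaplacian m R U q) : HasRadialLaplacian m R 0 U q :=
  ⟨by rw [recenter_apply, sub_eq_iff_eq_add']; exact h.1,
    by rw [boundaryFlux_apply, h.2, mul_zero]⟩

/-- `w` is a classical solution on `[0,τ]`, with time derivative `w'`, of `w_t = Δw + f`, `∂w/∂η =
g`, `w(0) = w₀` for `d = (w₀, f, g)`, in a form in which no spatial derivative of `w` appears. -/
structure IsStrictHeatSolution (m : ℕ) (R τ : ℝ) (d : HeatData) (w w' : Evolution) : Prop where
  time_eq : ∀ t, w t = d.1 + timeIntegral τ w' t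
  space_eq : ∀ t, HasRadialLaplacian m R (d.2.2 t) (w t) (w' t - d.2.1 t)

lemma hasDerivAt_timeIntegral_apply (τ : ℝ) (w' : Evolution) (r t : unitInterval) :
    HasDerivAt (fun s => (τ • ∫ x in (0 : ℝ)..s, unitExtend w' x) r) (τ * w' t r) t :=
  (ContinuousMap.evalCLM ℝ r : Profile →L[ℝ] ℝ).hasFDerivAt.comp_hasDerivAt (t : ℝ)
    ((hasDerivAt_integral_unitExtend w' t).const_smul τ)

namespace IsStrictHeatSolution

variable {m : ℕ} {R τ : ℝ} {d d' : HeatData} {w w' v v' : Evolution}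

lemma add (h : IsStrictHeatSolution m R τ d w w') (h' : IsStrictHeatSolution m R τ d' v v') :
    IsStrictHeatSolution m R τ (d + d') (w + v) (w' + v') where
  time_eq t := by
    rw [map_add, ContinuousMap.add_apply, h.time_eq, h'.time_eq, ContinuousMap.add_apply,
      Prod.fst_add]
    abel
  space_eq t := by
    have hsum : (w' + v') t - (d + d').2.1 t = (w' t - d.2.1 t) + (v' t - d'.2.1 t) := by
      simp only [ContinuousMap.add_apply, Prod.snd_add, Prod.fst_add]
      abel
    rw [hsum]
    exact (h.space_eq t).add (h'.space_eq t)

lemma smul (h : IsStrictHeatSolution m R τ d w w') (c : ℝ) :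
    IsStrictHeatSolution m R τ (c • d) (c • w) (c • w') where
  time_eq t := by
    rw [map_smul, ContinuousMap.smul_apply, h.time_eq, ContinuousMap.smul_apply, Prod.smul_fst,
      smul_add]
  space_eq t := by
    have hmul : (c • w') t - (c • d).2.1 t = c • (w' t - d.2.1 t) := by
      rw [smul_sub]
      rfl
    rw [hmul]
    exact (h.space_eq t).smul c

lemma deriv_le_of_forall_le (hR : 0 < R) (h : IsStrictHeatSolution m R τ d w w') (i : ℕ)
    {t x : unitInterval}
    (hmax : ∀ r, w t r - ‖d.2.2‖ * fluxProfile R i r ≤ w t x - ‖d.2.2‖ * fluxProfile R i x) :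
    w' t x ≤ ‖d.2.1‖ + ‖d.2.2‖ * ((m + 1 + i) / R) := by
  have hflux : d.2.2 t - ‖d.2.2‖ * 1 ≤ 0 := by
    rw [mul_one, sub_nonpos]
    exact (le_abs_self _).trans (d.2.2.norm_coe_le_norm t)
  have hlap := ((h.space_eq t).sub
    ((hasRadialLaplacian_fluxProfile hR m i).smul ‖d.2.2‖)).nonpos_of_forall_le hR hflux hmax
  simp only [ContinuousMap.sub_apply, ContinuousMap.smul_apply, smul_eq_mul] at hlap
  have hsource : d.2.1 t x ≤ ‖d.2.1‖ := (le_abs_self _).trans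
    (((d.2.1 t).norm_coe_le_norm x).trans (d.2.1.norm_coe_le_norm t))
  have hdensity := mul_le_mul_of_nonneg_left (fluxDensity_le hR m i x) (norm_nonneg d.2.2)
  linarith

lemma eq_zero_of_forall_le (hR : 0 < R) (hτ : 0 < τ) (h : IsStrictHeatSolution m R τ d w w')
    (i : ℕ) {c : ℝ} (hc : τ * (‖d.2.1‖ + ‖d.2.2‖ * ((m + 1 + i) / R)) < c) {t x : unitInterval}
    (hmax : ∀ s r, w s r - ‖d.2.2‖ * fluxProfile R i r - c * s ≤
      w t x - ‖d.2.2‖ * fluxProfile R i x - c * t) : t = 0 := by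
  by_contra hne
  have hpos : (0 : ℝ) < t := unitInterval.pos_iff_ne_zero.2 hne
  have hspace := h.deriv_le_of_forall_le hR i fun r => by linarith [hmax t r]
  have htime := hasDerivAt_nonneg_of_forall_le hpos ((hasDerivAt_timeIntegral_apply τ w' x t).sub
    ((hasDerivAt_id (t : ℝ)).const_mul c)) fun s hs => by
      have hs' := hmax ⟨s, hs.1, hs.2.trans t.2.2⟩ x
      rw [h.time_eq, h.time_eq, timeIntegral_apply, timeIntegral_apply] at hs'
      simp only [ContinuousMap.add_apply] at hs'
      simp only [Pi.sub_apply, id]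
      linarith
  linarith [mul_le_mul_of_nonneg_left hspace hτ.le]

/-- Comparison with a supersolution that is the sum of a constant, a multiple of `fluxProfile` and
a linear function of time. -/
lemma apply_le_add (hR : 0 < R) (hτ : 0 < τ) (h : IsStrictHeatSolution m R τ d w w') (i : ℕ)
    {c : ℝ} (hc : τ * (‖d.2.1‖ + ‖d.2.2‖ * ((m + 1 + i) / R)) < c) (t r : unitInterval) :
    w t r ≤ ‖d.1‖ + ‖d.2.2‖ * fluxProfile R i r + c * t := by
  obtain ⟨⟨s, x⟩, -, hmax⟩ := (isCompact_univ (X := unitInterval × unitInterval)).exists_isMaxOn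
    univ_nonempty (f := fun p => w p.1 p.2 - ‖d.2.2‖ * fluxProfile R i p.2 - c * p.1)
    (Continuous.continuousOn (by fun_prop))
  replace hmax : ∀ t r : unitInterval, w t r - ‖d.2.2‖ * fluxProfile R i r - c * t ≤
      w s x - ‖d.2.2‖ * fluxProfile R i x - c * s := fun t r => hmax (mem_univ (t, r))
  obtain rfl := h.eq_zero_of_forall_le hR hτ i hc hmax
  have hinit : w 0 x ≤ ‖d.1‖ := by
    rw [h.time_eq, timeIntegral_apply]
    simpa using (le_abs_self _).trans (d.1.norm_coe_le_norm x)
  have hflux := mul_nonneg (norm_nonneg d.2.2) (fluxProfile_nonneg hR i x)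
  have hend := hmax t r
  rw [Icc.coe_zero, mul_zero] at hend
  linarith

lemma apply_le (hR : 0 < R) (hτ : 0 < τ) (h : IsStrictHeatSolution m R τ d w w') (i : ℕ)
    (t r : unitInterval) :
    w t r ≤ ‖d.1‖ + τ * ‖d.2.1‖ + (R / (i + 2) + τ * ((m + 1 + i) / R)) * ‖d.2.2‖ := by
  refine le_of_forall_pos_le_add fun δ hδ => ?_
  have hbound := h.apply_le_add hR hτ i (lt_add_of_pos_right _ hδ) t r
  have hflux := mul_le_mul_of_nonneg_left (fluxProfile_le hR i r) (norm_nonneg d.2.2)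
  have htime : (τ * (‖d.2.1‖ + ‖d.2.2‖ * ((m + 1 + i) / R)) + δ) * t ≤
      τ * (‖d.2.1‖ + ‖d.2.2‖ * ((m + 1 + i) / R)) + δ :=
    mul_le_of_le_one_right (by positivity) t.2.2
  linarith

/-- The free parameter `i` makes the coefficient of the flux small for small `τ`. -/
lemma norm_le (hR : 0 < R) (hτ : 0 < τ) (h : IsStrictHeatSolution m R τ d w w') (i : ℕ) :
    ‖w‖ ≤ ‖d.1‖ + τ * ‖d.2.1‖ + (R / (i + 2) + τ * ((m + 1 + i) / R)) * ‖d.2.2‖ := by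
  refine (ContinuousMap.norm_le _ (by positivity)).2 fun t =>
    (ContinuousMap.norm_le _ (by positivity)).2 fun r => abs_le'.2 ⟨h.apply_le hR hτ i t r, ?_⟩
  have hneg := (h.smul (-1)).apply_le hR hτ i t r
  rw [neg_one_smul, neg_one_smul] at hneg
  have hsource : ‖(-d).2.1‖ = ‖d.2.1‖ := norm_neg d.2.1
  have hflux : ‖(-d).2.2‖ = ‖d.2.2‖ := norm_neg d.2.2
  rwa [Prod.fst_neg, norm_neg, hsource, hflux] at hneg

end IsStrictHeatSolution

/-- The pairs of a datum and a classical solution for it. -/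
noncomputable def strictHeatSolutions (m : ℕ) (R τ : ℝ) : Submodule ℝ (HeatData × Evolution) where
  carrier := {x | ∃ w', IsStrictHeatSolution m R τ x.1 x.2 w'}
  add_mem' := fun ⟨_, h⟩ ⟨_, h'⟩ => ⟨_, h.add h'⟩
  zero_mem' := ⟨0, by constructor <;> simp [HasRadialLaplacian]⟩
  smul_mem' := fun c _ ⟨_, h⟩ => ⟨_, h.smul c⟩

/-- The pairs of a datum and a generalised solution, that is, a limit of classical solutions. -/
noncomputable def generalizedHeatSolutions (m : ℕ) (R τ : ℝ) :
    Submodule ℝ (HeatData × Evolution) :=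
  (strictHeatSolutions m R τ).topologicalClosure

lemma IsStrictHeatSolution.mem_generalizedHeatSolutions {m : ℕ} {R τ : ℝ} {d : HeatData}
    {w w' : Evolution} (h : IsStrictHeatSolution m R τ d w w') :
    (d, w) ∈ generalizedHeatSolutions m R τ :=
  Submodule.le_topologicalClosure _ ⟨w', h⟩

lemma norm_snd_le_of_mem_closure {A B C W : Type*} [NormedAddCommGroup A] [NormedAddCommGroup B]
    [NormedAddCommGroup C] [NormedAddCommGroup W] {s : Set ((A × B × C) × W)} {a b : ℝ}
    (h : ∀ x ∈ s, ‖x.2‖ ≤ ‖x.1.1‖ + a * ‖x.1.2.1‖ + b * ‖x.1.2.2‖)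
    {x : (A × B × C) × W} (hx : x ∈ closure s) :
    ‖x.2‖ ≤ ‖x.1.1‖ + a * ‖x.1.2.1‖ + b * ‖x.1.2.2‖ := by
  have hclosed : IsClosed {x : (A × B × C) × W |
      ‖x.2‖ ≤ ‖x.1.1‖ + a * ‖x.1.2.1‖ + b * ‖x.1.2.2‖} :=
    isClosed_le (by fun_prop) (by fun_prop)
  exact closure_minimal h hclosed hx

lemma norm_le_of_mem_generalizedHeatSolutions {m : ℕ} {R τ : ℝ} (hR : 0 < R) (hτ : 0 < τ)
    {d : HeatData} {w : Evolution} (h : (d, w) ∈ generalizedHeatSolutions m R τ) (i : ℕ) :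
    ‖w‖ ≤ ‖d.1‖ + τ * ‖d.2.1‖ + (R / (i + 2) + τ * ((m + 1 + i) / R)) * ‖d.2.2‖ := by
  exact norm_snd_le_of_mem_closure
    (s := (strictHeatSolutions m R τ : Set (HeatData × Evolution)))
    (by rintro x ⟨w', hx⟩; exact hx.norm_le hR hτ i) (x := (d, w)) h

/-- The data solved by the time integral of a solution with data `d`. -/
noncomputable def integratedData (τ : ℝ) (d : HeatData) : HeatData :=
  (0, ContinuousMap.const _ d.1 + timeIntegral τ d.2.1, timeIntegral τ d.2.2)

lemma IsStrictHeatSolution.timeIntegral {m : ℕ} {R τ : ℝ} {d : HeatData} {w w' : Evolution}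
    (h : IsStrictHeatSolution m R τ d w w') :
    IsStrictHeatSolution m R τ (integratedData τ d) (timeIntegral τ w) w := by
  refine ⟨fun t => by simp [integratedData], fun t => ?_⟩
  have hlap : w t - (integratedData τ d).2.1 t = _root_.timeIntegral τ (w' - d.2.1) t := by
    rw [h.time_eq, map_sub]
    simp only [integratedData, ContinuousMap.add_apply, ContinuousMap.const_apply,
      ContinuousMap.sub_apply]
    abel
  rw [hlap]
  constructor
  · rw [apply_timeIntegral recenter τ
      (p := (radialPotential m R : C(Profile, Profile)).comp (w' - d.2.1))
      fun t => (h.space_eq t).1]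
    exact (apply_timeIntegral (radialPotential m R) τ (fun _ => rfl) t).symm
  · exact apply_timeIntegral (q := w' - d.2.1) (p := d.2.2) (boundaryFlux m R) τ
      (fun t => (h.space_eq t).2) t

lemma isStrictHeatSolution_timeIntegral {m : ℕ} {R τ : ℝ} {d : HeatData} {w : Evolution}
    (h : (d, w) ∈ generalizedHeatSolutions m R τ) :
    IsStrictHeatSolution m R τ (integratedData τ d) (timeIntegral τ w) w := by
  have hclosed : IsClosed {x : HeatData × Evolution |
      (∀ t, recenter (timeIntegral τ x.2 t) =
        radialPotential m R (x.2 t - (x.1.1 + timeIntegral τ x.1.2.1 t))) ∧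
      ∀ t, boundaryFlux m R (x.2 t - (x.1.1 + timeIntegral τ x.1.2.1 t)) =
        timeIntegral τ x.1.2.2 t} := by
    simp only [ofPred_and, ofPred_forall]
    refine IsClosed.inter (isClosed_iInter fun t => isClosed_eq ?_ ?_)
      (isClosed_iInter fun t => isClosed_eq ?_ ?_) <;> fun_prop
  have hspace := closure_minimal (s := (strictHeatSolutions m R τ : Set (HeatData × Evolution)))
    (by
      rintro x ⟨w', hx⟩
      exact ⟨fun t => (hx.timeIntegral.space_eq t).1, fun t => (hx.timeIntegral.space_eq t).2⟩)
    hclosed h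
  exact ⟨fun t => by simp [integratedData], fun t => ⟨hspace.1 t, hspace.2 t⟩⟩

/-- The data for which there is a generalised solution. -/
noncomputable def solvableData (m : ℕ) (R τ : ℝ) : Submodule ℝ HeatData :=
  (generalizedHeatSolutions m R τ).map (LinearMap.fst ℝ HeatData Evolution)

lemma mem_solvableData {m : ℕ} {R τ : ℝ} {d : HeatData} :
    d ∈ solvableData m R τ ↔ ∃ w, (d, w) ∈ generalizedHeatSolutions m R τ := by
  simp [solvableData]

lemma exists_norm_le_mul_norm_of_mem_generalizedHeatSolutions (m : ℕ) {R τ : ℝ} (hR : 0 < R)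
    (hτ : 0 < τ) : ∃ C, ∀ x ∈ generalizedHeatSolutions m R τ, ‖x.2‖ ≤ C * ‖x.1‖ := by
  refine ⟨1 + τ + (R / ((0 : ℕ) + 2) + τ * ((m + 1 + (0 : ℕ)) / R)), fun ⟨d, w⟩ hx => ?_⟩
  refine (norm_le_of_mem_generalizedHeatSolutions hR hτ hx 0).trans ?_
  rw [add_mul (1 + τ), add_mul 1, one_mul]
  gcongr
  · exact norm_fst_le d
  · exact (norm_fst_le _).trans (norm_snd_le d)
  · exact (norm_snd_le _).trans (norm_snd_le d)

lemma isClosed_map_fst_of_norm_snd_le {A B : Type*} [NormedAddCommGroup A] [NormedSpace ℝ A]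
    [NormedAddCommGroup B] [NormedSpace ℝ B] [CompleteSpace A] [CompleteSpace B]
    {G : Submodule ℝ (A × B)} (hG : IsClosed (G : Set (A × B))) {C : ℝ}
    (hC : ∀ x ∈ G, ‖x.2‖ ≤ C * ‖x.1‖) :
    IsClosed (G.map (LinearMap.fst ℝ A B) : Set A) := by
  have hcomplete : CompleteSpace G := hG.completeSpace_coe
  let pr : G →L[ℝ] A := (ContinuousLinearMap.fst ℝ A B).comp G.subtypeL
  have hanti : AntilipschitzWith (max 1 C).toNNReal pr := by
    refine AddMonoidHomClass.antilipschitz_of_bound pr fun ⟨⟨a, b⟩, hx⟩ => ?_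
    rw [Real.coe_toNNReal _ (zero_le_one.trans (le_max_left 1 C))]
    exact max_le (le_mul_of_one_le_left (norm_nonneg a) (le_max_left 1 C))
      ((hC _ hx).trans (mul_le_mul_of_nonneg_right (le_max_right 1 C) (norm_nonneg a)))
  convert hanti.isClosed_range pr.uniformContinuous
  ext a
  simp [pr]

/-- By the a priori estimate, convergence of the data forces convergence of the solutions. -/
lemma isClosed_solvableData (m : ℕ) {R τ : ℝ} (hR : 0 < R) (hτ : 0 < τ) :
    IsClosed (solvableData m R τ : Set HeatData) := by
  obtain ⟨C, hC⟩ := exists_norm_le_mul_norm_of_mem_generalizedHeatSolutions m hR hτ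
  have hclosed : IsClosed (generalizedHeatSolutions m R τ : Set (HeatData × Evolution)) :=
    Submodule.isClosed_topologicalClosure _
  exact isClosed_map_fst_of_norm_snd_le (A := HeatData) (B := Evolution) hclosed hC

lemma integratedData_mem_solvableData {m : ℕ} {R τ : ℝ} {d : HeatData}
    (h : d ∈ solvableData m R τ) : integratedData τ d ∈ solvableData m R τ := by
  obtain ⟨w, h⟩ := mem_solvableData.1 h
  exact mem_solvableData.2 ⟨_, (isStrictHeatSolution_timeIntegral h).mem_generalizedHeatSolutions⟩

section YosidaEvolution

variable {E : Type*} [NormedAddCommGroup E] [NormedSpace ℝ E] [CompleteSpace E] {T : E →L[ℝ] E}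
  {κ τ : ℝ}

/-- The orbit of `f` under `yosidaSemigroup` on `[0, τ]`, with time rescaled to `[0, 1]`. -/
noncomputable def yosidaEvolution (T : E →L[ℝ] E) (κ τ : ℝ) (f : E) : C(unitInterval, E) where
  toFun t := yosidaSemigroup T κ (τ * t) f
  continuous_toFun := (continuous_iff_continuousAt.2 fun t =>
    (hasDerivAt_yosidaSemigroup_apply T κ t f).continuousAt).comp (by fun_prop)

lemma norm_yosidaEvolution_le (hT : ∀ f, ‖T f‖ ≤ ‖f‖) (hκ : 0 ≤ κ) (hτ : 0 ≤ τ) (f : E) :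
    ‖yosidaEvolution T κ τ f‖ ≤ ‖f‖ :=
  (ContinuousMap.norm_le _ (norm_nonneg f)).2 fun t =>
    norm_yosidaSemigroup_apply_le hT hκ (mul_nonneg hτ t.2.1) f

lemma yosidaEvolution_eq_add_timeIntegral (T : E →L[ℝ] E) (κ τ : ℝ) (f : E) (t : unitInterval) :
    yosidaEvolution T κ τ f t =
      f + timeIntegral τ (yosidaEvolution T κ τ (κ • (T f - f))) t := by
  have hderiv (s : ℝ) : HasDerivAt (fun s => yosidaSemigroup T κ (τ * s) f)
      (τ • yosidaSemigroup T κ (τ * s) (κ • (T f - f))) s := by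
    have hscaled := (hasDerivAt_yosidaSemigroup_apply T κ (τ * s) f).scomp s
      ((hasDerivAt_id s).const_mul τ)
    rwa [mul_one] at hscaled
  have hcont : Continuous fun s => yosidaSemigroup T κ s (κ • (T f - f)) :=
    continuous_iff_continuousAt.2 fun t => (hasDerivAt_yosidaSemigroup_apply T κ t _).continuousAt
  have hftc := intervalIntegral.integral_eq_sub_of_hasDerivAt (a := 0) (b := (t : ℝ))
    (fun s _ => hderiv s) (Continuous.intervalIntegrable (by fun_prop) _ _)
  rw [mul_zero, yosidaSemigroup_zero, intervalIntegral.integral_smul] at hftc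
  rw [timeIntegral_apply, integral_unitExtend_of_forall_eq
    (G := fun s => yosidaSemigroup T κ (τ * s) (κ • (T f - f))) (fun _ => rfl), hftc,
    add_sub_cancel]
  rfl

end YosidaEvolution

lemma IsNeumannResolvent.isStrictHeatSolution_yosidaEvolution {m : ℕ} {R τ κ : ℝ} (hR : 0 < R)
    (hκ : 0 < κ) {J : Profile →L[ℝ] Profile} (hJ : IsNeumannResolvent m R κ J)
    {U q q' : Profile} (hU : HasNeumannLaplacian m R U q) (hq : HasNeumannLaplacian m R q q') :
    IsStrictHeatSolution m R τ (J U, κ⁻¹ • yosidaEvolution J κ τ (J (J q')), 0)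
      (yosidaEvolution J κ τ (J U)) (yosidaEvolution J κ τ (J (J q))) := by
  have hgenerator : κ • (J (J U) - J U) = J (J q) := by
    rw [← map_sub, ← map_smul, hJ.smul_apply_sub hR hκ hU]
  refine ⟨fun t => by rw [yosidaEvolution_eq_add_timeIntegral, hgenerator], fun t => ?_⟩
  have hsource : yosidaEvolution J κ τ (J (J q)) t - (κ⁻¹ • yosidaEvolution J κ τ (J (J q'))) t =
      yosidaSemigroup J κ (τ * t) (J q) := by
    have hq' : J (J q') = κ • (J (J q) - J q) := by
      rw [← map_sub, ← map_smul, hJ.smul_apply_sub hR hκ hq]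
    rw [hq', sub_eq_iff_eq_add', ContinuousMap.smul_apply]
    change yosidaSemigroup J κ (τ * t) (J (J q)) =
      κ⁻¹ • yosidaSemigroup J κ (τ * t) (κ • (J (J q) - J q)) + yosidaSemigroup J κ (τ * t) (J q)
    rw [map_smul, inv_smul_smul₀ hκ.ne', map_sub, sub_add_cancel]
  have hlap := hJ (yosidaSemigroup J κ (τ * t) U)
  rw [apply_yosidaSemigroup, ← map_sub, ← map_smul, hJ.smul_apply_sub hR hκ hU] at hlap
  rw [hsource]
  exact hlap.hasRadialLaplacian

lemma mem_solvableData_of_hasNeumannLaplacian {m : ℕ} {R τ : ℝ} (hR : 0 < R) (hτ : 0 < τ)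
    {U q q' : Profile} (hU : HasNeumannLaplacian m R U q) (hq : HasNeumannLaplacian m R q q') :
    ((U, 0, 0) : HeatData) ∈ solvableData m R τ := by
  have hpos (k : ℕ) : (0 : ℝ) < k + 1 := by positivity
  have htop : Tendsto (fun k : ℕ => (k : ℝ) + 1) atTop atTop :=
    tendsto_atTop_add_const_right _ _ tendsto_natCast_atTop_atTop
  choose J hJ using fun k : ℕ => exists_isNeumannResolvent m hR (hpos k)
  have hnorm (k : ℕ) (f : Profile) : ‖J k f‖ ≤ ‖f‖ := (hJ k).norm_apply_le hR (hpos k) f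
  have hsource : Tendsto (fun k : ℕ =>
      ((k : ℝ) + 1)⁻¹ • yosidaEvolution (J k) (k + 1) τ (J k (J k q'))) atTop (𝓝 0) := by
    refine squeeze_zero_norm (fun k => ?_) ((tendsto_const_nhds (x := ‖q'‖)).div_atTop htop)
    rw [norm_smul, Real.norm_eq_abs, abs_of_pos (inv_pos.2 (hpos k)), div_eq_inv_mul]
    gcongr
    exact (norm_yosidaEvolution_le (hnorm k) (hpos k).le hτ.le _).trans
      ((hnorm k _).trans (hnorm k _))
  refine (isClosed_solvableData m hR hτ).mem_of_tendsto
    ((tendsto_neumannResolvent_apply hR hpos htop hJ hU).prodMk_nhds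
      (hsource.prodMk_nhds tendsto_const_nhds)) (Eventually.of_forall fun k => ?_)
  exact mem_solvableData.2 ⟨_, ((hJ k).isStrictHeatSolution_yosidaEvolution hR (hpos k) hU
    hq).mem_generalizedHeatSolutions⟩

section Solvability

variable (m : ℕ) {R τ : ℝ} (hR : 0 < R) (hτ : 0 < τ)
include hR hτ

lemma initialData_mem_solvableData (U : Profile) : ((U, 0, 0) : HeatData) ∈ solvableData m R τ := by
  let L : Profile →L[ℝ] HeatData := ContinuousLinearMap.inl ℝ Profile (Evolution × Profile)
  exact mem_of_forall_hasNeumannLaplacian_mem (m := m) hR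
    (V := (solvableData m R τ).comap (L : Profile →ₗ[ℝ] HeatData))
    ((isClosed_solvableData m hR hτ).preimage L.continuous)
    (fun _ _ _ hU hq => mem_solvableData_of_hasNeumannLaplacian hR hτ hU hq) U

lemma source_mem_solvableData (f : Evolution) : ((0, f, 0) : HeatData) ∈ solvableData m R τ := by
  let L : Evolution →L[ℝ] HeatData := (ContinuousLinearMap.inr ℝ Profile (Evolution × Profile)).comp
    (ContinuousLinearMap.inl ℝ Evolution Profile)
  refine mem_of_timeIntegral_mem hτ.ne'
    (V := (solvableData m R τ).comap (L : Evolution →ₗ[ℝ] HeatData))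
    ((isClosed_solvableData m hR hτ).preimage L.continuous) (fun b => ?_) (fun g hg => ?_) f
  · have hconst := integratedData_mem_solvableData (initialData_mem_solvableData m hR hτ b)
    rwa [integratedData, map_zero, map_zero, add_zero] at hconst
  · have hint := integratedData_mem_solvableData (Submodule.mem_comap.1 hg)
    change ((0, timeIntegral τ g, 0) : HeatData) ∈ solvableData m R τ
    change ((0, ContinuousMap.const _ 0 + timeIntegral τ g, timeIntegral τ 0) : HeatData) ∈ _
      at hint
    rwa [map_zero, ContinuousMap.const_zero, zero_add] at hint

lemma one_flux_mem_solvableData : ((0, 0, 1) : HeatData) ∈ solvableData m R τ := by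
  have hsteady : IsStrictHeatSolution m R τ
      (fluxProfile R 0, -ContinuousMap.const _ (fluxDensity m R 0), 1)
      (ContinuousMap.const _ (fluxProfile R 0)) 0 := by
    refine ⟨fun t => by simp, fun t => ?_⟩
    simpa using hasRadialLaplacian_fluxProfile hR m 0
  have hdiff := (solvableData m R τ).sub_mem
    (mem_solvableData.2 ⟨_, hsteady.mem_generalizedHeatSolutions⟩)
    ((solvableData m R τ).add_mem (initialData_mem_solvableData m hR hτ (fluxProfile R 0))
      (source_mem_solvableData m hR hτ (-ContinuousMap.const _ (fluxDensity m R 0))))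
  simpa using hdiff

lemma flux_mem_solvableData (g : Profile) : ((0, 0, g) : HeatData) ∈ solvableData m R τ := by
  let L : Profile →L[ℝ] HeatData := (ContinuousLinearMap.inr ℝ Profile (Evolution × Profile)).comp
    (ContinuousLinearMap.inr ℝ Evolution Profile)
  refine mem_of_timeIntegral_mem hτ.ne'
    (V := (solvableData m R τ).comap (L : Profile →ₗ[ℝ] HeatData))
    ((isClosed_solvableData m hR hτ).preimage L.continuous) (fun b => ?_) (fun g hg => ?_) g
  · have hconst := (solvableData m R τ).smul_mem b (one_flux_mem_solvableData m hR hτ)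
    have hsmul : (b • 1 : Profile) = ContinuousMap.const _ b := by
      ext t
      simp
    rwa [Prod.smul_mk, Prod.smul_mk, smul_zero, smul_zero, hsmul] at hconst
  · have hint := integratedData_mem_solvableData (Submodule.mem_comap.1 hg)
    change ((0, 0, timeIntegral τ g) : HeatData) ∈ solvableData m R τ
    change ((0, ContinuousMap.const _ 0 + timeIntegral τ 0, timeIntegral τ g) : HeatData) ∈ _
      at hint
    rwa [map_zero, ContinuousMap.const_zero, zero_add] at hint

lemma exists_mem_generalizedHeatSolutions (d : HeatData) :
    ∃ w, (d, w) ∈ generalizedHeatSolutions m R τ := by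
  refine mem_solvableData.1 ?_
  have hsum := (solvableData m R τ).add_mem (initialData_mem_solvableData m hR hτ d.1)
    ((solvableData m R τ).add_mem (source_mem_solvableData m hR hτ d.2.1)
      (flux_mem_solvableData m hR hτ d.2.2))
  simpa only [Prod.mk_add_mk, add_zero, zero_add] using hsum

end Solvability

/-! ### Local existence for the radial system -/

lemma le_mul_pow_of_le_half_add {d a : ℕ → ℝ} {A c : ℝ} (hd : 0 ≤ d 0) (hc : 0 ≤ c)
    (hda : ∀ k, d (k + 1) ≤ 1 / 2 * d k + c * a k) (ha : ∀ k, a k ≤ A * (1 / 2) ^ k) (hA : 0 ≤ A)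
    (k : ℕ) : d k ≤ (d 0 + 4 * (c * A)) * (3 / 4) ^ k := by
  have hcA : 0 ≤ c * A := mul_nonneg hc hA
  induction k with
  | zero => simpa using hcA
  | succ k ih =>
    have hpow : (1 / 2 : ℝ) ^ k ≤ (3 / 4) ^ k := pow_le_pow_left₀ (by norm_num) (by norm_num) k
    calc d (k + 1) ≤ 1 / 2 * d k + c * a k := hda k
      _ ≤ 1 / 2 * ((d 0 + 4 * (c * A)) * (3 / 4) ^ k) + c * (A * (3 / 4) ^ k) := by
        gcongr
        exact (ha k).trans (by gcongr)
      _ = (d 0 / 2 + 3 * (c * A)) * (3 / 4) ^ k := by ring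
      _ ≤ (3 / 4 * (d 0 + 4 * (c * A))) * (3 / 4) ^ k := by
        gcongr
        linarith
      _ = (d 0 + 4 * (c * A)) * (3 / 4) ^ (k + 1) := by ring

section FixedPoint

variable {E : Type*} [NormedAddCommGroup E] [NormedSpace ℝ E] (T : E →L[ℝ] E) {P : Set E}
  {Ψ : E → E} {c : ℝ}

lemma norm_map_iterate_sub_le {x₀ : E} (hmem : ∀ k, Ψ^[k] x₀ ∈ P)
    (hT : ∀ x ∈ P, ∀ y ∈ P, ‖T (Ψ x - Ψ y)‖ ≤ 1 / 2 * ‖T (x - y)‖) (k : ℕ) :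
    ‖T (Ψ^[k + 1] x₀ - Ψ^[k] x₀)‖ ≤ ‖T (Ψ x₀ - x₀)‖ * (1 / 2) ^ k := by
  induction k with
  | zero => simp
  | succ k ih =>
    have hstep := hT _ (hmem (k + 1)) _ (hmem k)
    rw [← Function.iterate_succ_apply' Ψ (k + 1), ← Function.iterate_succ_apply' Ψ k] at hstep
    calc ‖T (Ψ^[k + 2] x₀ - Ψ^[k + 1] x₀)‖ ≤ 1 / 2 * ‖T (Ψ^[k + 1] x₀ - Ψ^[k] x₀)‖ := hstep
      _ ≤ 1 / 2 * (‖T (Ψ x₀ - x₀)‖ * (1 / 2) ^ k) := by gcongr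
      _ = ‖T (Ψ x₀ - x₀)‖ * (1 / 2) ^ (k + 1) := by ring

lemma cauchySeq_iterate_of_norm_sub_le {x₀ : E} (hmem : ∀ k, Ψ^[k] x₀ ∈ P) (hc : 0 ≤ c)
    (hΨ : ∀ x ∈ P, ∀ y ∈ P, ‖Ψ x - Ψ y‖ ≤ 1 / 2 * ‖x - y‖ + c * ‖T (x - y)‖)
    (hT : ∀ x ∈ P, ∀ y ∈ P, ‖T (Ψ x - Ψ y)‖ ≤ 1 / 2 * ‖T (x - y)‖) :
    CauchySeq fun k => Ψ^[k] x₀ := by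
  refine cauchySeq_of_le_geometric (3 / 4)
    (‖Ψ^[1] x₀ - Ψ^[0] x₀‖ + 4 * (c * ‖T (Ψ x₀ - x₀)‖)) (by norm_num) fun k => ?_
  rw [dist_comm, dist_eq_norm]
  refine le_mul_pow_of_le_half_add (d := fun k => ‖Ψ^[k + 1] x₀ - Ψ^[k] x₀‖) (norm_nonneg _) hc
    (fun k => ?_) (norm_map_iterate_sub_le T hmem hT) (norm_nonneg _) k
  have hstep := hΨ _ (hmem (k + 1)) _ (hmem k)
  rwa [← Function.iterate_succ_apply' Ψ (k + 1), ← Function.iterate_succ_apply' Ψ k] at hstep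

lemma exists_fixedPoint_of_norm_sub_le [CompleteSpace E] (hP : IsClosed P) {x₀ : E} (hx₀ : x₀ ∈ P)
    (hmaps : MapsTo Ψ P P) (hc : 0 ≤ c)
    (hΨ : ∀ x ∈ P, ∀ y ∈ P, ‖Ψ x - Ψ y‖ ≤ 1 / 2 * ‖x - y‖ + c * ‖T (x - y)‖)
    (hT : ∀ x ∈ P, ∀ y ∈ P, ‖T (Ψ x - Ψ y)‖ ≤ 1 / 2 * ‖T (x - y)‖) :
    ∃ x ∈ P, Ψ x = x := by
  have hmem (k : ℕ) : Ψ^[k] x₀ ∈ P := hmaps.iterate k hx₀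
  obtain ⟨x, hx⟩ := cauchySeq_tendsto_of_complete
    (cauchySeq_iterate_of_norm_sub_le T hmem hc hΨ hT)
  have hxP : x ∈ P := hP.mem_of_tendsto hx (Eventually.of_forall hmem)
  have hdiff : Tendsto (fun k => Ψ^[k] x₀ - x) atTop (𝓝 0) := by simpa using hx.sub_const x
  have herror : Tendsto (fun k => 1 / 2 * ‖Ψ^[k] x₀ - x‖ + c * ‖T (Ψ^[k] x₀ - x)‖) atTop
      (𝓝 0) := by
    have hzero : (0 : ℝ) = 1 / 2 * ‖(0 : E)‖ + c * ‖T 0‖ := by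
      rw [map_zero, norm_zero, mul_zero, mul_zero, add_zero]
    rw [hzero]
    exact (hdiff.norm.const_mul (1 / 2)).add
      (((T.continuous.tendsto 0).comp hdiff).norm.const_mul c)
  have himage : Tendsto (fun k => Ψ^[k + 1] x₀) atTop (𝓝 (Ψ x)) := by
    refine tendsto_iff_norm_sub_tendsto_zero.2
      (squeeze_zero (fun _ => norm_nonneg _) (fun k => ?_) herror)
    rw [Function.iterate_succ_apply']
    exact hΨ _ (hmem k) _ hxP
  exact ⟨x, hxP, tendsto_nhds_unique himage (hx.comp (tendsto_add_atTop_nat 1))⟩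

end FixedPoint

/-- Pointwise exponential of a radial profile. -/
noncomputable def expProfile (U : Profile) : Profile := ⟨fun r => Real.exp (U r), by fun_prop⟩

lemma continuous_expProfile : Continuous expProfile :=
  (⟨Real.exp, Real.continuous_exp⟩ : C(ℝ, ℝ)).continuous_postcomp

/-- Pointwise exponential of a function of time and radius. -/
noncomputable def expEvolution (v : Evolution) : Evolution :=
  ⟨fun t => expProfile (v t), continuous_expProfile.comp v.continuous⟩

lemma expEvolution_apply (v : Evolution) (t r : unitInterval) :
    expEvolution v t r = Real.exp (v t r) := rfl

/-- The trace on the sphere of rescaled radius `r`, as a function of time. The boundary is `r = 1`.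
-/
noncomputable def traceAt (r : unitInterval) (v : Evolution) : Profile :=
  ⟨fun t => v t r, (ContinuousMap.evalCLM ℝ r : Profile →L[ℝ] ℝ).continuous.comp v.continuous⟩

section Estimates

variable {v v' z z' : Evolution} {C B : ℝ}

lemma evolution_norm_le (hC : 0 ≤ C) (h : ∀ t r, |v t r| ≤ C) : ‖v‖ ≤ C :=
  (ContinuousMap.norm_le _ hC).2 fun t => (ContinuousMap.norm_le _ hC).2 (h t)

lemma abs_apply_le_evolution_norm (v : Evolution) (t r : unitInterval) : |v t r| ≤ ‖v‖ :=
  ((v t).norm_coe_le_norm r).trans (v.norm_coe_le_norm t)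

lemma norm_traceAt_le (r : unitInterval) (v : Evolution) : ‖traceAt r v‖ ≤ ‖v‖ :=
  (ContinuousMap.norm_le _ (norm_nonneg v)).2 fun t => abs_apply_le_evolution_norm v t r

lemma norm_expEvolution_le (h : ‖v‖ ≤ C) : ‖expEvolution v‖ ≤ Real.exp C :=
  evolution_norm_le (Real.exp_pos _).le fun t r => by
    rw [expEvolution_apply, Real.abs_exp]
    exact Real.exp_le_exp.2 ((le_abs_self _).trans ((abs_apply_le_evolution_norm v t r).trans h))

lemma abs_exp_sub_exp_le {a b C : ℝ} (ha : a ≤ C) (hb : b ≤ C) :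
    |Real.exp a - Real.exp b| ≤ Real.exp C * |a - b| := by
  refine (convex_Iic C).norm_image_sub_le_of_norm_deriv_le
    (fun x _ => Real.differentiableAt_exp) (fun x hx => ?_) hb ha
  rw [Real.deriv_exp, Real.norm_eq_abs, Real.abs_exp]
  exact Real.exp_le_exp.2 hx

lemma norm_expEvolution_sub_le (h : ‖v‖ ≤ C) (h' : ‖v'‖ ≤ C) :
    ‖expEvolution v - expEvolution v'‖ ≤ Real.exp C * ‖v - v'‖ := by
  refine evolution_norm_le (by positivity) fun t r => ?_
  refine (abs_exp_sub_exp_le ((le_abs_self _).trans ((abs_apply_le_evolution_norm v t r).trans h))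
    ((le_abs_self _).trans ((abs_apply_le_evolution_norm v' t r).trans h'))).trans ?_
  gcongr
  exact abs_apply_le_evolution_norm (v - v') t r

lemma norm_expEvolution_mul_le (h : ‖v‖ ≤ C) : ‖expEvolution v * z‖ ≤ Real.exp C * ‖z‖ := by
  refine evolution_norm_le (by positivity) fun t r => ?_
  change |expEvolution v t r * z t r| ≤ _
  rw [abs_mul]
  exact mul_le_mul ((abs_apply_le_evolution_norm _ t r).trans (norm_expEvolution_le h))
    (abs_apply_le_evolution_norm _ t r) (abs_nonneg _) (Real.exp_pos _).le

lemma norm_expEvolution_mul_sub_le (h : ‖v‖ ≤ C) (h' : ‖v'‖ ≤ C) (hz : ‖z‖ ≤ B) :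
    ‖expEvolution v * z - expEvolution v' * z'‖ ≤
      Real.exp C * (‖z - z'‖ + B * ‖v - v'‖) := by
  have hB : 0 ≤ B := (norm_nonneg z).trans hz
  refine evolution_norm_le (by positivity) fun t r => ?_
  have hexp : |Real.exp (v t r) - Real.exp (v' t r)| ≤ Real.exp C * ‖v - v'‖ :=
    (abs_apply_le_evolution_norm (expEvolution v - expEvolution v') t r).trans
      (norm_expEvolution_sub_le h h')
  have hfactor : |Real.exp (v' t r)| ≤ Real.exp C :=
    (abs_apply_le_evolution_norm (expEvolution v') t r).trans (norm_expEvolution_le h')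
  change |Real.exp (v t r) * z t r - Real.exp (v' t r) * z' t r| ≤ _
  calc |Real.exp (v t r) * z t r - Real.exp (v' t r) * z' t r|
      = |Real.exp (v' t r) * (z t r - z' t r) +
        (Real.exp (v t r) - Real.exp (v' t r)) * z t r| := by ring_nf
    _ ≤ |Real.exp (v' t r)| * |z t r - z' t r| +
        |Real.exp (v t r) - Real.exp (v' t r)| * |z t r| := by
      rw [← abs_mul, ← abs_mul]
      exact abs_add_le _ _
    _ ≤ Real.exp C * ‖z - z'‖ + (Real.exp C * ‖v - v'‖) * B := by
      gcongr
      · exact abs_apply_le_evolution_norm (z - z') t r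
      · exact (abs_apply_le_evolution_norm z t r).trans hz
    _ = Real.exp C * (‖z - z'‖ + B * ‖v - v'‖) := by ring

end Estimates

/-- The function with initial value `W` and time derivative `z`. -/
noncomputable def timePrimitive (τ : ℝ) (W : Profile) (z : Evolution) : Evolution :=
  ContinuousMap.const _ W + timeIntegral τ z

lemma timePrimitive_sub (τ : ℝ) (W : Profile) (z z' : Evolution) :
    timePrimitive τ W z - timePrimitive τ W z' = timeIntegral τ (z - z') := by
  rw [timePrimitive, timePrimitive, map_sub, add_sub_add_left_eq_sub]

lemma timePrimitive_apply (τ : ℝ) (W : Profile) (z : Evolution) (t r : unitInterval) :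
    timePrimitive τ W z t r = W r + (τ • ∫ x in (0 : ℝ)..t, unitExtend z x) r := by
  rw [timePrimitive, ContinuousMap.add_apply, ContinuousMap.add_apply, timeIntegral_apply]
  rfl

lemma timeIntegral_apply_apply (τ : ℝ) (f : Evolution) (t r : unitInterval) :
    timeIntegral τ f t r = timeIntegral τ (traceAt r f) t :=
  apply_timeIntegral (ContinuousMap.evalCLM ℝ r : Profile →L[ℝ] ℝ) τ (fun _ => rfl) t

lemma timeIntegral_expEvolution_mul (τ : ℝ) (W : Profile) (z : Evolution) (t r : unitInterval) :
    timeIntegral τ (expEvolution (timePrimitive τ W z) * z) t r =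
      Real.exp (timePrimitive τ W z t r) - Real.exp (W r) := by
  set p : Profile := traceAt r (expEvolution (timePrimitive τ W z) * z) with hp
  have hderiv : ∀ s ∈ uIcc (0 : ℝ) t, HasDerivAt
      (fun s => Real.exp (W r + (τ • ∫ x in (0 : ℝ)..s, unitExtend z x) r))
      (τ * unitExtend p s) s := by
    intro s hs
    rw [uIcc_of_le t.2.1] at hs
    have hs' : s ∈ Icc (0 : ℝ) 1 := ⟨hs.1, hs.2.trans t.2.2⟩
    convert ((hasDerivAt_timeIntegral_apply τ z r ⟨s, hs'⟩).const_add (W r)).exp using 1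
    rw [unitExtend_of_mem _ hs']
    change τ * (Real.exp (timePrimitive τ W z ⟨s, hs'⟩ r) * z ⟨s, hs'⟩ r) = _
    rw [timePrimitive_apply]
    ring
  have hftc := intervalIntegral.integral_eq_sub_of_hasDerivAt hderiv
    ((continuous_const.mul (map_continuous (unitExtend p))).intervalIntegrable _ _)
  rw [intervalIntegral.integral_const_mul] at hftc
  rw [timeIntegral_apply_apply, timeIntegral_apply, ← hp, smul_eq_mul, hftc, timePrimitive_apply]
  simp

/-- Data of the problem obtained by differentiating `u_t = Δu + lam e^v`, `∂u/∂η = e^v` in time,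
where `z = v_t`, `Z = v(0)` and `q = Δu(0)`. -/
noncomputable def differentiatedData (τ lam : ℝ) (q Z : Profile) (z : Evolution) : HeatData :=
  (q + lam • expProfile Z, lam • (expEvolution (timePrimitive τ Z z) * z),
    traceAt 1 (expEvolution (timePrimitive τ Z z) * z))

lemma isStrictHeatSolution_timePrimitive {m : ℕ} {R τ lam : ℝ} {W q Z : Profile}
    {z w : Evolution} (hW : HasRadialLaplacian m R (Real.exp (Z 1)) W q)
    (hw : (differentiatedData τ lam q Z z, w) ∈ generalizedHeatSolutions m R τ) :
    IsStrictHeatSolution m R τ (W, lam • expEvolution (timePrimitive τ Z z),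
      traceAt 1 (expEvolution (timePrimitive τ Z z))) (timePrimitive τ W w) w := by
  refine ⟨fun t => rfl, fun t => ?_⟩
  have hlap := hW.add ((isStrictHeatSolution_timeIntegral hw).space_eq t)
  have hsource : q + (w t - (integratedData τ (differentiatedData τ lam q Z z)).2.1 t) =
      w t - (lam • expEvolution (timePrimitive τ Z z)) t := by
    ext r
    have hint := timeIntegral_expEvolution_mul τ Z z t r
    simp only [integratedData, differentiatedData, map_smul]
    simp only [ContinuousMap.add_apply, ContinuousMap.sub_apply, ContinuousMap.smul_apply,
      ContinuousMap.const_apply, hint, smul_eq_mul, expEvolution_apply]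
    change q r + (w t r - (q r + lam * Real.exp (Z r) + _)) = _
    ring
  have hflux : Real.exp (Z 1) + (integratedData τ (differentiatedData τ lam q Z z)).2.2 t =
      traceAt 1 (expEvolution (timePrimitive τ Z z)) t := by
    have hint := timeIntegral_expEvolution_mul τ Z z t 1
    rw [timeIntegral_apply_apply] at hint
    exact (congrArg (Real.exp (Z 1) + ·) hint).trans (add_sub_cancel _ _)
  rwa [hsource, hflux] at hlap

/-- With `i` large and then `τ` small, the solution operator of the linear problem composed with an
exponential nonlinearity of Lipschitz constant `e^C` halves norms. -/
lemma exists_step_size (m : ℕ) {R : ℝ} (hR : 0 < R) {lam₁ lam₂ : ℝ} (h₁ : 0 < lam₁) (h₂ : 0 < lam₂)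
    (C : ℝ) : ∃ τ : ℝ, 0 < τ ∧ ∃ i : ℕ,
      (τ * lam₁ + (R / (i + 2) + τ * ((m + 1 + i) / R))) * Real.exp C ≤ 1 / 2 ∧
      (τ * lam₂ + (R / (i + 2) + τ * ((m + 1 + i) / R))) * Real.exp C ≤ 1 / 2 := by
  obtain ⟨i, hi⟩ := exists_nat_gt (4 * R * Real.exp C)
  set S : ℝ := lam₁ + lam₂ + (m + 1 + i) / R
  have hS : 0 < S := by positivity
  set τ : ℝ := 1 / (4 * S * Real.exp C)
  have hτ : 0 < τ := by positivity
  have hspace : R / (i + 2) * Real.exp C ≤ 1 / 4 := by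
    rw [div_mul_eq_mul_div, div_le_iff₀ (by positivity)]
    linarith
  have htime : τ * S * Real.exp C = 1 / 4 := by
    simp only [τ]
    field_simp
  have hstep (lam : ℝ) (hlam : lam + (m + 1 + i) / R ≤ S) :
      (τ * lam + (R / (i + 2) + τ * ((m + 1 + i) / R))) * Real.exp C ≤ 1 / 2 := by
    calc (τ * lam + (R / (i + 2) + τ * ((m + 1 + i) / R))) * Real.exp C
        = τ * (lam + (m + 1 + i) / R) * Real.exp C + R / (i + 2) * Real.exp C := by ring
      _ ≤ τ * S * Real.exp C + 1 / 4 := by gcongr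
      _ = 1 / 2 := by rw [htime]; norm_num
  exact ⟨τ, hτ, i, hstep _ (by linarith), hstep _ (by linarith)⟩

section Iteration

variable {m i : ℕ} {R τ lam C : ℝ}

lemma norm_le_add_half (hR : 0 < R) (hτ : 0 < τ) (hlam : 0 ≤ lam)
    (hstep : (τ * lam + (R / (i + 2) + τ * ((m + 1 + i) / R))) * Real.exp C ≤ 1 / 2)
    {W : Profile} {f w : Evolution} {X : ℝ} (hX : 0 ≤ X) (hf : ‖f‖ ≤ Real.exp C * X)
    (h : ((W, lam • f, traceAt 1 f), w) ∈ generalizedHeatSolutions m R τ) :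
    ‖w‖ ≤ ‖W‖ + 1 / 2 * X := by
  have hsource : ‖lam • f‖ ≤ lam * ‖f‖ := evolution_norm_le (by positivity) fun t r => by
    change |lam * f t r| ≤ _
    rw [abs_mul, abs_of_nonneg hlam]
    gcongr
    exact abs_apply_le_evolution_norm f t r
  refine (norm_le_of_mem_generalizedHeatSolutions hR hτ h i).trans ?_
  rw [add_assoc]
  change ‖W‖ + (τ * ‖lam • f‖ + _ * ‖traceAt 1 f‖) ≤ _
  gcongr
  calc τ * ‖lam • f‖ + (R / (i + 2) + τ * ((m + 1 + i) / R)) * ‖traceAt 1 f‖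
      ≤ τ * (lam * ‖f‖) + (R / (i + 2) + τ * ((m + 1 + i) / R)) * ‖f‖ := by
        gcongr
        exact norm_traceAt_le 1 f
    _ = (τ * lam + (R / (i + 2) + τ * ((m + 1 + i) / R))) * ‖f‖ := by ring
    _ ≤ (τ * lam + (R / (i + 2) + τ * ((m + 1 + i) / R))) * (Real.exp C * X) := by gcongr
    _ = (τ * lam + (R / (i + 2) + τ * ((m + 1 + i) / R))) * Real.exp C * X := by ring
    _ ≤ 1 / 2 * X := by gcongr

variable (hR : 0 < R) (hτ : 0 < τ) (hlam : 0 ≤ lam)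
  (hstep : (τ * lam + (R / (i + 2) + τ * ((m + 1 + i) / R))) * Real.exp C ≤ 1 / 2)
  {W q Z : Profile} {z z' w w' : Evolution}
  (hw : (differentiatedData τ lam q Z z, w) ∈ generalizedHeatSolutions m R τ)
  (hw' : (differentiatedData τ lam q Z z', w') ∈ generalizedHeatSolutions m R τ)
  (hz : ‖timePrimitive τ Z z‖ ≤ C) (hz' : ‖timePrimitive τ Z z'‖ ≤ C)
include hR hτ hlam hstep hw hz

lemma norm_le_of_differentiatedData : ‖w‖ ≤ ‖q + lam • expProfile Z‖ + 1 / 2 * ‖z‖ :=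
  norm_le_add_half hR hτ hlam hstep (norm_nonneg z) (norm_expEvolution_mul_le hz) hw

lemma norm_timePrimitive_le_of_differentiatedData
    (hW : HasRadialLaplacian m R (Real.exp (Z 1)) W q) : ‖timePrimitive τ W w‖ ≤ ‖W‖ + 1 / 2 := by
  have hbound := norm_le_add_half hR hτ hlam hstep zero_le_one
    ((norm_expEvolution_le hz).trans_eq (mul_one _).symm)
    (isStrictHeatSolution_timePrimitive hW hw).mem_generalizedHeatSolutions
  rwa [mul_one] at hbound

include hw' hz'

lemma norm_sub_le_of_differentiatedData {B : ℝ} (hzB : ‖z‖ ≤ B) :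
    ‖w - w'‖ ≤ 1 / 2 * ‖z - z'‖ + B / 2 * ‖timeIntegral τ (z - z')‖ := by
  have hB : 0 ≤ B := (norm_nonneg z).trans hzB
  have hdata : differentiatedData τ lam q Z z - differentiatedData τ lam q Z z' =
      (0, lam • (expEvolution (timePrimitive τ Z z) * z - expEvolution (timePrimitive τ Z z') * z'),
        traceAt 1
          (expEvolution (timePrimitive τ Z z) * z - expEvolution (timePrimitive τ Z z') * z')) := by
    rw [smul_sub, ← sub_self (q + lam • expProfile Z)]
    rfl
  have hdiff := (generalizedHeatSolutions m R τ).sub_mem hw hw'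
  rw [Prod.mk_sub_mk, hdata] at hdiff
  have hbound := norm_le_add_half hR hτ hlam hstep (by positivity)
    (norm_expEvolution_mul_sub_le hz hz' hzB) hdiff
  rw [norm_zero, zero_add, timePrimitive_sub] at hbound
  linarith

lemma norm_timeIntegral_sub_le_of_differentiatedData
    (hW : HasRadialLaplacian m R (Real.exp (Z 1)) W q) :
    ‖timeIntegral τ (w - w')‖ ≤ 1 / 2 * ‖timeIntegral τ (z - z')‖ := by
  have hdata : ((W, lam • expEvolution (timePrimitive τ Z z),
        traceAt 1 (expEvolution (timePrimitive τ Z z))) : HeatData) -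
      (W, lam • expEvolution (timePrimitive τ Z z'),
        traceAt 1 (expEvolution (timePrimitive τ Z z'))) =
      (0, lam • (expEvolution (timePrimitive τ Z z) - expEvolution (timePrimitive τ Z z')),
        traceAt 1 (expEvolution (timePrimitive τ Z z) -
          expEvolution (timePrimitive τ Z z'))) := by
    rw [smul_sub, ← sub_self W]
    rfl
  have hdiff := (generalizedHeatSolutions m R τ).sub_mem
    (isStrictHeatSolution_timePrimitive hW hw).mem_generalizedHeatSolutions
    (isStrictHeatSolution_timePrimitive hW hw').mem_generalizedHeatSolutions
  rw [Prod.mk_sub_mk, hdata, timePrimitive_sub] at hdiff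
  have hbound := norm_le_add_half hR hτ hlam hstep
    (norm_nonneg (timePrimitive τ Z z - timePrimitive τ Z z'))
    (norm_expEvolution_sub_le hz hz') hdiff
  rwa [norm_zero, zero_add, timePrimitive_sub] at hbound

end Iteration

/-- The pairs `(u_t, v_t)` bounded by `B` whose primitives with initial values `U` and `V` are
bounded by `C`; the iteration for local existence takes place here. -/
def iterationDomain (τ B C : ℝ) (U V : Profile) : Set (Evolution × Evolution) :=
  {x | (‖x.1‖ ≤ B ∧ ‖timePrimitive τ U x.1‖ ≤ C) ∧ ‖x.2‖ ≤ B ∧ ‖timePrimitive τ V x.2‖ ≤ C}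

lemma isClosed_iterationDomain (τ B C : ℝ) (U V : Profile) :
    IsClosed (iterationDomain τ B C U V) := by
  have hcont (W : Profile) : Continuous (timePrimitive τ W) := by
    unfold timePrimitive
    fun_prop
  have hle (f : Evolution × Evolution → Evolution) (hf : Continuous f) (C : ℝ) :
      IsClosed {x | ‖f x‖ ≤ C} :=
    isClosed_le ((continuous_norm (E := Evolution)).comp hf) continuous_const
  exact ((hle _ continuous_fst B).inter (hle _ ((hcont U).comp continuous_fst) C)).inter
    ((hle _ continuous_snd B).inter (hle _ ((hcont V).comp continuous_snd) C))

lemma zero_mem_iterationDomain (τ : ℝ) {B C : ℝ} (hB : 0 ≤ B) {U V : Profile} (hU : ‖U‖ ≤ C)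
    (hV : ‖V‖ ≤ C) : (0 : Evolution × Evolution) ∈ iterationDomain τ B C U V := by
  have hconst (W : Profile) (hW : ‖W‖ ≤ C) : ‖timePrimitive τ W 0‖ ≤ C := by
    rw [timePrimitive, map_zero, add_zero]
    exact (ContinuousMap.norm_le _ ((norm_nonneg W).trans hW)).2 fun _ => hW
  have hzero : ‖(0 : Evolution)‖ ≤ B := (norm_zero (E := Evolution)).trans_le hB
  exact ⟨⟨hzero, hconst U hU⟩, hzero, hconst V hV⟩

/-- The time derivatives are a fixed point of the map sending `(u_t, v_t)` to the generalised
solution of the differentiated problem. -/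
lemma exists_mem_generalizedHeatSolutions_differentiatedData {m i : ℕ}
    {R τ lam₁ lam₂ C : ℝ} {U V q p : Profile} (hR : 0 < R) (hτ : 0 < τ) (h₁ : 0 ≤ lam₁)
    (h₂ : 0 ≤ lam₂)
    (hstep₁ : (τ * lam₁ + (R / (i + 2) + τ * ((m + 1 + i) / R))) * Real.exp C ≤ 1 / 2)
    (hstep₂ : (τ * lam₂ + (R / (i + 2) + τ * ((m + 1 + i) / R))) * Real.exp C ≤ 1 / 2)
    (hU : ‖U‖ + 1 / 2 ≤ C) (hV : ‖V‖ + 1 / 2 ≤ C)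
    (hUq : HasRadialLaplacian m R (Real.exp (V 1)) U q)
    (hVp : HasRadialLaplacian m R (Real.exp (U 1)) V p) :
    ∃ w z : Evolution,
      (differentiatedData τ lam₁ q V z, w) ∈ generalizedHeatSolutions m R τ ∧
      (differentiatedData τ lam₂ p U w, z) ∈ generalizedHeatSolutions m R τ := by
  choose L hL using exists_mem_generalizedHeatSolutions m hR hτ
  set B : ℝ := 2 * max ‖q + lam₁ • expProfile V‖ ‖p + lam₂ • expProfile U‖
  have hB₁ : ‖q + lam₁ • expProfile V‖ ≤ B / 2 := by simp [B]
  have hB₂ : ‖p + lam₂ • expProfile U‖ ≤ B / 2 := by simp [B]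
  let Ψ (x : Evolution × Evolution) : Evolution × Evolution :=
    (L (differentiatedData τ lam₁ q V x.2), L (differentiatedData τ lam₂ p U x.1))
  let S : Evolution × Evolution →L[ℝ] Evolution × Evolution :=
    (timeIntegral τ).prodMap (timeIntegral τ)
  have hmaps : MapsTo Ψ (iterationDomain τ B C U V) (iterationDomain τ B C U V) := by
    rintro x ⟨⟨hx₁, hx₁'⟩, hx₂, hx₂'⟩
    have hw := norm_le_of_differentiatedData hR hτ h₁ hstep₁ (hL _) hx₂' (q := q)
    have hz := norm_le_of_differentiatedData hR hτ h₂ hstep₂ (hL _) hx₁' (q := p)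
    have hu := norm_timePrimitive_le_of_differentiatedData hR hτ h₁ hstep₁ (hL _) hx₂' hUq
    have hv := norm_timePrimitive_le_of_differentiatedData hR hτ h₂ hstep₂ (hL _) hx₁' hVp
    exact ⟨⟨by linarith, by linarith⟩, by linarith, by linarith⟩
  have hcontr : ∀ x ∈ iterationDomain τ B C U V, ∀ y ∈ iterationDomain τ B C U V,
      ‖Ψ x - Ψ y‖ ≤ 1 / 2 * ‖x - y‖ + B / 2 * ‖S (x - y)‖ := by
    rintro x ⟨⟨hx₁, hx₁'⟩, hx₂, hx₂'⟩ y ⟨⟨_, hy₁'⟩, _, hy₂'⟩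
    refine max_le
      ((norm_sub_le_of_differentiatedData hR hτ h₁ hstep₁ (hL _) (hL _) hx₂' hy₂' hx₂).trans ?_)
      ((norm_sub_le_of_differentiatedData hR hτ h₂ hstep₂ (hL _) (hL _) hx₁' hy₁' hx₁).trans ?_)
    · gcongr
      exacts [norm_snd_le (x - y), norm_snd_le (S (x - y))]
    · gcongr
      exacts [norm_fst_le (x - y), norm_fst_le (S (x - y))]
  have hweak : ∀ x ∈ iterationDomain τ B C U V, ∀ y ∈ iterationDomain τ B C U V,
      ‖S (Ψ x - Ψ y)‖ ≤ 1 / 2 * ‖S (x - y)‖ := by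
    rintro x ⟨⟨_, hx₁'⟩, _, hx₂'⟩ y ⟨⟨_, hy₁'⟩, _, hy₂'⟩
    refine max_le ((norm_timeIntegral_sub_le_of_differentiatedData hR hτ h₁ hstep₁ (hL _) (hL _)
        hx₂' hy₂' hUq).trans ?_) ((norm_timeIntegral_sub_le_of_differentiatedData hR hτ h₂ hstep₂
        (hL _) (hL _) hx₁' hy₁' hVp).trans ?_) <;> gcongr
    exacts [norm_snd_le (S (x - y)), norm_fst_le (S (x - y))]
  obtain ⟨⟨w, z⟩, -, hfix⟩ := exists_fixedPoint_of_norm_sub_le S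
    (isClosed_iterationDomain τ B C U V)
    (zero_mem_iterationDomain τ (by positivity) (by linarith) (by linarith)) hmaps (by positivity)
    hcontr hweak
  have hw : L (differentiatedData τ lam₁ q V z) = w := congrArg Prod.fst hfix
  have hz : L (differentiatedData τ lam₂ p U w) = z := congrArg Prod.snd hfix
  exact ⟨w, z, by simpa only [hw] using hL (differentiatedData τ lam₁ q V z),
    by simpa only [hz] using hL (differentiatedData τ lam₂ p U w)⟩

theorem exists_radial_solution (m : ℕ) {R lam₁ lam₂ : ℝ} (hR : 0 < R) (h₁ : 0 < lam₁)
    (h₂ : 0 < lam₂) (M : ℝ) : ∃ τ : ℝ, 0 < τ ∧ ∀ U V q p : Profile, ‖U‖ ≤ M → ‖V‖ ≤ M →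
      HasRadialLaplacian m R (Real.exp (V 1)) U q → HasRadialLaplacian m R (Real.exp (U 1)) V p →
      ∃ u v w z : Evolution,
        IsStrictHeatSolution m R τ (U, lam₁ • expEvolution v, traceAt 1 (expEvolution v)) u w ∧
        IsStrictHeatSolution m R τ (V, lam₂ • expEvolution u, traceAt 1 (expEvolution u)) v z := by
  obtain ⟨τ, hτ, i, hstep₁, hstep₂⟩ := exists_step_size m hR h₁ h₂ (M + 1)
  refine ⟨τ, hτ, fun U V q p hU hV hUq hVp => ?_⟩
  obtain ⟨w, z, hw, hz⟩ := exists_mem_generalizedHeatSolutions_differentiatedData hR hτ h₁.le h₂.le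
    hstep₁ hstep₂ (by linarith) (by linarith) hUq hVp
  exact ⟨_, _, _, _, isStrictHeatSolution_timePrimitive hUq hw,
    isStrictHeatSolution_timePrimitive hVp hz⟩

/-! ### Comparison for weakly coupled systems -/

lemma iteratedDeriv_two_nonpos_of_isLocalMax {g : ℝ → ℝ} {s : ℝ} (hg : ContinuousAt g s)
    (h : IsLocalMax g s) : iteratedDeriv 2 g s ≤ 0 := by
  by_contra! hpos
  rw [iteratedDeriv_succ, iteratedDeriv_one] at hpos
  have hmin := isLocalMin_of_deriv_deriv_pos hpos h.deriv_eq_zero hg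
  have hconst : g =ᶠ[𝓝 s] fun _ => g s := by
    filter_upwards [h, hmin] with y hy hy' using le_antisymm hy hy'
  rw [hconst.deriv.deriv_eq, deriv_const', deriv_const] at hpos
  exact lt_irrefl _ hpos

lemma contDiffAt_comp_line {V : Type*} [NormedAddCommGroup V] [NormedSpace ℝ V] {f : V → ℝ} {x : V}
    {k : WithTop ℕ∞} (hf : ContDiffAt ℝ k f x) (v : V) :
    ContDiffAt ℝ k (fun s : ℝ => f (x + s • v)) 0 := by
  refine ContDiffAt.comp (0 : ℝ) ?_ (by fun_prop)
  rwa [zero_smul, add_zero]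

lemma add_smul_inv_smul_mem_closedBall {V : Type*} [NormedAddCommGroup V] [NormedSpace ℝ V] {R : ℝ}
    (hR : 0 < R) {x : V} (hx : ‖x‖ = R) {s : ℝ} (hs : s ∈ Icc (-R) 0) :
    x + s • (R⁻¹ • x) ∈ closedBall (0 : V) R := by
  have hscale : x + s • (R⁻¹ • x) = (1 + s / R) • x := by rw [div_eq_mul_inv]; module
  have hlower : -1 ≤ s / R := by
    rw [le_div_iff₀ hR]
    linarith [hs.1]
  have hupper : s / R ≤ 0 := div_nonpos_of_nonpos_of_nonneg hs.2 hR.le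
  rw [mem_closedBall_zero_iff, hscale, norm_smul, hx, Real.norm_eq_abs]
  exact mul_le_of_le_one_left hR.le (abs_le.2 ⟨by linarith, by linarith⟩)

lemma le_of_hasDerivAt_line_of_touch {V : Type*} [NormedAddCommGroup V] [NormedSpace ℝ V] {R : ℝ}
    (hR : 0 < R) {f g : V → ℝ} {x : V} (hx : ‖x‖ = R) {f' g' : ℝ}
    (hf : HasDerivAt (fun s : ℝ => f (x + s • (R⁻¹ • x))) f' 0)
    (hg : HasDerivAt (fun s : ℝ => g (x + s • (R⁻¹ • x))) g' 0)
    (hle : ∀ y ∈ closedBall (0 : V) R, f y ≤ g y) (heq : f x = g x) : g' ≤ f' := by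
  refine sub_nonneg.1 (hasDerivAt_nonneg_of_forall_le (neg_lt_zero.2 hR) (hf.sub hg) fun s hs => ?_)
  simpa only [Pi.sub_apply, zero_smul, add_zero, heq, sub_self, sub_nonpos] using
    hle _ (add_smul_inv_smul_mem_closedBall hR hx hs)

lemma exists_forall_le_mul {X : Type*} [TopologicalSpace X] {Z : Set X} (hZ : IsCompact Z)
    (hne : Z.Nonempty) {F B : X → ℝ} (hF : ContinuousOn F Z) (hB : ContinuousOn B Z)
    (hpos : ∀ p ∈ Z, 0 < B p) : ∃ p ∈ Z, ∃ μ : ℝ, F p = μ * B p ∧ ∀ q ∈ Z, F q ≤ μ * B q := by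
  obtain ⟨p, hp, hmax⟩ := hZ.exists_isMaxOn hne (hF.div hB fun q hq => (hpos q hq).ne')
  exact ⟨p, hp, F p / B p, (div_mul_cancel₀ _ (hpos p hp).ne').symm,
    fun q hq => (div_le_iff₀ (hpos q hq)).1 (isMaxOn_iff.1 hmax q hq)⟩

section MaximumPrinciple

variable {n : ℕ}

lemma lap_sub {f g : EuclideanSpace ℝ (Fin n) → ℝ} {x : EuclideanSpace ℝ (Fin n)}
    (hf : ContDiffAt ℝ 2 f x) (hg : ContDiffAt ℝ 2 g x) :
    lap (fun y => f y - g y) x = lap f x - lap g x := by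
  unfold lap
  rw [← Finset.sum_sub_distrib]
  exact Finset.sum_congr rfl fun i _ => iteratedDeriv_sub
    (contDiffAt_comp_line hf (EuclideanSpace.single i 1))
    (contDiffAt_comp_line hg (EuclideanSpace.single i 1))

lemma lap_const (c : ℝ) (x : EuclideanSpace ℝ (Fin n)) : lap (fun _ => c) x = 0 :=
  Finset.sum_eq_zero fun i _ => by rw [iteratedDeriv_const, if_neg two_ne_zero]

lemma lap_const_mul (c : ℝ) (f : EuclideanSpace ℝ (Fin n) → ℝ) (x : EuclideanSpace ℝ (Fin n)) :
    lap (fun y => c * f y) x = c * lap f x := by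
  unfold lap
  rw [Finset.mul_sum]
  exact Finset.sum_congr rfl fun i _ => iteratedDeriv_const_mul_field c
    fun s : ℝ => f (x + s • EuclideanSpace.single i (1 : ℝ))

lemma lap_nonpos_of_isLocalMax {f : EuclideanSpace ℝ (Fin n) → ℝ} {x : EuclideanSpace ℝ (Fin n)}
    (hf : ContDiffAt ℝ 2 f x) (h : IsLocalMax f x) : lap f x ≤ 0 := by
  refine Finset.sum_nonpos fun i _ => iteratedDeriv_two_nonpos_of_isLocalMax
    (contDiffAt_comp_line hf _).continuousAt ?_
  have hline : Continuous fun s : ℝ => x + s • EuclideanSpace.single i (1 : ℝ) := by fun_prop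
  have htendsto := hline.tendsto 0
  rw [zero_smul, add_zero] at htendsto
  filter_upwards [htendsto.eventually h] with s hs
  rwa [zero_smul, add_zero]

lemma lap_nonneg_of_isLocalMin {f : EuclideanSpace ℝ (Fin n) → ℝ} {x : EuclideanSpace ℝ (Fin n)}
    (hf : ContDiffAt ℝ 2 f x) (h : IsLocalMin f x) : 0 ≤ lap f x := by
  have hneg : lap (fun y => -1 * f y) x ≤ 0 :=
    lap_nonpos_of_isLocalMax (contDiffAt_const.mul hf) (by simpa only [neg_one_mul] using h.neg)
  rw [lap_const_mul] at hneg
  linarith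

lemma lap_le_of_touch {f g : EuclideanSpace ℝ (Fin n) → ℝ} {x : EuclideanSpace ℝ (Fin n)}
    (hf : ContDiffAt ℝ 2 f x) (hg : ContDiffAt ℝ 2 g x) (hle : ∀ᶠ y in 𝓝 x, f y ≤ g y)
    (heq : f x = g x) : lap f x ≤ lap g x := by
  rw [← sub_nonpos, ← lap_sub hf hg]
  refine lap_nonpos_of_isLocalMax (hf.sub hg) ?_
  filter_upwards [hle] with y hy
  rw [heq, sub_self]
  exact sub_nonpos.2 hy

/-- The barrier `e^{Kt + k|x|²}` of the maximum principle. Its normal derivative on the sphere of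
radius `R` is `2kR` times itself, and it is a strict supersolution when `K` is large. -/
noncomputable def expBarrier (K k : ℝ) (x : EuclideanSpace ℝ (Fin n)) (t : ℝ) : ℝ :=
  Real.exp (K * t + k * ‖x‖ ^ 2)

lemma expBarrier_pos (K k : ℝ) (x : EuclideanSpace ℝ (Fin n)) (t : ℝ) : 0 < expBarrier K k x t :=
  Real.exp_pos _

lemma continuous_expBarrier (K k : ℝ) :
    Continuous fun p : EuclideanSpace ℝ (Fin n) × ℝ => expBarrier K k p.1 p.2 := by
  unfold expBarrier
  fun_prop

lemma contDiff_expBarrier (K k t : ℝ) {j : WithTop ℕ∞} :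
    ContDiff ℝ j fun x : EuclideanSpace ℝ (Fin n) => expBarrier K k x t :=
  (contDiff_const.add (contDiff_const.mul (contDiff_norm_sq ℝ))).exp

lemma hasDerivAt_expBarrier (K k : ℝ) (x : EuclideanSpace ℝ (Fin n)) (t : ℝ) :
    HasDerivAt (expBarrier K k x) (expBarrier K k x t * K) t := by
  refine HasDerivAt.exp ((((hasDerivAt_id t).const_mul K).add_const _).congr_deriv ?_)
  rw [mul_one]

lemma hasDerivAt_expBarrier_line (K k t : ℝ) (x v : EuclideanSpace ℝ (Fin n)) (s : ℝ) :
    HasDerivAt (fun s : ℝ => expBarrier K k (x + s • v) t)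
      (expBarrier K k (x + s • v) t * (k * (2 * (inner ℝ x v + s * ‖v‖ ^ 2)))) s := by
  have hline : HasDerivAt (fun s : ℝ => x + s • v) v s :=
    (((hasDerivAt_id s).smul_const v).const_add x).congr_deriv (one_smul ℝ v)
  refine ((hline.norm_sq.const_mul k).const_add (K * t)).exp.congr_deriv ?_
  rw [inner_add_left, real_inner_smul_left, real_inner_self_eq_norm_sq]
  rfl

lemma iteratedDeriv_two_expBarrier_line (K k t : ℝ) (x v : EuclideanSpace ℝ (Fin n)) :
    iteratedDeriv 2 (fun s : ℝ => expBarrier K k (x + s • v) t) 0 =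
      expBarrier K k x t * (2 * k * ‖v‖ ^ 2 + 4 * k ^ 2 * inner ℝ x v ^ 2) := by
  have hderiv : deriv (fun s : ℝ => expBarrier K k (x + s • v) t) = fun s =>
      expBarrier K k (x + s • v) t * (k * (2 * (inner ℝ x v + s * ‖v‖ ^ 2))) :=
    funext fun s => (hasDerivAt_expBarrier_line K k t x v s).deriv
  have hfactor : HasDerivAt (fun s : ℝ => k * (2 * (inner ℝ x v + s * ‖v‖ ^ 2)))
      (k * (2 * (1 * ‖v‖ ^ 2))) 0 :=
    (((hasDerivAt_id (0 : ℝ)).mul_const _).const_add _ |>.const_mul 2).const_mul k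
  rw [iteratedDeriv_succ, iteratedDeriv_one, hderiv]
  refine ((hasDerivAt_expBarrier_line K k t x v 0).mul hfactor).deriv.trans ?_
  simp only [zero_smul, add_zero, zero_mul]
  ring

lemma lap_expBarrier (K k t : ℝ) (x : EuclideanSpace ℝ (Fin n)) :
    lap (fun y => expBarrier K k y t) x =
      expBarrier K k x t * (2 * k * n + 4 * k ^ 2 * ‖x‖ ^ 2) := by
  have hterm (i : Fin n) :
      iteratedDeriv 2 (fun s : ℝ => expBarrier K k (x + s • EuclideanSpace.single i 1) t) 0 =
        expBarrier K k x t * (2 * k + 4 * k ^ 2 * x i ^ 2) := by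
    rw [iteratedDeriv_two_expBarrier_line]
    simp [EuclideanSpace.inner_single_right]
  unfold lap
  rw [Finset.sum_congr rfl fun i _ => hterm i, ← Finset.mul_sum, Finset.sum_add_distrib,
    ← Finset.mul_sum _ _ (4 * k ^ 2), EuclideanSpace.real_norm_sq_eq, Finset.sum_const,
    Finset.card_univ, Fintype.card_fin, nsmul_eq_mul]
  ring

/-- `a` is a subsolution driven by the positive part of `b`: `a_t ≤ Δa + C b⁺` in the ball,
`∂a/∂η ≤ C b⁺` on the sphere, and `a ≤ 0` initially. The comparison principle for weakly coupled
systems assumes this for `(a, b)` and for `(b, a)`. -/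
structure IsDrivenSubsolution (R S C : ℝ) (a b : EuclideanSpace ℝ (Fin n) → ℝ → ℝ) : Prop where
  cont : ContinuousOn (fun p : EuclideanSpace ℝ (Fin n) × ℝ => a p.1 p.2)
    ((closedBall (0 : EuclideanSpace ℝ (Fin n)) R) ×ˢ Icc (0 : ℝ) S)
  reg : ∀ x ∈ ball (0 : EuclideanSpace ℝ (Fin n)) R, ∀ t ∈ Ioc 0 S,
    ContDiffAt ℝ 2 (fun y => a y t) x
  pde : ∀ x ∈ ball (0 : EuclideanSpace ℝ (Fin n)) R, ∀ t ∈ Ioc 0 S,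
    ∃ a', HasDerivAt (a x) a' t ∧ a' ≤ lap (fun y => a y t) x + C * max 0 (b x t)
  bc : ∀ x : EuclideanSpace ℝ (Fin n), ‖x‖ = R → ∀ t ∈ Ioc 0 S,
    ∃ a', HasDerivAt (fun s : ℝ => a (x + s • (R⁻¹ • x)) t) a' 0 ∧ a' ≤ C * max 0 (b x t)
  init : ∀ x ∈ closedBall (0 : EuclideanSpace ℝ (Fin n)) R, a x 0 ≤ 0

namespace IsDrivenSubsolution

variable {R S C k K μ t : ℝ} {a b : EuclideanSpace ℝ (Fin n) → ℝ → ℝ}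
  {x : EuclideanSpace ℝ (Fin n)}

lemma not_touch_interior (h : IsDrivenSubsolution R S C a b) (hC : 0 ≤ C)
    (hK : 2 * k * n + 4 * k ^ 2 * R ^ 2 + C < K) (hμ : 0 < μ) (ht : t ∈ Ioc 0 S)
    (hx : x ∈ ball (0 : EuclideanSpace ℝ (Fin n)) R)
    (hle : ∀ y ∈ closedBall (0 : EuclideanSpace ℝ (Fin n)) R, ∀ s ∈ Icc 0 S,
      a y s ≤ μ * expBarrier K k y s)
    (hb : b x t ≤ μ * expBarrier K k x t) : a x t ≠ μ * expBarrier K k x t := by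
  intro heq
  obtain ⟨a', ha', hpde⟩ := h.pde x hx t ht
  have hpos : 0 < μ * expBarrier K k x t := mul_pos hμ (expBarrier_pos K k x t)
  have hlap : lap (fun y => a y t) x ≤ μ * lap (fun y => expBarrier K k y t) x := by
    rw [← lap_const_mul]
    refine lap_le_of_touch (h.reg x hx t ht)
      (contDiff_const.mul (contDiff_expBarrier K k t)).contDiffAt ?_ heq
    filter_upwards [isOpen_ball.mem_nhds hx] with y hy
    exact hle y (ball_subset_closedBall hy) t ⟨ht.1.le, ht.2⟩
  have hderiv : μ * (expBarrier K k x t * K) ≤ a' := by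
    refine sub_nonneg.1 (hasDerivAt_nonneg_of_forall_le ht.1
      (ha'.sub ((hasDerivAt_expBarrier K k x t).const_mul μ)) fun s hs => ?_)
    simpa only [Pi.sub_apply, heq, sub_self, sub_nonpos] using
      hle x (ball_subset_closedBall hx) s ⟨hs.1, hs.2.trans ht.2⟩
  have hnorm : ‖x‖ ^ 2 ≤ R ^ 2 := pow_le_pow_left₀ (norm_nonneg x) (mem_ball_zero_iff.1 hx).le 2
  have hlt : μ * expBarrier K k x t * (2 * k * n + 4 * k ^ 2 * ‖x‖ ^ 2 + C) <
      μ * expBarrier K k x t * K := by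
    refine mul_lt_mul_of_pos_left (lt_of_le_of_lt ?_ hK) hpos
    gcongr
  have hsource : C * max 0 (b x t) ≤ C * (μ * expBarrier K k x t) :=
    mul_le_mul_of_nonneg_left (max_le hpos.le hb) hC
  rw [lap_expBarrier] at hlap
  linarith

lemma not_touch_boundary (h : IsDrivenSubsolution R S C a b) (hR : 0 < R) (hC : 0 ≤ C)
    (hk : 2 * k * R = C + 1) (hμ : 0 < μ) (ht : t ∈ Ioc 0 S) (hx : ‖x‖ = R)
    (hle : ∀ y ∈ closedBall (0 : EuclideanSpace ℝ (Fin n)) R, a y t ≤ μ * expBarrier K k y t)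
    (hb : b x t ≤ μ * expBarrier K k x t) : a x t ≠ μ * expBarrier K k x t := by
  intro heq
  obtain ⟨a', ha', hbc⟩ := h.bc x hx t ht
  have hpos : 0 < μ * expBarrier K k x t := mul_pos hμ (expBarrier_pos K k x t)
  have hslope := le_of_hasDerivAt_line_of_touch hR (f := fun y => a y t) hx ha'
    ((hasDerivAt_expBarrier_line K k t x (R⁻¹ • x) 0).const_mul μ) hle heq
  have hnormal : k * (2 * (R⁻¹ * R ^ 2)) = C + 1 := by
    rw [← hk]
    field_simp
  simp only [zero_smul, add_zero, zero_mul, inner_smul_right, real_inner_self_eq_norm_sq, hx,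
    hnormal] at hslope
  have hsource : C * max 0 (b x t) ≤ C * (μ * expBarrier K k x t) :=
    mul_le_mul_of_nonneg_left (max_le hpos.le hb) hC
  linarith

lemma not_touch (h : IsDrivenSubsolution R S C a b) (hR : 0 < R) (hC : 0 ≤ C)
    (hk : 2 * k * R = C + 1) (hK : 2 * k * n + 4 * k ^ 2 * R ^ 2 + C < K) (hμ : 0 < μ)
    (ht : t ∈ Ioc 0 S) (hx : x ∈ closedBall (0 : EuclideanSpace ℝ (Fin n)) R)
    (hle : ∀ y ∈ closedBall (0 : EuclideanSpace ℝ (Fin n)) R, ∀ s ∈ Icc 0 S,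
      a y s ≤ μ * expBarrier K k y s)
    (hb : b x t ≤ μ * expBarrier K k x t) : a x t ≠ μ * expBarrier K k x t := by
  rcases (mem_closedBall_zero_iff.1 hx).lt_or_eq with hlt | hboundary
  · exact h.not_touch_interior hC hK hμ ht (mem_ball_zero_iff.2 hlt) hle hb
  · exact h.not_touch_boundary hR hC hk hμ ht hboundary (fun y hy => hle y hy t ⟨ht.1.le, ht.2⟩) hb

lemma multiplier_nonpos (ha : IsDrivenSubsolution R S C a b) (hb : IsDrivenSubsolution R S C b a)
    (hR : 0 < R) (hC : 0 ≤ C) (hk : 2 * k * R = C + 1)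
    (hK : 2 * k * n + 4 * k ^ 2 * R ^ 2 + C < K)
    (hx : x ∈ closedBall (0 : EuclideanSpace ℝ (Fin n)) R) (ht : t ∈ Icc 0 S)
    (heq : max (a x t) (b x t) = μ * expBarrier K k x t)
    (hle : ∀ y ∈ closedBall (0 : EuclideanSpace ℝ (Fin n)) R, ∀ s ∈ Icc 0 S,
      max (a y s) (b y s) ≤ μ * expBarrier K k y s) : μ ≤ 0 := by
  by_contra! hμ
  have hpos : 0 < max (a x t) (b x t) := heq ▸ mul_pos hμ (expBarrier_pos K k x t)
  have ht₀ : 0 < t := by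
    refine ht.1.lt_of_ne fun h₀ => hpos.not_ge ?_
    rw [← h₀]
    exact max_le (ha.init x hx) (hb.init x hx)
  rcases max_choice (a x t) (b x t) with h | h
  · exact ha.not_touch hR hC hk hK hμ ⟨ht₀, ht.2⟩ hx
      (fun y hy s hs => (le_max_left _ _).trans (hle y hy s hs))
      ((le_max_right _ _).trans heq.le) (h ▸ heq)
  · exact hb.not_touch hR hC hk hK hμ ⟨ht₀, ht.2⟩ hx
      (fun y hy s hs => (le_max_right _ _).trans (hle y hy s hs))
      ((le_max_left _ _).trans heq.le) (h ▸ heq)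

theorem nonpos (ha : IsDrivenSubsolution R S C a b) (hb : IsDrivenSubsolution R S C b a)
    (hR : 0 < R) (hC : 0 ≤ C) :
    ∀ x ∈ closedBall (0 : EuclideanSpace ℝ (Fin n)) R, ∀ t ∈ Icc 0 S, a x t ≤ 0 ∧ b x t ≤ 0 := by
  intro x hx t ht
  set k : ℝ := (C + 1) / (2 * R) with hk
  have hk' : 2 * k * R = C + 1 := by
    rw [hk]
    field_simp
  set K : ℝ := 2 * k * n + 4 * k ^ 2 * R ^ 2 + C + 1
  obtain ⟨⟨y, s⟩, ⟨hy, hs⟩, μ, heq, hle⟩ := exists_forall_le_mul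
    ((isCompact_closedBall (0 : EuclideanSpace ℝ (Fin n)) R).prod isCompact_Icc) ⟨(x, t), hx, ht⟩
    (ha.cont.sup hb.cont) (continuous_expBarrier K k).continuousOn
    fun p _ => expBarrier_pos K k p.1 p.2
  have hμ : μ ≤ 0 := multiplier_nonpos ha hb hR hC hk' (lt_add_one _) hy hs heq
    fun z hz r hr => hle (z, r) ⟨hz, hr⟩
  have hmax : max (a x t) (b x t) ≤ 0 := (hle (x, t) ⟨hx, ht⟩).trans
    (mul_nonpos_of_nonpos_of_nonneg hμ (expBarrier_pos K k x t).le)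
  exact max_le_iff.1 hmax

end IsDrivenSubsolution

end MaximumPrinciple

/-! ### Comparison of classical solutions -/

lemma mul_exp_sub_exp_le {a b c L M : ℝ} (hc : 0 ≤ c) (hcL : c ≤ L) (ha : a ≤ M) :
    c * (exp a - exp b) ≤ L * exp M * max 0 (a - b) := by
  have hexp : exp a - exp b ≤ exp M * max 0 (a - b) := by
    rcases le_total a b with hab | hab
    · rw [max_eq_left (sub_nonpos.2 hab), mul_zero]
      exact sub_nonpos.2 (exp_le_exp.2 hab)
    · rw [max_eq_right (sub_nonneg.2 hab), ← abs_of_nonneg (sub_nonneg.2 hab)]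
      exact (le_abs_self _).trans (abs_exp_sub_exp_le ha (hab.trans ha))
  calc c * (exp a - exp b) ≤ c * (exp M * max 0 (a - b)) := mul_le_mul_of_nonneg_left hexp hc
    _ ≤ L * (exp M * max 0 (a - b)) := mul_le_mul_of_nonneg_right hcL (by positivity)
    _ = L * exp M * max 0 (a - b) := (mul_assoc _ _ _).symm

namespace IsClassicalSolution

variable {n : ℕ} {R T lam₁ lam₂ : ℝ} {u v : EuclideanSpace ℝ (Fin n) → ℝ → ℝ}
  {u₀ v₀ : EuclideanSpace ℝ (Fin n) → ℝ}

lemma swap (h : IsClassicalSolution n R T lam₁ lam₂ u v u₀ v₀) :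
    IsClassicalSolution n R T lam₂ lam₁ v u v₀ u₀ :=
  ⟨h.cont_v, h.cont_u, h.reg_space_v, h.reg_space_u, h.reg_time_v, h.reg_time_u, h.pde_v, h.pde_u,
    h.bc_v, h.bc_u, h.init_v, h.init_u⟩

lemma contDiffAt (h : IsClassicalSolution n R T lam₁ lam₂ u v u₀ v₀)
    {x : EuclideanSpace ℝ (Fin n)} (hx : x ∈ ball (0 : EuclideanSpace ℝ (Fin n)) R) {t : ℝ}
    (ht : t ∈ Ioo 0 T) : ContDiffAt ℝ 2 (fun y => u y t) x :=
  (h.reg_space_u t ht).contDiffAt (mem_of_superset (isOpen_ball.mem_nhds hx) ball_subset_closedBall)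

lemma hasDerivAt_time (h : IsClassicalSolution n R T lam₁ lam₂ u v u₀ v₀)
    {x : EuclideanSpace ℝ (Fin n)} (hx : x ∈ ball (0 : EuclideanSpace ℝ (Fin n)) R) {t : ℝ}
    (ht : t ∈ Ioo 0 T) : HasDerivAt (u x) (lap (fun y => u y t) x + lam₁ * exp (v x t)) t := by
  rw [← h.pde_u x hx t ht]
  exact (h.reg_time_u x (ball_subset_closedBall hx) t ht).hasDerivAt

-- The normal derivative is not a junk value, because the flux `e^v` does not vanish.
lemma hasDerivAt_normal (h : IsClassicalSolution n R T lam₁ lam₂ u v u₀ v₀)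
    {x : EuclideanSpace ℝ (Fin n)} (hx : ‖x‖ = R) {t : ℝ} (ht : t ∈ Ioo 0 T) :
    HasDerivAt (fun s : ℝ => u (x + s • (R⁻¹ • x)) t) (exp (v x t)) 0 := by
  have hflux : deriv (fun s : ℝ => u (x + s • (R⁻¹ • x)) t) 0 = exp (v x t) := h.bc_u x hx t ht
  rw [← hflux]
  refine (differentiableAt_of_deriv_ne_zero ?_).hasDerivAt
  rw [hflux]
  exact (exp_pos _).ne'

lemma continuousOn_prod_Icc (h : IsClassicalSolution n R T lam₁ lam₂ u v u₀ v₀) {S : ℝ}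
    (hS : S < T) : ContinuousOn (fun p : EuclideanSpace ℝ (Fin n) × ℝ => u p.1 p.2)
      ((closedBall (0 : EuclideanSpace ℝ (Fin n)) R) ×ˢ Icc (0 : ℝ) S) :=
  h.cont_u.mono (prod_mono le_rfl fun _ ht => ⟨ht.1, ht.2.trans_lt hS⟩)

lemma exists_forall_le (h : IsClassicalSolution n R T lam₁ lam₂ u v u₀ v₀) {S : ℝ} (hS : S < T) :
    ∃ M, ∀ x ∈ closedBall (0 : EuclideanSpace ℝ (Fin n)) R, ∀ t ∈ Icc 0 S, u x t ≤ M := by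
  obtain ⟨M, hM⟩ := ((isCompact_closedBall (0 : EuclideanSpace ℝ (Fin n)) R).prod
    (isCompact_Icc (a := (0 : ℝ)) (b := S))).bddAbove_image (h.continuousOn_prod_Icc hS)
  exact ⟨M, fun x hx t ht => hM ⟨(x, t), ⟨hx, ht⟩, rfl⟩⟩

lemma exists_forall_le_and_le (h : IsClassicalSolution n R T lam₁ lam₂ u v u₀ v₀) {S : ℝ}
    (hS : S < T) : ∃ M, ∀ x ∈ closedBall (0 : EuclideanSpace ℝ (Fin n)) R, ∀ t ∈ Icc 0 S,
      u x t ≤ M ∧ v x t ≤ M := by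
  obtain ⟨M₁, hM₁⟩ := h.exists_forall_le hS
  obtain ⟨M₂, hM₂⟩ := h.swap.exists_forall_le hS
  exact ⟨max M₁ M₂, fun x hx t ht =>
    ⟨(hM₁ x hx t ht).trans (le_max_left _ _), (hM₂ x hx t ht).trans (le_max_right _ _)⟩⟩

lemma continuousOn_space (h : IsClassicalSolution n R T lam₁ lam₂ u v u₀ v₀) {t : ℝ}
    (ht : t ∈ Ico 0 T) :
    ContinuousOn (fun x => u x t) (closedBall (0 : EuclideanSpace ℝ (Fin n)) R) :=
  h.cont_u.comp (f := fun x => (x, t)) (by fun_prop) fun _ hx => ⟨hx, ht⟩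

lemma isDrivenSubsolution_sub {T' S L M : ℝ} {u' v' : EuclideanSpace ℝ (Fin n) → ℝ → ℝ}
    {u₀' v₀' : EuclideanSpace ℝ (Fin n) → ℝ} (h₁ : 0 ≤ lam₁) (hL₁ : lam₁ ≤ L) (hL : 1 ≤ L)
    (h : IsClassicalSolution n R T lam₁ lam₂ u v u₀ v₀)
    (h' : IsClassicalSolution n R T' lam₁ lam₂ u' v' u₀' v₀') (hS : S < T) (hS' : S < T')
    (hu : ∀ x ∈ closedBall (0 : EuclideanSpace ℝ (Fin n)) R, u₀ x ≤ u₀' x)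
    (hM : ∀ x ∈ closedBall (0 : EuclideanSpace ℝ (Fin n)) R, ∀ t ∈ Icc 0 S, v x t ≤ M) :
    IsDrivenSubsolution R S (L * exp M) (fun x t => u x t - u' x t)
      (fun x t => v x t - v' x t) where
  cont := (h.continuousOn_prod_Icc hS).sub (h'.continuousOn_prod_Icc hS')
  reg x hx t ht := (h.contDiffAt hx ⟨ht.1, ht.2.trans_lt hS⟩).sub
    (h'.contDiffAt hx ⟨ht.1, ht.2.trans_lt hS'⟩)
  pde x hx t ht := by
    have htT : t ∈ Ioo 0 T := ⟨ht.1, ht.2.trans_lt hS⟩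
    have htT' : t ∈ Ioo 0 T' := ⟨ht.1, ht.2.trans_lt hS'⟩
    refine ⟨_, (h.hasDerivAt_time hx htT).sub (h'.hasDerivAt_time hx htT'), ?_⟩
    rw [lap_sub (h.contDiffAt hx htT) (h'.contDiffAt hx htT')]
    have hsource := mul_exp_sub_exp_le (b := v' x t) h₁ hL₁
      (hM x (ball_subset_closedBall hx) t ⟨ht.1.le, ht.2⟩)
    linarith
  bc x hx t ht := by
    refine ⟨_, (h.hasDerivAt_normal hx ⟨ht.1, ht.2.trans_lt hS⟩).sub
      (h'.hasDerivAt_normal hx ⟨ht.1, ht.2.trans_lt hS'⟩), ?_⟩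
    simpa only [one_mul] using mul_exp_sub_exp_le (b := v' x t) zero_le_one hL
      (hM x (mem_closedBall_zero_iff.2 hx.le) t ⟨ht.1.le, ht.2⟩)
  init x hx := by
    rw [h.init_u x hx, h'.init_u x hx]
    exact sub_nonpos.2 (hu x hx)

theorem le_of_initial_le {T' : ℝ} {u' v' : EuclideanSpace ℝ (Fin n) → ℝ → ℝ}
    {u₀' v₀' : EuclideanSpace ℝ (Fin n) → ℝ}
    (h : IsClassicalSolution n R T lam₁ lam₂ u v u₀ v₀)
    (h' : IsClassicalSolution n R T' lam₁ lam₂ u' v' u₀' v₀')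
    (hR : 0 < R) (h₁ : 0 ≤ lam₁) (h₂ : 0 ≤ lam₂)
    (hu : ∀ x ∈ closedBall (0 : EuclideanSpace ℝ (Fin n)) R, u₀ x ≤ u₀' x)
    (hv : ∀ x ∈ closedBall (0 : EuclideanSpace ℝ (Fin n)) R, v₀ x ≤ v₀' x)
    {x : EuclideanSpace ℝ (Fin n)} (hx : x ∈ closedBall (0 : EuclideanSpace ℝ (Fin n)) R)
    {t : ℝ} (ht : t ∈ Ico 0 T) (ht' : t < T') : u x t ≤ u' x t ∧ v x t ≤ v' x t := by
  obtain ⟨M, hM⟩ := h.exists_forall_le_and_le ht.2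
  set L := lam₁ + lam₂ + 1
  have hsub_u := isDrivenSubsolution_sub h₁ (L := L) (by linarith) (by linarith) h h' ht.2 ht' hu
    fun y hy s hs => (hM y hy s hs).2
  have hsub_v := isDrivenSubsolution_sub h₂ (L := L) (by linarith) (by linarith) h.swap h'.swap
    ht.2 ht' hv fun y hy s hs => (hM y hy s hs).1
  have hdiff := hsub_u.nonpos hsub_v hR (by positivity) x hx t ⟨ht.1, le_rfl⟩
  exact ⟨sub_nonpos.1 hdiff.1, sub_nonpos.1 hdiff.2⟩

theorem unique {T' : ℝ} {u' v' : EuclideanSpace ℝ (Fin n) → ℝ → ℝ}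
    (h : IsClassicalSolution n R T lam₁ lam₂ u v u₀ v₀)
    (h' : IsClassicalSolution n R T' lam₁ lam₂ u' v' u₀ v₀)
    (hR : 0 < R) (h₁ : 0 ≤ lam₁) (h₂ : 0 ≤ lam₂)
    {x : EuclideanSpace ℝ (Fin n)} (hx : x ∈ closedBall (0 : EuclideanSpace ℝ (Fin n)) R)
    {t : ℝ} (ht : t ∈ Ico 0 T) (ht' : t < T') : u x t = u' x t ∧ v x t = v' x t := by
  have hle := h.le_of_initial_le h' hR h₁ h₂ (fun _ _ => le_rfl) (fun _ _ => le_rfl) hx ht ht'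
  have hge := h'.le_of_initial_le h hR h₁ h₂ (fun _ _ => le_rfl) (fun _ _ => le_rfl) hx
    ⟨ht.1, ht'⟩ ht.2
  exact ⟨le_antisymm hle.1 hge.1, le_antisymm hle.2 hge.2⟩

end IsClassicalSolution

/-- The solution `-log (e^{-a} - λ t)` of `y' = λ e^y`, `y(0) = a`. It lives for `λ t < e^{-a}` and
serves as a spatially constant subsolution. -/
noncomputable def riccati (lam a t : ℝ) : ℝ := -Real.log (exp (-a) - lam * t)

lemma riccati_zero (lam a : ℝ) : riccati lam a 0 = a := by
  rw [riccati, mul_zero, sub_zero, log_exp, neg_neg]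

lemma exp_riccati {lam a t : ℝ} (ht : lam * t < exp (-a)) :
    exp (riccati lam a t) = (exp (-a) - lam * t)⁻¹ := by
  rw [riccati, exp_neg, exp_log (sub_pos.2 ht)]

lemma riccati_le_riccati {lam a s t : ℝ} (hlam : 0 ≤ lam) (hst : s ≤ t)
    (ht : lam * t < exp (-a)) : riccati lam a s ≤ riccati lam a t := by
  have hmul : lam * s ≤ lam * t := mul_le_mul_of_nonneg_left hst hlam
  exact neg_le_neg (log_le_log (sub_pos.2 ht) (sub_le_sub_left hmul _))

lemma hasDerivAt_riccati {lam a t : ℝ} (ht : lam * t < exp (-a)) :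
    HasDerivAt (riccati lam a) (lam * exp (riccati lam a t)) t := by
  refine ((((hasDerivAt_id t).const_mul lam).const_sub (exp (-a))).log
    (sub_pos.2 ht).ne').neg.congr_deriv ?_
  rw [exp_riccati ht]
  simp only [id_eq]
  ring

lemma exists_lt_riccati {lam a : ℝ} (hlam : 0 < lam) (M : ℝ) :
    ∃ t, 0 ≤ t ∧ lam * t < exp (-a) ∧ M < riccati lam a t := by
  set y := max a (M + 1)
  have hmul : lam * ((exp (-a) - exp (-y)) / lam) = exp (-a) - exp (-y) := by field_simp
  have hle : exp (-y) ≤ exp (-a) := exp_le_exp.2 (neg_le_neg (le_max_left _ _))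
  refine ⟨(exp (-a) - exp (-y)) / lam, div_nonneg (sub_nonneg.2 hle) hlam.le, ?_, ?_⟩
  · rw [hmul]
    exact sub_lt_self _ (exp_pos _)
  · rw [riccati, hmul, sub_sub_cancel, log_exp, neg_neg]
    exact (lt_add_one M).trans_le (le_max_right _ _)

namespace IsClassicalSolution

variable {n : ℕ} {R T lam₁ lam₂ a : ℝ} {u v : EuclideanSpace ℝ (Fin n) → ℝ → ℝ}
  {u₀ v₀ : EuclideanSpace ℝ (Fin n) → ℝ}

lemma isDrivenSubsolution_riccati_sub {S lam L M : ℝ} (hlam : 0 ≤ lam) (hlam₁ : lam ≤ lam₁)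
    (hL₁ : lam₁ ≤ L) (hL : 1 ≤ L) (h : IsClassicalSolution n R T lam₁ lam₂ u v u₀ v₀) (hS : S < T)
    (hSa : lam * S < exp (-a)) (hu : ∀ x ∈ closedBall (0 : EuclideanSpace ℝ (Fin n)) R, a ≤ u₀ x)
    (hM : ∀ t ∈ Icc 0 S, riccati lam a t ≤ M) :
    IsDrivenSubsolution R S (L * exp M) (fun x t => riccati lam a t - u x t)
      (fun x t => riccati lam a t - v x t) where
  cont := by
    refine ContinuousOn.sub (ContinuousOn.comp (g := riccati lam a) (t := Icc 0 S) ?_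
      continuousOn_snd fun p hp => hp.2) (h.continuousOn_prod_Icc hS)
    exact fun t ht => (hasDerivAt_riccati
      ((mul_le_mul_of_nonneg_left ht.2 hlam).trans_lt hSa)).continuousAt.continuousWithinAt
  reg x hx t ht := contDiffAt_const.sub (h.contDiffAt hx ⟨ht.1, ht.2.trans_lt hS⟩)
  pde x hx t ht := by
    have htT : t ∈ Ioo 0 T := ⟨ht.1, ht.2.trans_lt hS⟩
    refine ⟨_, (hasDerivAt_riccati ((mul_le_mul_of_nonneg_left ht.2 hlam).trans_lt hSa)).sub
      (h.hasDerivAt_time hx htT), ?_⟩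
    rw [lap_sub contDiffAt_const (h.contDiffAt hx htT), lap_const]
    have hsource := mul_exp_sub_exp_le (b := v x t) (hlam.trans hlam₁) hL₁ (hM t ⟨ht.1.le, ht.2⟩)
    have hrate := mul_le_mul_of_nonneg_right hlam₁ (exp_pos (riccati lam a t)).le
    linarith
  bc x hx t ht := by
    refine ⟨_, (h.hasDerivAt_normal hx ⟨ht.1, ht.2.trans_lt hS⟩).const_sub _, ?_⟩
    have hsource : 0 ≤ L * exp M * max 0 (riccati lam a t - v x t) := by positivity
    linarith [exp_pos (v x t)]
  init x hx := by
    rw [h.init_u x hx, riccati_zero]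
    exact sub_nonpos.2 (hu x hx)

theorem riccati_le (h : IsClassicalSolution n R T lam₁ lam₂ u v u₀ v₀) (hR : 0 < R)
    (h₁ : 0 ≤ lam₁) (h₂ : 0 ≤ lam₂)
    (hu : ∀ x ∈ closedBall (0 : EuclideanSpace ℝ (Fin n)) R, a ≤ u₀ x)
    (hv : ∀ x ∈ closedBall (0 : EuclideanSpace ℝ (Fin n)) R, a ≤ v₀ x)
    {x : EuclideanSpace ℝ (Fin n)} (hx : x ∈ closedBall (0 : EuclideanSpace ℝ (Fin n)) R)
    {t : ℝ} (ht : t ∈ Ico 0 T) (hta : min lam₁ lam₂ * t < exp (-a)) :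
    riccati (min lam₁ lam₂) a t ≤ u x t ∧ riccati (min lam₁ lam₂) a t ≤ v x t := by
  have hlam : 0 ≤ min lam₁ lam₂ := le_min h₁ h₂
  set L := lam₁ + lam₂ + 1
  have hM : ∀ s ∈ Icc 0 t, riccati (min lam₁ lam₂) a s ≤ riccati (min lam₁ lam₂) a t :=
    fun s hs => riccati_le_riccati hlam hs.2 hta
  have hsub_u := isDrivenSubsolution_riccati_sub (L := L) hlam (min_le_left _ _) (by linarith)
    (by linarith) h ht.2 hta hu hM
  have hsub_v := isDrivenSubsolution_riccati_sub (L := L) hlam (min_le_right _ _) (by linarith)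
    (by linarith) h.swap ht.2 hta hv hM
  have hdiff := hsub_u.nonpos hsub_v hR (by positivity) x hx t ⟨ht.1, le_rfl⟩
  exact ⟨sub_nonpos.1 hdiff.1, sub_nonpos.1 hdiff.2⟩

theorem min_mul_le_exp (h : IsClassicalSolution n R T lam₁ lam₂ u v u₀ v₀) (hR : 0 < R)
    (h₁ : 0 < lam₁) (h₂ : 0 < lam₂)
    (hu : ∀ x ∈ closedBall (0 : EuclideanSpace ℝ (Fin n)) R, a ≤ u₀ x)
    (hv : ∀ x ∈ closedBall (0 : EuclideanSpace ℝ (Fin n)) R, a ≤ v₀ x) :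
    min lam₁ lam₂ * T ≤ exp (-a) := by
  by_contra! hT
  have hlam : 0 < min lam₁ lam₂ := lt_min h₁ h₂
  have hlife : exp (-a) / min lam₁ lam₂ < T := (div_lt_iff₀' hlam).2 hT
  obtain ⟨M, hM⟩ := h.exists_forall_le hlife
  obtain ⟨t, ht₀, hta, hlt⟩ := exists_lt_riccati (a := a) hlam M
  have ht : t ∈ Icc 0 (exp (-a) / min lam₁ lam₂) := ⟨ht₀, (le_div_iff₀' hlam).2 hta.le⟩
  have hcenter := mem_closedBall_self (x := (0 : EuclideanSpace ℝ (Fin n))) hR.le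
  have hle := (h.riccati_le hR h₁.le h₂.le hu hv hcenter ⟨ht₀, ht.2.trans_lt hlife⟩ hta).1
  exact (hlt.trans_le hle).not_ge (hM 0 hcenter t ht)

theorem le_of_le_initial (h : IsClassicalSolution n R T lam₁ lam₂ u v u₀ v₀) (hR : 0 < R)
    (h₁ : 0 < lam₁) (h₂ : 0 < lam₂)
    (hu : ∀ x ∈ closedBall (0 : EuclideanSpace ℝ (Fin n)) R, a ≤ u₀ x)
    (hv : ∀ x ∈ closedBall (0 : EuclideanSpace ℝ (Fin n)) R, a ≤ v₀ x)
    {x : EuclideanSpace ℝ (Fin n)} (hx : x ∈ closedBall (0 : EuclideanSpace ℝ (Fin n)) R)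
    {t : ℝ} (ht : t ∈ Ico 0 T) : a ≤ u x t ∧ a ≤ v x t := by
  have hlam : 0 < min lam₁ lam₂ := lt_min h₁ h₂
  have hta : min lam₁ lam₂ * t < exp (-a) :=
    (mul_lt_mul_of_pos_left ht.2 hlam).trans_le (h.min_mul_le_exp hR h₁ h₂ hu hv)
  have ha : a ≤ riccati (min lam₁ lam₂) a t := by
    conv_lhs => rw [← riccati_zero (min lam₁ lam₂) a]
    exact riccati_le_riccati hlam.le ht.1 hta
  have hle := h.riccati_le hR h₁.le h₂.le hu hv hx ht hta
  exact ⟨ha.trans hle.1, ha.trans hle.2⟩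

lemma exists_forall_le_initial (h : IsClassicalSolution n R T lam₁ lam₂ u v u₀ v₀) (hT : 0 < T) :
    ∃ a, ∀ x ∈ closedBall (0 : EuclideanSpace ℝ (Fin n)) R, a ≤ u₀ x ∧ a ≤ v₀ x := by
  obtain ⟨a, ha⟩ := (isCompact_closedBall (0 : EuclideanSpace ℝ (Fin n)) R).bddBelow_image
    ((h.continuousOn_space ⟨le_rfl, hT⟩).inf (h.swap.continuousOn_space ⟨le_rfl, hT⟩))
  refine ⟨a, fun x hx => ?_⟩
  rw [← h.init_u x hx, ← h.init_v x hx, ← le_inf_iff]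
  exact ha ⟨x, hx, rfl⟩

end IsClassicalSolution

/-! ### Radial symmetry and monotonicity -/

lemma norm_add_smul_inv_smul {V : Type*} [NormedAddCommGroup V] [NormedSpace ℝ V] {R : ℝ}
    (hR : 0 < R) {x : V} (hx : ‖x‖ = R) {s : ℝ} (hs : -R ≤ s) :
    ‖x + s • (R⁻¹ • x)‖ = R + s := by
  have hscale : x + s • (R⁻¹ • x) = ((R + s) / R) • x := by
    rw [add_div, div_self hR.ne', div_eq_mul_inv]
    module
  rw [hscale, norm_smul, hx, Real.norm_of_nonneg (div_nonneg (by linarith) hR.le),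
    div_mul_cancel₀ _ hR.ne']

section RadialPairs

variable {n : ℕ} {R : ℝ} {f : EuclideanSpace ℝ (Fin n) → ℝ} {x y : EuclideanSpace ℝ (Fin n)}

/-- The pairs of points of the closed ball of radius `R` whose second entry lies farther from the
origin. A function on the ball is radial with nondecreasing profile iff `f x - f y ≤ 0` on these
pairs, which makes the maximum principle in doubled variables applicable. -/
def radialPairs (n : ℕ) (R : ℝ) : Set (EuclideanSpace ℝ (Fin n) × EuclideanSpace ℝ (Fin n)) :=
  {p | ‖p.1‖ ≤ ‖p.2‖ ∧ ‖p.2‖ ≤ R}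

lemma radialPairs_subset : radialPairs n R ⊆ closedBall 0 R ×ˢ closedBall 0 R := fun _ hp =>
  ⟨mem_closedBall_zero_iff.2 (hp.1.trans hp.2), mem_closedBall_zero_iff.2 hp.2⟩

lemma isClosed_radialPairs : IsClosed (radialPairs n R) :=
  (isClosed_le continuous_fst.norm continuous_snd.norm).inter
    (isClosed_le continuous_snd.norm continuous_const)

lemma isCompact_radialPairs : IsCompact (radialPairs n R) :=
  ((isCompact_closedBall 0 R).prod (isCompact_closedBall 0 R)).of_isClosed_subset
    isClosed_radialPairs radialPairs_subset

/-- The profile of `f` on the closed ball of radius `R` is radial and nondecreasing. -/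
def IsRadiallyMonotone (R : ℝ) (f : EuclideanSpace ℝ (Fin n) → ℝ) : Prop :=
  ∀ x ∈ closedBall (0 : EuclideanSpace ℝ (Fin n)) R,
    ∀ y ∈ closedBall (0 : EuclideanSpace ℝ (Fin n)) R, ‖x‖ ≤ ‖y‖ → f x ≤ f y

lemma IsRadiallyMonotone.eq_of_norm_eq (hf : IsRadiallyMonotone R f)
    (hx : x ∈ closedBall (0 : EuclideanSpace ℝ (Fin n)) R) (hxy : ‖x‖ = ‖y‖) : f x = f y := by
  have hy : y ∈ closedBall (0 : EuclideanSpace ℝ (Fin n)) R := by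
    rwa [mem_closedBall_zero_iff, ← hxy, ← mem_closedBall_zero_iff]
  exact le_antisymm (hf x hx y hy hxy.le) (hf y hy x hx hxy.ge)

lemma isLocalMax_fst_of_isMaxOn_radialPairs
    (h : IsMaxOn (fun p => f p.1 - f p.2) (radialPairs n R) (x, y)) (hxy : ‖x‖ < ‖y‖)
    (hy : ‖y‖ ≤ R) : IsLocalMax f x := by
  filter_upwards [continuous_norm.continuousAt.eventually_lt (continuousAt_const (y := ‖y‖)) hxy]
    with z hz
  exact (sub_le_sub_iff_right _).1 (isMaxOn_iff.1 h (z, y) ⟨hz.le, hy⟩)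

lemma isLocalMin_snd_of_isMaxOn_radialPairs
    (h : IsMaxOn (fun p => f p.1 - f p.2) (radialPairs n R) (x, y)) (hxy : ‖x‖ < ‖y‖)
    (hy : ‖y‖ < R) : IsLocalMin f y := by
  filter_upwards [(continuousAt_const (y := ‖x‖)).eventually_lt continuous_norm.continuousAt hxy,
    continuous_norm.continuousAt.eventually_lt (continuousAt_const (y := R)) hy] with z hxz hzR
  exact (sub_le_sub_iff_left _).1 (isMaxOn_iff.1 h (x, z) ⟨hxz.le, hzR.le⟩)

lemma hasDerivAt_line_nonpos_of_isMaxOn_radialPairs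
    (h : IsMaxOn (fun p => f p.1 - f p.2) (radialPairs n R) (x, y)) (hxy : ‖x‖ < ‖y‖)
    (hR : 0 < R) (hy : ‖y‖ = R) {f' : ℝ}
    (hf : HasDerivAt (fun s : ℝ => f (y + s • (R⁻¹ • y))) f' 0) : f' ≤ 0 := by
  refine neg_nonneg.1 (hasDerivAt_nonneg_of_forall_le (a := ‖x‖ - R) (by linarith) hf.neg ?_)
  intro s hs
  have hnorm : ‖y + s • (R⁻¹ • y)‖ = R + s :=
    norm_add_smul_inv_smul hR hy (by linarith [hs.1, norm_nonneg x])
  have hle := isMaxOn_iff.1 h (x, y + s • (R⁻¹ • y))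
    ⟨by linarith [hs.1], by linarith [hs.2]⟩
  simp only [Pi.neg_apply, zero_smul, add_zero]
  linarith

end RadialPairs

section Rotation

variable {n : ℕ}

lemma iteratedDeriv_two_comp_line {f : EuclideanSpace ℝ (Fin n) → ℝ}
    {x : EuclideanSpace ℝ (Fin n)} (hf : ContDiffAt ℝ 2 f x) (v : EuclideanSpace ℝ (Fin n)) :
    iteratedDeriv 2 (fun s : ℝ => f (x + s • v)) 0 = fderiv ℝ (fderiv ℝ f) x v v := by
  have hline (s : ℝ) : HasDerivAt (fun s : ℝ => x + s • v) v s :=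
    (((hasDerivAt_id s).smul_const v).const_add x).congr_deriv (one_smul ℝ v)
  have htendsto : Tendsto (fun s : ℝ => x + s • v) (𝓝 0) (𝓝 x) := by
    simpa only [zero_smul, add_zero] using (hline 0).continuousAt.tendsto
  have hderiv : deriv (fun s : ℝ => f (x + s • v)) =ᶠ[𝓝 0] fun s => fderiv ℝ f (x + s • v) v := by
    filter_upwards [htendsto.eventually (hf.eventually (by simp))] with s hs
    exact ((hs.differentiableAt two_ne_zero).hasFDerivAt.comp_hasDerivAt s (hline s)).deriv
  have hfderiv : HasFDerivAt (fderiv ℝ f) (fderiv ℝ (fderiv ℝ f) x) (x + (0 : ℝ) • v) := by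
    rw [zero_smul, add_zero]
    exact ((hf.fderiv_right (m := 1) le_rfl).differentiableAt one_ne_zero).hasFDerivAt
  rw [iteratedDeriv_succ, iteratedDeriv_one, hderiv.deriv_eq]
  exact ((ContinuousLinearMap.apply ℝ ℝ v).hasFDerivAt.comp_hasDerivAt (0 : ℝ)
    (hfderiv.comp_hasDerivAt (0 : ℝ) (hline 0))).deriv

lemma lap_eq_sum_fderiv {ι : Type*} [Fintype ι] {f : EuclideanSpace ℝ (Fin n) → ℝ}
    {x : EuclideanSpace ℝ (Fin n)} (hf : ContDiffAt ℝ 2 f x)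
    (b : OrthonormalBasis ι ℝ (EuclideanSpace ℝ (Fin n))) :
    lap f x = ∑ i, fderiv ℝ (fderiv ℝ f) x (b i) (b i) := by
  have hb := congrFun (InnerProductSpace.laplacian_eq_iteratedFDeriv_orthonormalBasis f b) x
  rw [congrFun (InnerProductSpace.laplacian_eq_iteratedFDeriv_orthonormalBasis f
    (EuclideanSpace.basisFun (Fin n) ℝ)) x] at hb
  simp only [iteratedFDeriv_two_apply, Matrix.cons_val_zero, Matrix.cons_val_one,
    EuclideanSpace.basisFun_apply] at hb
  rw [← hb]
  exact Finset.sum_congr rfl fun i _ => iteratedDeriv_two_comp_line hf _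

lemma lap_comp_linearIsometryEquiv (O : EuclideanSpace ℝ (Fin n) ≃ₗᵢ[ℝ] EuclideanSpace ℝ (Fin n))
    {f : EuclideanSpace ℝ (Fin n) → ℝ} {x : EuclideanSpace ℝ (Fin n)}
    (hf : ContDiffAt ℝ 2 f (O x)) : lap (fun y => f (O y)) x = lap f (O x) := by
  rw [lap_eq_sum_fderiv hf ((EuclideanSpace.basisFun (Fin n) ℝ).map O)]
  refine Finset.sum_congr rfl fun i _ => ?_
  rw [← iteratedDeriv_two_comp_line hf]
  simp only [map_add, map_smul, OrthonormalBasis.map_apply, EuclideanSpace.basisFun_apply]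

end Rotation

namespace IsClassicalSolution

variable {n : ℕ} {R T lam₁ lam₂ : ℝ} {u v : EuclideanSpace ℝ (Fin n) → ℝ → ℝ}
  {u₀ v₀ : EuclideanSpace ℝ (Fin n) → ℝ}

lemma comp_linearIsometryEquiv (h : IsClassicalSolution n R T lam₁ lam₂ u v u₀ v₀)
    (O : EuclideanSpace ℝ (Fin n) ≃ₗᵢ[ℝ] EuclideanSpace ℝ (Fin n)) :
    IsClassicalSolution n R T lam₁ lam₂ (fun x t => u (O x) t) (fun x t => v (O x) t)
      (fun x => u₀ (O x)) (fun x => v₀ (O x)) := by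
  have hclosed : ∀ x ∈ closedBall (0 : EuclideanSpace ℝ (Fin n)) R,
      O x ∈ closedBall (0 : EuclideanSpace ℝ (Fin n)) R := by simp
  have hopen : ∀ x ∈ ball (0 : EuclideanSpace ℝ (Fin n)) R,
      O x ∈ ball (0 : EuclideanSpace ℝ (Fin n)) R := by simp
  have hline (x : EuclideanSpace ℝ (Fin n)) (s : ℝ) :
      O (x + s • (R⁻¹ • x)) = O x + s • (R⁻¹ • O x) := by simp only [map_add, map_smul]
  have hcont : Continuous fun p : EuclideanSpace ℝ (Fin n) × ℝ => (O p.1, p.2) := by fun_prop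
  refine ⟨h.cont_u.comp hcont.continuousOn fun p hp => ⟨hclosed _ hp.1, hp.2⟩,
    h.cont_v.comp hcont.continuousOn fun p hp => ⟨hclosed _ hp.1, hp.2⟩,
    fun t ht => (h.reg_space_u t ht).comp O.contDiff.contDiffOn hclosed,
    fun t ht => (h.reg_space_v t ht).comp O.contDiff.contDiffOn hclosed,
    fun x hx t ht => h.reg_time_u _ (hclosed x hx) t ht,
    fun x hx t ht => h.reg_time_v _ (hclosed x hx) t ht, fun x hx t ht => ?_, fun x hx t ht => ?_,
    fun x hx t ht => ?_, fun x hx t ht => ?_, fun x hx => h.init_u _ (hclosed x hx),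
    fun x hx => h.init_v _ (hclosed x hx)⟩
  · rw [lap_comp_linearIsometryEquiv O (f := fun y => u y t) (h.contDiffAt (hopen x hx) ht)]
    exact h.pde_u _ (hopen x hx) t ht
  · rw [lap_comp_linearIsometryEquiv O (f := fun y => v y t) (h.swap.contDiffAt (hopen x hx) ht)]
    exact h.pde_v _ (hopen x hx) t ht
  · rw [← h.bc_u (O x) ((O.norm_map x).trans hx) t ht]
    simp only [normalDeriv, hline]
  · rw [← h.bc_v (O x) ((O.norm_map x).trans hx) t ht]
    simp only [normalDeriv, hline]

theorem eq_of_norm_eq (h : IsClassicalSolution n R T lam₁ lam₂ u v u₀ v₀) (hR : 0 < R)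
    (h₁ : 0 ≤ lam₁) (h₂ : 0 ≤ lam₂) (hu₀ : IsRadiallyMonotone R u₀) (hv₀ : IsRadiallyMonotone R v₀)
    {x y : EuclideanSpace ℝ (Fin n)} (hx : x ∈ closedBall (0 : EuclideanSpace ℝ (Fin n)) R)
    (hxy : ‖x‖ = ‖y‖) {t : ℝ} (ht : t ∈ Ico 0 T) : u x t = u y t ∧ v x t = v y t := by
  set O := Submodule.reflection (Submodule.span ℝ {x - y})ᗮ
  have hO : O x = y := Submodule.reflection_sub hxy
  have hrefl := h.comp_linearIsometryEquiv O
  have hle := h.le_of_initial_le hrefl hR h₁ h₂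
    (fun z hz => (hu₀.eq_of_norm_eq hz (O.norm_map z).symm).le)
    (fun z hz => (hv₀.eq_of_norm_eq hz (O.norm_map z).symm).le) hx ht ht.2
  have hge := hrefl.le_of_initial_le h hR h₁ h₂
    (fun z hz => (hu₀.eq_of_norm_eq hz (O.norm_map z).symm).ge)
    (fun z hz => (hv₀.eq_of_norm_eq hz (O.norm_map z).symm).ge) hx ht ht.2
  simp only [hO] at hle hge
  exact ⟨le_antisymm hle.1 hge.1, le_antisymm hle.2 hge.2⟩

section Doubling

variable {S M K μ s : ℝ} {x y : EuclideanSpace ℝ (Fin n)}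

-- At an interior maximum of `e^{-Kt} (u(x,t) - u(y,t))` one has `Δu(x) ≤ 0 ≤ Δu(y)`.
lemma radialGap_ne_interior (h : IsClassicalSolution n R T lam₁ lam₂ u v u₀ v₀) (h₁ : 0 ≤ lam₁)
    (hS : S < T)
    (hM : ∀ x ∈ closedBall (0 : EuclideanSpace ℝ (Fin n)) R, ∀ t ∈ Icc 0 S, v x t ≤ M)
    (hK : lam₁ * exp M < K) (hμ : 0 < μ) (hs : s ∈ Ioc 0 S) (hxy : ‖x‖ < ‖y‖) (hy : ‖y‖ < R)
    (hle : ∀ p ∈ radialPairs n R, ∀ t ∈ Icc 0 S, u p.1 t - u p.2 t ≤ μ * exp (K * t))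
    (hv : v x s - v y s ≤ μ * exp (K * s)) : u x s - u y s ≠ μ * exp (K * s) := by
  intro heq
  have hsT : s ∈ Ioo 0 T := ⟨hs.1, hs.2.trans_lt hS⟩
  have hpos : 0 < μ * exp (K * s) := by positivity
  have hx_ball : x ∈ ball (0 : EuclideanSpace ℝ (Fin n)) R := mem_ball_zero_iff.2 (hxy.trans hy)
  have hy_ball : y ∈ ball (0 : EuclideanSpace ℝ (Fin n)) R := mem_ball_zero_iff.2 hy
  have hmax : IsMaxOn (fun p => u p.1 s - u p.2 s) (radialPairs n R) (x, y) :=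
    isMaxOn_iff.2 fun p hp => (hle p hp s ⟨hs.1.le, hs.2⟩).trans heq.ge
  have hlap_x := lap_nonpos_of_isLocalMax (h.contDiffAt hx_ball hsT)
    (isLocalMax_fst_of_isMaxOn_radialPairs (f := fun z => u z s) hmax hxy hy.le)
  have hlap_y := lap_nonneg_of_isLocalMin (h.contDiffAt hy_ball hsT)
    (isLocalMin_snd_of_isMaxOn_radialPairs (f := fun z => u z s) hmax hxy hy)
  have hbarrier : HasDerivAt (fun t => μ * exp (K * t)) (μ * (exp (K * s) * (K * 1))) s :=
    ((hasDerivAt_id s).const_mul K).exp.const_mul μ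
  have hderiv := hasDerivAt_nonneg_of_forall_le hs.1
    (((h.hasDerivAt_time hx_ball hsT).sub (h.hasDerivAt_time hy_ball hsT)).sub hbarrier)
    fun t ht => by
      simpa only [Pi.sub_apply, heq, sub_self, sub_nonpos] using
        hle (x, y) ⟨hxy.le, hy.le⟩ t ⟨ht.1, ht.2.trans hs.2⟩
  have hsource : lam₁ * (exp (v x s) - exp (v y s)) ≤ lam₁ * exp M * (μ * exp (K * s)) :=
    (mul_exp_sub_exp_le h₁ le_rfl (hM x (ball_subset_closedBall hx_ball) s ⟨hs.1.le, hs.2⟩)).trans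
      (mul_le_mul_of_nonneg_left (max_le hpos.le hv) (by positivity))
  have hrate : lam₁ * exp M * (μ * exp (K * s)) < K * (μ * exp (K * s)) :=
    mul_lt_mul_of_pos_right hK hpos
  linarith

lemma radialGap_ne (h : IsClassicalSolution n R T lam₁ lam₂ u v u₀ v₀) (hR : 0 < R)
    (h₁ : 0 ≤ lam₁) (hS : S < T)
    (hM : ∀ x ∈ closedBall (0 : EuclideanSpace ℝ (Fin n)) R, ∀ t ∈ Icc 0 S, v x t ≤ M)
    (hK : lam₁ * exp M < K) (hμ : 0 < μ) (hs : s ∈ Ioc 0 S) (hxy : ‖x‖ < ‖y‖) (hy : ‖y‖ ≤ R)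
    (hle : ∀ p ∈ radialPairs n R, ∀ t ∈ Icc 0 S, u p.1 t - u p.2 t ≤ μ * exp (K * t))
    (hv : v x s - v y s ≤ μ * exp (K * s)) : u x s - u y s ≠ μ * exp (K * s) := by
  rcases hy.lt_or_eq with hyR | hyR
  · exact h.radialGap_ne_interior h₁ hS hM hK hμ hs hxy hyR hle hv
  · intro heq
    have hmax : IsMaxOn (fun p => u p.1 s - u p.2 s) (radialPairs n R) (x, y) :=
      isMaxOn_iff.2 fun p hp => (hle p hp s ⟨hs.1.le, hs.2⟩).trans heq.ge
    have hflux := hasDerivAt_line_nonpos_of_isMaxOn_radialPairs (f := fun z => u z s) hmax hxy hR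
      hyR (h.hasDerivAt_normal hyR ⟨hs.1, hs.2.trans_lt hS⟩)
    exact (exp_pos _).not_ge hflux

lemma radialGap_multiplier_nonpos (h : IsClassicalSolution n R T lam₁ lam₂ u v u₀ v₀) (hR : 0 < R)
    (h₁ : 0 ≤ lam₁) (h₂ : 0 ≤ lam₂) (hu₀ : IsRadiallyMonotone R u₀) (hv₀ : IsRadiallyMonotone R v₀)
    (hS : S < T) (hM : ∀ x ∈ closedBall (0 : EuclideanSpace ℝ (Fin n)) R, ∀ t ∈ Icc 0 S,
      u x t ≤ M ∧ v x t ≤ M)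
    (hK₁ : lam₁ * exp M < K) (hK₂ : lam₂ * exp M < K) (hxy : (x, y) ∈ radialPairs n R)
    (hs : s ∈ Icc 0 S) (heq : max (u x s - u y s) (v x s - v y s) = μ * exp (K * s))
    (hle : ∀ p ∈ radialPairs n R, ∀ t ∈ Icc 0 S,
      max (u p.1 t - u p.2 t) (v p.1 t - v p.2 t) ≤ μ * exp (K * t)) : μ ≤ 0 := by
  by_contra! hμ
  have hpos : 0 < max (u x s - u y s) (v x s - v y s) := heq ▸ mul_pos hμ (exp_pos _)
  obtain ⟨hx, hy⟩ := radialPairs_subset hxy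
  have hs₀ : s ∈ Ioc 0 S := by
    refine ⟨hs.1.lt_of_ne fun h₀ => hpos.not_ge ?_, hs.2⟩
    rw [← h₀, h.init_u x hx, h.init_v x hx, h.init_u y hy, h.init_v y hy]
    exact max_le (sub_nonpos.2 (hu₀ x hx y hy hxy.1)) (sub_nonpos.2 (hv₀ x hx y hy hxy.1))
  have hlt : ‖x‖ < ‖y‖ := by
    refine hxy.1.lt_of_ne fun hnorm => hpos.ne' ?_
    have hrad := h.eq_of_norm_eq hR h₁ h₂ hu₀ hv₀ hx hnorm ⟨hs.1, hs.2.trans_lt hS⟩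
    rw [hrad.1, hrad.2, sub_self, sub_self, max_self]
  rcases max_choice (u x s - u y s) (v x s - v y s) with hmax | hmax
  · exact h.radialGap_ne hR h₁ hS (fun z hz r hr => (hM z hz r hr).2) hK₁ hμ hs₀ hlt hxy.2
      (fun p hp t ht => (le_max_left _ _).trans (hle p hp t ht))
      ((le_max_right _ _).trans heq.le) (hmax ▸ heq)
  · exact h.swap.radialGap_ne hR h₂ hS (fun z hz r hr => (hM z hz r hr).1) hK₂ hμ hs₀ hlt hxy.2
      (fun p hp t ht => (le_max_right _ _).trans (hle p hp t ht))
      ((le_max_left _ _).trans heq.le) (hmax ▸ heq)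

end Doubling

lemma continuousOn_radialGap (h : IsClassicalSolution n R T lam₁ lam₂ u v u₀ v₀) {S : ℝ}
    (hS : S < T) : ContinuousOn
      (fun p : (EuclideanSpace ℝ (Fin n) × EuclideanSpace ℝ (Fin n)) × ℝ =>
        u p.1.1 p.2 - u p.1.2 p.2) (radialPairs n R ×ˢ Icc 0 S) := by
  have hu := h.continuousOn_prod_Icc hS
  exact (hu.comp (f := fun p : (EuclideanSpace ℝ (Fin n) × EuclideanSpace ℝ (Fin n)) × ℝ =>
      (p.1.1, p.2)) (by fun_prop) fun p hp => ⟨(radialPairs_subset hp.1).1, hp.2⟩).sub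
    (hu.comp (f := fun p : (EuclideanSpace ℝ (Fin n) × EuclideanSpace ℝ (Fin n)) × ℝ =>
      (p.1.2, p.2)) (by fun_prop) fun p hp => ⟨(radialPairs_subset hp.1).2, hp.2⟩)

theorem isRadiallyMonotone (h : IsClassicalSolution n R T lam₁ lam₂ u v u₀ v₀) (hR : 0 < R)
    (h₁ : 0 < lam₁) (h₂ : 0 < lam₂) (hu₀ : IsRadiallyMonotone R u₀) (hv₀ : IsRadiallyMonotone R v₀)
    {t : ℝ} (ht : t ∈ Ico 0 T) :
    IsRadiallyMonotone R (fun x => u x t) ∧ IsRadiallyMonotone R (fun x => v x t) := by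
  suffices hgap : ∀ p ∈ radialPairs n R, max (u p.1 t - u p.2 t) (v p.1 t - v p.2 t) ≤ 0 by
    have hpair : ∀ x ∈ closedBall (0 : EuclideanSpace ℝ (Fin n)) R,
        ∀ y ∈ closedBall (0 : EuclideanSpace ℝ (Fin n)) R, ‖x‖ ≤ ‖y‖ →
          u x t - u y t ≤ 0 ∧ v x t - v y t ≤ 0 := fun x _ y hy hxy =>
      max_le_iff.1 (hgap (x, y) ⟨hxy, mem_closedBall_zero_iff.1 hy⟩)
    exact ⟨fun x hx y hy hxy => sub_nonpos.1 (hpair x hx y hy hxy).1,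
      fun x hx y hy hxy => sub_nonpos.1 (hpair x hx y hy hxy).2⟩
  intro p hp
  obtain ⟨M, hM⟩ := h.exists_forall_le_and_le ht.2
  set K : ℝ := (lam₁ + lam₂) * exp M
  have hK₁ : lam₁ * exp M < K := mul_lt_mul_of_pos_right (by linarith) (exp_pos M)
  have hK₂ : lam₂ * exp M < K := mul_lt_mul_of_pos_right (by linarith) (exp_pos M)
  obtain ⟨⟨⟨x, y⟩, s⟩, ⟨hxy, hs⟩, μ, heq, hle⟩ := exists_forall_le_mul
    (B := fun q => exp (K * q.2)) ((isCompact_radialPairs (n := n) (R := R)).prod isCompact_Icc)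
    ⟨(p, t), hp, ht.1, le_rfl⟩
    ((h.continuousOn_radialGap ht.2).sup (h.swap.continuousOn_radialGap ht.2))
    (by fun_prop) fun _ _ => exp_pos _
  have hμ : μ ≤ 0 := h.radialGap_multiplier_nonpos hR h₁.le h₂.le hu₀ hv₀ ht.2 hM hK₁ hK₂ hxy hs
    heq fun q hq r hr => hle (q, r) ⟨hq, hr⟩
  exact (hle (p, t) ⟨hp, ht.1, le_rfl⟩).trans (mul_nonpos_of_nonpos_of_nonneg hμ (exp_pos _).le)

lemma shift (h : IsClassicalSolution n R T lam₁ lam₂ u v u₀ v₀) {t₀ : ℝ} (ht₀ : t₀ ∈ Ico 0 T) :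
    IsClassicalSolution n R (T - t₀) lam₁ lam₂ (fun x t => u x (t₀ + t)) (fun x t => v x (t₀ + t))
      (fun x => u x t₀) (fun x => v x t₀) := by
  have hIco : ∀ t ∈ Ico 0 (T - t₀), t₀ + t ∈ Ico 0 T := fun t ht =>
    ⟨add_nonneg ht₀.1 ht.1, by linarith [ht.2]⟩
  have hIoo : ∀ t ∈ Ioo 0 (T - t₀), t₀ + t ∈ Ioo 0 T := fun t ht =>
    ⟨add_pos_of_nonneg_of_pos ht₀.1 ht.1, by linarith [ht.2]⟩
  have hcont : Continuous fun p : EuclideanSpace ℝ (Fin n) × ℝ => (p.1, t₀ + p.2) := by fun_prop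
  have hdiff (f : ℝ → ℝ) (t : ℝ) (hf : DifferentiableAt ℝ f (t₀ + t)) :
      DifferentiableAt ℝ (fun s => f (t₀ + s)) t := hf.comp t (by fun_prop)
  refine ⟨h.cont_u.comp hcont.continuousOn fun p hp => ⟨hp.1, hIco _ hp.2⟩,
    h.cont_v.comp hcont.continuousOn fun p hp => ⟨hp.1, hIco _ hp.2⟩,
    fun t ht => h.reg_space_u _ (hIoo t ht), fun t ht => h.reg_space_v _ (hIoo t ht),
    fun x hx t ht => hdiff _ _ (h.reg_time_u x hx _ (hIoo t ht)),
    fun x hx t ht => hdiff _ _ (h.reg_time_v x hx _ (hIoo t ht)),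
    fun x hx t ht => ?_, fun x hx t ht => ?_,
    fun x hx t ht => h.bc_u x hx _ (hIoo t ht), fun x hx t ht => h.bc_v x hx _ (hIoo t ht),
    fun x _ => by rw [add_zero], fun x _ => by rw [add_zero]⟩
  · rw [deriv_comp_const_add]
    exact h.pde_u x hx _ (hIoo t ht)
  · rw [deriv_comp_const_add]
    exact h.pde_v x hx _ (hIoo t ht)

end IsClassicalSolution

/-! ### Lifting radial profiles to `ℝⁿ` -/

section RadialMean

variable {q : ℝ → ℝ}

/-- The weighted mean `∫₀¹ s^m q(sρ) ds`. If `q(|x|)` is the Laplacian on `ℝ^(m+1)` of a radial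
function, then `ρ` times this mean is its radial derivative. -/
noncomputable def radialMean (m : ℕ) (q : ℝ → ℝ) (ρ : ℝ) : ℝ := ∫ s in (0 : ℝ)..1, s ^ m * q (s * ρ)

lemma continuous_radialMean (m : ℕ) (hq : Continuous q) : Continuous (radialMean m q) := by
  unfold radialMean
  apply intervalIntegral.continuous_parametric_intervalIntegral_of_continuous'
  unfold Function.uncurry
  fun_prop

lemma pow_mul_radialMean (m : ℕ) (q : ℝ → ℝ) (ρ : ℝ) :
    ρ ^ (m + 1) * radialMean m q ρ = ∫ s in (0 : ℝ)..ρ, s ^ m * q s := by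
  have hsubst := intervalIntegral.smul_integral_comp_mul_right (a := 0) (b := 1)
    (fun s : ℝ => s ^ m * q s) ρ
  rw [zero_mul, one_mul, smul_eq_mul] at hsubst
  rw [← hsubst, radialMean, pow_succ', mul_assoc, ← intervalIntegral.integral_const_mul]
  refine congrArg (ρ * ·) (intervalIntegral.integral_congr fun s _ => ?_)
  ring

lemma succ_mul_radialMean_zero (m : ℕ) (q : ℝ → ℝ) : ((m : ℝ) + 1) * radialMean m q 0 = q 0 := by
  have hm : (m : ℝ) + 1 ≠ 0 := by positivity
  simp only [radialMean, mul_zero, intervalIntegral.integral_mul_const, integral_pow, one_pow,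
    ne_eq, Nat.add_eq_zero_iff, one_ne_zero, and_false, not_false_eq_true, zero_pow, sub_zero]
  field_simp

lemma hasDerivAt_radialMean (m : ℕ) (hq : Continuous q) {ρ : ℝ} (hρ : ρ ≠ 0) :
    HasDerivAt (radialMean m q) ((q ρ - (m + 1) * radialMean m q ρ) / ρ) ρ := by
  have hprim : HasDerivAt (fun r => ∫ s in (0 : ℝ)..r, s ^ m * q s) (ρ ^ m * q ρ) ρ :=
    (Continuous.integral_hasStrictDerivAt (by fun_prop) 0 ρ).hasDerivAt
  refine ((hprim.div (hasDerivAt_pow (m + 1) ρ) (pow_ne_zero _ hρ)).congr_of_eventuallyEq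
    ?_).congr_deriv ?_
  · filter_upwards [isOpen_ne.mem_nhds hρ] with r hr
    rw [Pi.div_apply, ← pow_mul_radialMean, mul_div_cancel_left₀ _ (pow_ne_zero _ hr)]
  · rw [← pow_mul_radialMean, Nat.add_sub_cancel]
    push_cast
    field_simp
    ring

end RadialMean

section RadialLift

variable {V : Type*} [NormedAddCommGroup V] {q : ℝ → ℝ}

/-- The radial function with value `c` at the origin whose Laplacian on `ℝ^(m+1)` is `q(|x|)`. The
variable `|x|²` is used so that differentiability at the origin is visible. -/
noncomputable def radialLift (m : ℕ) (c : ℝ) (q : ℝ → ℝ) (x : V) : ℝ :=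
  c + (1 / 2) * ∫ s in (0 : ℝ)..‖x‖ ^ 2, radialMean m q (√s)

lemma radialLift_eq_add_integral (m : ℕ) (c : ℝ) (hq : Continuous q) (x : V) :
    radialLift m c q x = c + ∫ s in (0 : ℝ)..‖x‖, s * radialMean m q s := by
  have hsubst := intervalIntegral.integral_comp_mul_deriv (a := 0) (b := ‖x‖)
    (f := fun s : ℝ => s ^ 2) (f' := fun s => 2 * s) (g := fun s => radialMean m q (√s))
    (fun s _ => by simpa using hasDerivAt_pow 2 s) (by fun_prop)
    ((continuous_radialMean m hq).comp Real.continuous_sqrt)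
  rw [zero_pow two_ne_zero] at hsubst
  rw [radialLift, ← hsubst, ← intervalIntegral.integral_const_mul]
  refine congrArg (c + ·) (intervalIntegral.integral_congr fun s hs => ?_)
  rw [uIcc_of_le (norm_nonneg x)] at hs
  simp only [Function.comp_apply, Real.sqrt_sq hs.1]
  ring

variable [InnerProductSpace ℝ V]

lemma hasFDerivAt_radialLift (m : ℕ) (c : ℝ) (hq : Continuous q) (x : V) :
    HasFDerivAt (radialLift m c q) (innerSL ℝ (radialMean m q ‖x‖ • x)) x := by
  have hprim := (((continuous_radialMean m hq).comp
    Real.continuous_sqrt).integral_hasStrictDerivAt 0 (‖x‖ ^ 2)).hasDerivAt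
  refine (((hprim.comp_hasFDerivAt x (hasStrictFDerivAt_norm_sq x).hasFDerivAt).const_mul
    (1 / 2)).const_add c).congr_fderiv ?_
  ext y
  simp only [Function.comp_apply, Real.sqrt_sq (norm_nonneg x), map_smul, smul_apply, smul_eq_mul,
    nsmul_eq_mul, Nat.cast_ofNat]
  ring

/-- The derivative at `x` of the vector field `x ↦ a(|x|) x` with `a = radialMean m q`, which is the
gradient of `radialLift m c q`. -/
noncomputable def radialHessian (m : ℕ) (q : ℝ → ℝ) (x : V) : V →L[ℝ] V :=
  radialMean m q ‖x‖ • ContinuousLinearMap.id ℝ V +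
    ((q ‖x‖ - (m + 1) * radialMean m q ‖x‖) / ‖x‖ ^ 2) • (innerSL ℝ x).smulRight x

lemma radialHessian_apply (m : ℕ) (q : ℝ → ℝ) (x y : V) :
    radialHessian m q x y = radialMean m q ‖x‖ • y +
      ((q ‖x‖ - (m + 1) * radialMean m q ‖x‖) / ‖x‖ ^ 2) • inner ℝ x y • x := rfl

lemma hasFDerivAt_radialMean_smul_zero (m : ℕ) (hq : Continuous q) :
    HasFDerivAt (fun x : V => radialMean m q ‖x‖ • x) (radialHessian m q 0) 0 := by
  have hlim : Tendsto (fun h : V => radialMean m q ‖h‖ - radialMean m q 0) (𝓝 0) (𝓝 0) := by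
    have hcont := ((continuous_radialMean m hq).comp (continuous_norm (E := V))).tendsto 0
    simpa using hcont.sub_const (radialMean m q 0)
  rw [hasFDerivAt_iff_isLittleO_nhds_zero]
  have hsmall := ((Asymptotics.isLittleO_one_iff ℝ).2 hlim).smul_isBigO
    (Asymptotics.isBigO_refl (fun h : V => h) (𝓝 0))
  simp only [one_smul] at hsmall
  refine hsmall.congr_left fun h => ?_
  simp [radialHessian_apply, sub_smul]

lemma hasFDerivAt_norm {x : V} (hx : x ≠ 0) :
    HasFDerivAt (fun x : V => ‖x‖) (‖x‖⁻¹ • innerSL ℝ x) x := by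
  have hsqrt := (hasStrictFDerivAt_norm_sq x).hasFDerivAt.sqrt
    (pow_ne_zero 2 (norm_ne_zero_iff.2 hx))
  simp only [Real.sqrt_sq (norm_nonneg _)] at hsqrt
  refine hsqrt.congr_fderiv ?_
  ext y
  simp only [smul_apply, smul_eq_mul, nsmul_eq_mul, Nat.cast_ofNat]
  field_simp

lemma hasFDerivAt_radialMean_smul (m : ℕ) (hq : Continuous q) (x : V) :
    HasFDerivAt (fun x : V => radialMean m q ‖x‖ • x) (radialHessian m q x) x := by
  rcases eq_or_ne x 0 with rfl | hx
  · exact hasFDerivAt_radialMean_smul_zero m hq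
  have hmean := (hasDerivAt_radialMean m hq (norm_ne_zero_iff.2 hx)).comp_hasFDerivAt x
    (hasFDerivAt_norm hx)
  refine (hmean.smul (hasFDerivAt_id x)).congr_fderiv ?_
  ext y
  have hnorm : ‖x‖ ≠ 0 := norm_ne_zero_iff.2 hx
  simp only [radialHessian_apply, add_apply, smul_apply,
    ContinuousLinearMap.smulRight_apply, ContinuousLinearMap.id_apply, Function.comp_apply,
    innerSL_apply_apply, smul_eq_mul, smul_smul, id_eq]
  congr 2
  field_simp

lemma continuous_innerSL_smulRight : Continuous fun x : V => (innerSL ℝ x).smulRight x :=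
  (ContinuousLinearMap.smulRightL ℝ V V).continuous₂.comp
    ((innerSL ℝ).continuous.prodMk continuous_id)

lemma continuous_radialHessian (m : ℕ) (hq : Continuous q) :
    Continuous (radialHessian (V := V) m q) := by
  have hmean : Continuous fun x : V => radialMean m q ‖x‖ :=
    (continuous_radialMean m hq).comp continuous_norm
  have hnum : Continuous fun x : V => q ‖x‖ - (m + 1) * radialMean m q ‖x‖ := by fun_prop
  refine (hmean.smul continuous_const).add (continuous_iff_continuousAt.2 fun x => ?_)
  rcases eq_or_ne x 0 with rfl | hx
  · rw [ContinuousAt, map_zero, ContinuousLinearMap.smulRight_zero, smul_zero]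
    have hlim : Tendsto (fun x : V => |q ‖x‖ - (m + 1) * radialMean m q ‖x‖|) (𝓝 0) (𝓝 0) := by
      simpa [succ_mul_radialMean_zero] using hnum.abs.tendsto 0
    refine squeeze_zero_norm (fun x => ?_) hlim
    rw [norm_smul, ContinuousLinearMap.norm_smulRight_apply, innerSL_apply_norm, norm_div,
      norm_pow, norm_norm, ← sq, Real.norm_eq_abs]
    rcases eq_or_ne (‖x‖ ^ 2) 0 with h | h
    · rw [h, mul_zero]
      exact abs_nonneg _
    · rw [div_mul_cancel₀ _ h]
  · exact (hnum.continuousAt.div (by fun_prop) (pow_ne_zero _ (norm_ne_zero_iff.2 hx))).smul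
      continuous_innerSL_smulRight.continuousAt

lemma contDiff_radialLift (m : ℕ) (c : ℝ) (hq : Continuous q) :
    ContDiff ℝ 2 (radialLift (V := V) m c q) := by
  have hgrad : ContDiff ℝ 1 (fun x : V => radialMean m q ‖x‖ • x) :=
    contDiff_one_iff_hasFDerivAt.2
      ⟨_, continuous_radialHessian m hq, hasFDerivAt_radialMean_smul m hq⟩
  have htwo : (2 : WithTop ℕ∞) = (1 : ℕ) + 1 := by norm_num
  rw [htwo, contDiff_succ_iff_hasFDerivAt]
  exact ⟨_, (innerSL ℝ).contDiff.comp hgrad, hasFDerivAt_radialLift m c hq⟩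

lemma fderiv_fderiv_radialLift (m : ℕ) (c : ℝ) (hq : Continuous q) (x y : V) :
    fderiv ℝ (fderiv ℝ (radialLift m c q)) x y = innerSL ℝ (radialHessian m q x y) := by
  have hgrad : fderiv ℝ (radialLift (V := V) m c q) =
      fun x => innerSL ℝ (radialMean m q ‖x‖ • x) :=
    funext fun x => (hasFDerivAt_radialLift m c hq x).fderiv
  have hcomp := (innerSL ℝ : V →L[ℝ] _).hasFDerivAt.comp x (hasFDerivAt_radialMean_smul m hq x)
  rw [hgrad]
  exact congrArg (fun L => L y) hcomp.fderiv

lemma lap_radialLift (m : ℕ) (c : ℝ) (hq : Continuous q) (x : EuclideanSpace ℝ (Fin (m + 1))) :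
    lap (radialLift m c q) x = q ‖x‖ := by
  have hterm (i : Fin (m + 1)) :
      innerSL ℝ (radialHessian m q x (EuclideanSpace.basisFun (Fin (m + 1)) ℝ i))
        (EuclideanSpace.basisFun (Fin (m + 1)) ℝ i) = radialMean m q ‖x‖ +
          (q ‖x‖ - (m + 1) * radialMean m q ‖x‖) / ‖x‖ ^ 2 * x i ^ 2 := by
    simp [radialHessian_apply, EuclideanSpace.inner_single_right, sq]
  have hsum : ∑ i, x i ^ 2 = ‖x‖ ^ 2 := by
    simp only [EuclideanSpace.norm_sq_eq, Real.norm_eq_abs, sq_abs]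
  rw [lap_eq_sum_fderiv (contDiff_radialLift m c hq).contDiffAt (EuclideanSpace.basisFun _ ℝ)]
  simp only [fderiv_fderiv_radialLift m c hq, hterm, Finset.sum_add_distrib, ← Finset.mul_sum, hsum,
    Finset.sum_const, Finset.card_univ, Fintype.card_fin, nsmul_eq_mul, Nat.cast_add, Nat.cast_one]
  rcases eq_or_ne x 0 with rfl | hx
  · simp [succ_mul_radialMean_zero]
  · have hnorm : ‖x‖ ≠ 0 := norm_ne_zero_iff.2 hx
    field_simp
    ring

lemma normalDeriv_radialLift {n : ℕ} (m : ℕ) (c : ℝ) (hq : Continuous q) {R : ℝ} (hR : 0 < R)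
    {x : EuclideanSpace ℝ (Fin n)} (hx : ‖x‖ = R) :
    normalDeriv R (radialLift m c q) x = R * radialMean m q R := by
  have hline : HasDerivAt (fun s : ℝ => x + s • (R⁻¹ • x)) (R⁻¹ • x) 0 :=
    (((hasDerivAt_id (0 : ℝ)).smul_const (R⁻¹ • x)).const_add x).congr_deriv (one_smul ℝ _)
  have hlift : HasFDerivAt (radialLift m c q) (innerSL ℝ (radialMean m q ‖x‖ • x))
      (x + (0 : ℝ) • (R⁻¹ • x)) := by
    rw [zero_smul, add_zero]
    exact hasFDerivAt_radialLift m c hq x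
  refine (hlift.comp_hasDerivAt 0 hline).deriv.trans ?_
  rw [innerSL_apply_apply, real_inner_smul_left, real_inner_smul_right, real_inner_self_eq_norm_sq,
    hx]
  field_simp

end RadialLift

section ProfileLift

variable {n m : ℕ} {R b : ℝ} {U q : Profile}

lemma norm_div_mem_Icc (hR : 0 < R) {x : EuclideanSpace ℝ (Fin n)} (hx : x ∈ closedBall 0 R) :
    ‖x‖ / R ∈ Icc (0 : ℝ) 1 :=
  ⟨div_nonneg (norm_nonneg x) hR.le, (div_le_one hR).2 (mem_closedBall_zero_iff.1 hx)⟩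

/-- The radial function with profile `U` on the ball of radius `R`, when `q` is the profile of its
Laplacian. It is `C²` on all of `ℝⁿ`, so that the two-sided normal derivative on the sphere makes
sense. -/
noncomputable def profileLift (m : ℕ) (R : ℝ) (U q : Profile) : EuclideanSpace ℝ (Fin n) → ℝ :=
  radialLift m (U 0) fun ρ => unitExtend q (ρ / R)

lemma continuous_unitExtend_div (q : Profile) (R : ℝ) : Continuous fun ρ => unitExtend q (ρ / R) :=
  (map_continuous (unitExtend q)).comp (continuous_id.div_const R)

lemma radialMean_unitExtend_div (m : ℕ) (hR : 0 < R) (q : Profile) {s : ℝ}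
    (hs : s ∈ Icc (0 : ℝ) 1) : radialMean m (fun ρ => unitExtend q (ρ / R)) (s * R) =
      weightedMean m q ⟨s, hs⟩ := by
  rw [radialMean, weightedMean_apply]
  refine intervalIntegral.integral_congr fun σ _ => ?_
  simp only [smul_eq_mul, ← mul_assoc, mul_div_cancel_right₀ _ hR.ne']

lemma contDiff_profileLift : ContDiff ℝ 2 (profileLift (n := n) m R U q) :=
  contDiff_radialLift m _ (continuous_unitExtend_div q R)

lemma lap_profileLift (x : EuclideanSpace ℝ (Fin (m + 1))) :
    lap (profileLift m R U q) x = unitExtend q (‖x‖ / R) :=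
  lap_radialLift m _ (continuous_unitExtend_div q R) x

lemma HasRadialLaplacian.profileLift_eq (hR : 0 < R) (h : HasRadialLaplacian m R b U q)
    {x : EuclideanSpace ℝ (Fin n)} (hx : x ∈ closedBall 0 R) :
    profileLift m R U q x = unitExtend U (‖x‖ / R) := by
  have hmem := norm_div_mem_Icc hR hx
  have hpot := congrArg (fun W : Profile => W ⟨‖x‖ / R, hmem⟩) h.1
  simp only [recenter_apply, ContinuousMap.sub_apply, ContinuousMap.smul_apply,
    ContinuousMap.one_apply, smul_eq_mul, mul_one, radialPotential_apply] at hpot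
  have hsubst := intervalIntegral.smul_integral_comp_mul_right (a := 0) (b := ‖x‖ / R)
    (fun s : ℝ => s * radialMean m (fun ρ => unitExtend q (ρ / R)) s) R
  rw [zero_mul, div_mul_cancel₀ _ hR.ne', smul_eq_mul,
    ← intervalIntegral.integral_const_mul] at hsubst
  rw [unitExtend_of_mem U hmem, sub_eq_iff_eq_add'.1 hpot, profileLift,
    radialLift_eq_add_integral m _ (continuous_unitExtend_div q R), ← hsubst,
    ← intervalIntegral.integral_const_mul]
  refine congrArg (U 0 + ·) (intervalIntegral.integral_congr fun s hs => ?_)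
  rw [uIcc_of_le hmem.1] at hs
  have hs' : s ∈ Icc (0 : ℝ) 1 := ⟨hs.1, hs.2.trans hmem.2⟩
  rw [unitExtend_of_mem _ hs', radialMean_unitExtend_div m hR q hs']
  ring

lemma HasRadialLaplacian.normalDeriv_profileLift (hR : 0 < R) (h : HasRadialLaplacian m R b U q)
    {x : EuclideanSpace ℝ (Fin n)} (hx : ‖x‖ = R) : normalDeriv R (profileLift m R U q) x = b := by
  rw [profileLift, normalDeriv_radialLift m _ (continuous_unitExtend_div q R) hR hx, ← h.2,
    boundaryFlux_apply]
  have hmean := radialMean_unitExtend_div m hR q (right_mem_Icc.2 zero_le_one)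
  rw [one_mul] at hmean
  rw [hmean]
  rfl

end ProfileLift

section EvolutionLift

variable {n m : ℕ} {R τ : ℝ} {U g : Profile} {f u p w : Evolution}

/-- The time `t ∈ [0,τ]` rescaled to the unit interval, with other times clamped. -/
noncomputable def clampedTime (τ t : ℝ) : unitInterval := projIcc 0 1 zero_le_one (t / τ)

lemma continuous_clampedTime (τ : ℝ) : Continuous (clampedTime τ) :=
  continuous_projIcc.comp (continuous_id.div_const τ)

lemma clampedTime_zero (τ : ℝ) : clampedTime τ 0 = 0 := by
  rw [clampedTime, zero_div, projIcc_left]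
  rfl

lemma coe_clampedTime (hτ : 0 < τ) {t : ℝ} (ht : t ∈ Icc 0 τ) : (clampedTime τ t : ℝ) = t / τ := by
  rw [clampedTime, projIcc_of_mem _ ⟨div_nonneg ht.1 hτ.le, (div_le_one hτ).2 ht.2⟩]

/-- The function on `ℝⁿ × ℝ` whose slice at time `t ∈ [0,τ]` has profile `u(t/τ)` and Laplacian
profile `p(t/τ)` on the ball of radius `R`. -/
noncomputable def evolutionLift (m : ℕ) (R τ : ℝ) (u p : Evolution) (x : EuclideanSpace ℝ (Fin n))
    (t : ℝ) : ℝ :=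
  profileLift m R (u (clampedTime τ t)) (p (clampedTime τ t)) x

lemma contDiff_evolutionLift (t : ℝ) :
    ContDiff ℝ 2 (fun x : EuclideanSpace ℝ (Fin n) => evolutionLift m R τ u p x t) :=
  contDiff_profileLift

lemma lap_evolutionLift (x : EuclideanSpace ℝ (Fin (m + 1))) (t : ℝ) :
    lap (fun y => evolutionLift m R τ u p y t) x = unitExtend (p (clampedTime τ t)) (‖x‖ / R) :=
  lap_profileLift x

namespace IsStrictHeatSolution

variable {x : EuclideanSpace ℝ (Fin n)}

lemma evolutionLift_eq (hR : 0 < R) (h : IsStrictHeatSolution m R τ (U, f, g) u w)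
    (hx : x ∈ closedBall 0 R) (t : ℝ) :
    evolutionLift m R τ u (w - f) x t = unitExtend (u (clampedTime τ t)) (‖x‖ / R) :=
  (h.space_eq (clampedTime τ t)).profileLift_eq hR hx

lemma evolutionLift_zero (hR : 0 < R) (h : IsStrictHeatSolution m R τ (U, f, g) u w)
    (hx : x ∈ closedBall 0 R) :
    evolutionLift m R τ u (w - f) x 0 = unitExtend U (‖x‖ / R) := by
  rw [h.evolutionLift_eq hR hx, clampedTime_zero, h.time_eq 0, timeIntegral_apply]
  simp

lemma normalDeriv_evolutionLift (hR : 0 < R) (h : IsStrictHeatSolution m R τ (U, f, g) u w)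
    (hx : ‖x‖ = R) (t : ℝ) :
    normalDeriv R (fun y => evolutionLift m R τ u (w - f) y t) x = g (clampedTime τ t) :=
  (h.space_eq (clampedTime τ t)).normalDeriv_profileLift hR hx

lemma hasDerivAt_evolutionLift (hR : 0 < R) (hτ : 0 < τ)
    (h : IsStrictHeatSolution m R τ (U, f, g) u w)
    (hx : x ∈ closedBall 0 R) {t : ℝ} (ht : t ∈ Ioo 0 τ) :
    HasDerivAt (evolutionLift m R τ u (w - f) x) (unitExtend (w (clampedTime τ t)) (‖x‖ / R))
      t := by
  have hmem := norm_div_mem_Icc hR hx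
  have hprim := hasDerivAt_timeIntegral_apply τ w ⟨‖x‖ / R, hmem⟩ (clampedTime τ t)
  rw [coe_clampedTime hτ (Ioo_subset_Icc_self ht)] at hprim
  have hcomp := (hprim.comp t ((hasDerivAt_id t).div_const τ)).const_add (U ⟨‖x‖ / R, hmem⟩)
  rw [unitExtend_of_mem _ hmem]
  refine (hcomp.congr_of_eventuallyEq ?_).congr_deriv ?_
  · filter_upwards [isOpen_Ioo.mem_nhds ht] with s hs
    rw [h.evolutionLift_eq hR hx, unitExtend_of_mem _ hmem, h.time_eq, ContinuousMap.add_apply,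
      timeIntegral_apply, coe_clampedTime hτ (Ioo_subset_Icc_self hs)]
    rfl
  · rw [mul_one_div, mul_div_cancel_left₀ _ hτ.ne']

lemma continuousOn_evolutionLift (hR : 0 < R) (h : IsStrictHeatSolution m R τ (U, f, g) u w)
    (s : Set ℝ) :
    ContinuousOn (fun p : EuclideanSpace ℝ (Fin n) × ℝ =>
      evolutionLift m R τ u (w - f) p.1 p.2) (closedBall 0 R ×ˢ s) := by
  have htime : Continuous fun p : EuclideanSpace ℝ (Fin n) × ℝ => u (clampedTime τ p.2) :=
    u.continuous.comp ((continuous_clampedTime τ).comp continuous_snd)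
  have hradius : Continuous fun p : EuclideanSpace ℝ (Fin n) × ℝ =>
      projIcc (0 : ℝ) 1 zero_le_one (‖p.1‖ / R) := continuous_projIcc.comp (by fun_prop)
  refine (continuous_eval.comp (htime.prodMk hradius)).continuousOn.congr ?_
  rintro ⟨x, t⟩ ⟨hx, -⟩
  exact h.evolutionLift_eq hR hx t

end IsStrictHeatSolution

end EvolutionLift

/-! ### Local existence on the ball -/

namespace IsStrictHeatSolution

variable {n m : ℕ} {R τ lam lam₁ lam₂ : ℝ} {U V : Profile} {u v w z p : Evolution}

lemma deriv_evolutionLift_eq {x : EuclideanSpace ℝ (Fin (m + 1))} {t : ℝ} (hR : 0 < R) (hτ : 0 < τ)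
    (hu : IsStrictHeatSolution m R τ (U, lam • expEvolution v, traceAt 1 (expEvolution v)) u w)
    (hv : evolutionLift m R τ v p x t = unitExtend (v (clampedTime τ t)) (‖x‖ / R))
    (hx : x ∈ closedBall 0 R) (ht : t ∈ Ioo 0 τ) :
    deriv (evolutionLift m R τ u (w - lam • expEvolution v) x) t =
      lap (fun y => evolutionLift m R τ u (w - lam • expEvolution v) y t) x +
        lam * Real.exp (evolutionLift m R τ v p x t) := by
  rw [(hu.hasDerivAt_evolutionLift hR hτ hx ht).deriv, lap_evolutionLift, hv]
  exact (sub_add_cancel _ _).symm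

lemma normalDeriv_evolutionLift_eq {x : EuclideanSpace ℝ (Fin n)} {t : ℝ} (hR : 0 < R)
    (hu : IsStrictHeatSolution m R τ (U, lam • expEvolution v, traceAt 1 (expEvolution v)) u w)
    (hv : evolutionLift m R τ v p x t = unitExtend (v (clampedTime τ t)) (‖x‖ / R))
    (hx : ‖x‖ = R) :
    normalDeriv R (fun y => evolutionLift m R τ u (w - lam • expEvolution v) y t) x =
      Real.exp (evolutionLift m R τ v p x t) := by
  rw [hv, hx, div_self hR.ne', unitExtend_of_mem _ (right_mem_Icc.2 zero_le_one)]
  exact hu.normalDeriv_evolutionLift hR hx t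

lemma isClassicalSolution_evolutionLift (hR : 0 < R) (hτ : 0 < τ)
    (hu : IsStrictHeatSolution m R τ (U, lam₁ • expEvolution v, traceAt 1 (expEvolution v)) u w)
    (hv : IsStrictHeatSolution m R τ (V, lam₂ • expEvolution u, traceAt 1 (expEvolution u)) v z) :
    IsClassicalSolution (m + 1) R τ lam₁ lam₂
      (evolutionLift m R τ u (w - lam₁ • expEvolution v))
      (evolutionLift m R τ v (z - lam₂ • expEvolution u))
      (fun x => unitExtend U (‖x‖ / R)) (fun x => unitExtend V (‖x‖ / R)) where
  cont_u := hu.continuousOn_evolutionLift hR _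
  cont_v := hv.continuousOn_evolutionLift hR _
  reg_space_u t _ := (contDiff_evolutionLift t).contDiffOn
  reg_space_v t _ := (contDiff_evolutionLift t).contDiffOn
  reg_time_u _ hx _ ht := (hu.hasDerivAt_evolutionLift hR hτ hx ht).differentiableAt
  reg_time_v _ hx _ ht := (hv.hasDerivAt_evolutionLift hR hτ hx ht).differentiableAt
  pde_u _ hx t ht := hu.deriv_evolutionLift_eq hR hτ
    (hv.evolutionLift_eq hR (ball_subset_closedBall hx) t) (ball_subset_closedBall hx) ht
  pde_v _ hx t ht := hv.deriv_evolutionLift_eq hR hτ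
    (hu.evolutionLift_eq hR (ball_subset_closedBall hx) t) (ball_subset_closedBall hx) ht
  bc_u _ hx t _ := hu.normalDeriv_evolutionLift_eq hR
    (hv.evolutionLift_eq hR (mem_closedBall_zero_iff.2 hx.le) t) hx
  bc_v _ hx t _ := hv.normalDeriv_evolutionLift_eq hR
    (hu.evolutionLift_eq hR (mem_closedBall_zero_iff.2 hx.le) t) hx
  init_u _ hx := hu.evolutionLift_zero hR hx
  init_v _ hx := hv.evolutionLift_zero hR hx

end IsStrictHeatSolution

lemma exists_isClassicalSolution_of_norm_le (m : ℕ) {R lam₁ lam₂ : ℝ} (hR : 0 < R) (h₁ : 0 < lam₁)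
    (h₂ : 0 < lam₂) (M : ℝ) :
    ∃ τ, 0 < τ ∧ ∀ U V q p : Profile, ‖U‖ ≤ M → ‖V‖ ≤ M →
      HasRadialLaplacian m R (Real.exp (V 1)) U q → HasRadialLaplacian m R (Real.exp (U 1)) V p →
      ∃ u v, IsClassicalSolution (m + 1) R τ lam₁ lam₂ u v
        (fun x => unitExtend U (‖x‖ / R)) (fun x => unitExtend V (‖x‖ / R)) := by
  obtain ⟨τ, hτ, hsol⟩ := exists_radial_solution m hR h₁ h₂ M
  refine ⟨τ, hτ, fun U V q p hU hV hUq hVp => ?_⟩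
  obtain ⟨u, v, w, z, hu, hv⟩ := hsol U V q p hU hV hUq hVp
  exact ⟨_, _, hu.isClassicalSolution_evolutionLift hR hτ hv⟩

/-! ### Radial `C²` functions as one-dimensional data -/

lemma weightedMean_add_smul_weightedMean_zero (m : ℕ) (g : Profile) :
    weightedMean m (g + (m : ℝ) • weightedMean 0 g) = weightedMean 0 g := by
  let L : Profile →L[ℝ] Profile :=
    (weightedMean m).comp (ContinuousLinearMap.id ℝ Profile + (m : ℝ) • weightedMean 0) -
      weightedMean 0
  suffices hg : g ∈ L.ker from sub_eq_zero.1 (LinearMap.mem_ker.1 hg)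
  refine mem_of_forall_pow_smul_mem L.isClosed_ker (fun j b => ?_) g
  have hmonomial : (⟨fun t => (t : ℝ) ^ j • b, by fun_prop⟩ : Profile) = b • powProfile j := by
    ext t
    simp [powProfile_apply, mul_comm]
  rw [hmonomial]
  refine Submodule.smul_mem _ _ (LinearMap.mem_ker.2 ?_)
  change weightedMean m (powProfile j + (m : ℝ) • weightedMean 0 (powProfile j)) -
    weightedMean 0 (powProfile j) = 0
  rw [map_add, map_smul, weightedMean_powProfile 0 j, map_smul, weightedMean_powProfile,
    smul_smul, smul_smul, ← add_smul, ← sub_smul]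
  convert zero_smul ℝ (powProfile j)
  push_cast
  field_simp
  ring

section ProfileData

variable {m : ℕ} {R b : ℝ} {F : ℝ → ℝ} {U g h : Profile}

lemma hasRadialLaplacian_of_forall_eq_integral (m : ℕ) (hR : 0 < R)
    (hh : ∀ r : unitInterval, h r = ∫ s in (0 : ℝ)..r, unitExtend g s)
    (hU : ∀ r : unitInterval, U r = U 0 + ∫ s in (0 : ℝ)..r, unitExtend h s) :
    HasRadialLaplacian m R (h 1 / R) U ((R ^ 2)⁻¹ • (g + (m : ℝ) • weightedMean 0 g)) := by
  have hmul (r : unitInterval) : r * weightedMean 0 g r = h r := by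
    simpa [← hh] using pow_smul_weightedMean 0 g r
  have hmean : weightedMean m ((R ^ 2)⁻¹ • (g + (m : ℝ) • weightedMean 0 g)) =
      (R ^ 2)⁻¹ • weightedMean 0 g := by
    rw [map_smul, weightedMean_add_smul_weightedMean_zero]
  refine ⟨?_, ?_⟩
  · ext r
    rw [radialPotential_apply, hmean, recenter_apply, ContinuousMap.sub_apply,
      ContinuousMap.smul_apply, ContinuousMap.one_apply, smul_eq_mul, mul_one, hU,
      add_sub_cancel_left, ← intervalIntegral.integral_const_mul]
    refine intervalIntegral.integral_congr fun s hs => ?_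
    rw [uIcc_of_le r.2.1] at hs
    have hs' : s ∈ Icc (0 : ℝ) 1 := ⟨hs.1, hs.2.trans r.2.2⟩
    simp only [unitExtend_of_mem _ hs', ← hmul ⟨s, hs'⟩, ContinuousMap.smul_apply, smul_eq_mul]
    field_simp
  · rw [boundaryFlux_apply, hmean, ← hmul 1, ContinuousMap.smul_apply, smul_eq_mul,
      Set.Icc.coe_one, one_mul]
    field_simp

lemma integral_unitExtend_eq_sub (hF : ContinuousOn F (Icc 0 1))
    (hderiv : ∀ r ∈ Ioo (0 : ℝ) 1, HasDerivAt F (unitExtend g r) r) (r : unitInterval) :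
    ∫ s in (0 : ℝ)..r, unitExtend g s = F r - F 0 :=
  intervalIntegral.integral_eq_sub_of_hasDerivAt_of_le r.2.1
    (hF.mono (Icc_subset_Icc_right r.2.2)) (fun s hs => hderiv s ⟨hs.1, hs.2.trans_le r.2.2⟩)
    ((map_continuous (unitExtend g)).intervalIntegrable _ _)

lemma deriv_zero_of_even (heven : ∀ r ∈ Icc (-1 : ℝ) 1, F (-r) = F r) : deriv F 0 = 0 := by
  have hcongr : (fun r => F (-r)) =ᶠ[𝓝 0] F := by
    filter_upwards [Icc_mem_nhds (neg_one_lt_zero (R := ℝ)) one_pos] with r hr using heven r hr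
  have hneg := deriv_comp_neg F 0
  rw [hcongr.deriv_eq, neg_zero] at hneg
  linarith

lemma exists_hasRadialLaplacian_of_contDiffOn (m : ℕ) (hR : 0 < R)
    (hF : ContDiffOn ℝ 2 F (Icc (-1) 1)) (heven : ∀ r ∈ Icc (-1 : ℝ) 1, F (-r) = F r)
    (hb : HasDerivAt F (R * b) 1) (hU : ∀ r : unitInterval, U r = F r) :
    ∃ q, HasRadialLaplacian m R b U q := by
  set F' := derivWithin F (Icc (-1) 1)
  have hs : UniqueDiffOn ℝ (Icc (-1 : ℝ) 1) := uniqueDiffOn_Icc (by norm_num)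
  have hF' : ContDiffOn ℝ 1 F' (Icc (-1) 1) := hF.derivWithin hs (by norm_num)
  have hF'' : ContinuousOn (derivWithin F' (Icc (-1) 1)) (Icc (-1) 1) :=
    hF'.continuousOn_derivWithin hs le_rfl
  have hsub : Icc (0 : ℝ) 1 ⊆ Icc (-1) 1 := Icc_subset_Icc_left (by norm_num)
  have hderiv {G : ℝ → ℝ} (hG : DifferentiableOn ℝ G (Icc (-1) 1)) {r : ℝ} (hr : r ∈ Ico 0 1) :
      HasDerivAt G (derivWithin G (Icc (-1) 1) r) r :=
    (hG r (hsub (Ico_subset_Icc_self hr))).hasDerivWithinAt.hasDerivAt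
      (Icc_mem_nhds (by linarith [hr.1]) hr.2)
  have hF'0 : F' 0 = 0 := (hderiv (hF.differentiableOn two_ne_zero) (by simp)).deriv.symm.trans
    (deriv_zero_of_even heven)
  have hF'1 : F' 1 = R * b := hb.hasDerivWithinAt.derivWithin (hs 1 (by simp))
  let h : Profile := ⟨fun r => F' r,
    hF'.continuousOn.comp_continuous continuous_subtype_val fun r => hsub r.2⟩
  let g : Profile := ⟨fun r => derivWithin F' (Icc (-1) 1) r,
    hF''.comp_continuous continuous_subtype_val fun r => hsub r.2⟩
  have hintg (r : unitInterval) : h r = ∫ s in (0 : ℝ)..r, unitExtend g s := by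
    rw [integral_unitExtend_eq_sub (hF'.continuousOn.mono hsub) (fun s hs => ?_), hF'0, sub_zero]
    · rfl
    · rw [unitExtend_of_mem _ (Ioo_subset_Icc_self hs)]
      exact hderiv (hF'.differentiableOn one_ne_zero) (Ioo_subset_Ico_self hs)
  have hinth (r : unitInterval) : U r = U 0 + ∫ s in (0 : ℝ)..r, unitExtend h s := by
    rw [integral_unitExtend_eq_sub (hF.continuousOn.mono hsub) (fun s hs => ?_), hU, hU,
      Set.Icc.coe_zero, add_sub_cancel]
    rw [unitExtend_of_mem _ (Ioo_subset_Icc_self hs)]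
    exact hderiv (hF.differentiableOn two_ne_zero) (Ioo_subset_Ico_self hs)
  have hlap := hasRadialLaplacian_of_forall_eq_integral m hR hintg hinth
  have hflux : h 1 / R = b := (congrArg (· / R) hF'1).trans (mul_div_cancel_left₀ b hR.ne')
  exact ⟨_, hflux ▸ hlap⟩

end ProfileData

section RadialData

variable {m : ℕ} {R b : ℝ} {f : EuclideanSpace ℝ (Fin (m + 1)) → ℝ}
  {e : EuclideanSpace ℝ (Fin (m + 1))}

lemma smul_mem_closedBall_of_mem_Icc (hR : 0 < R) (he : ‖e‖ = 1) {r : ℝ} (hr : r ∈ Icc (-1) 1) :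
    (r * R) • e ∈ closedBall 0 R := by
  rw [mem_closedBall_zero_iff, norm_smul, he, mul_one, Real.norm_eq_abs, abs_mul, abs_of_pos hR]
  exact mul_le_of_le_one_left hR.le (abs_le.2 hr)

lemma hasDerivAt_ray_of_normal (hR : 0 < R)
    (hb : HasDerivAt (fun s : ℝ => f (R • e + s • (R⁻¹ • R • e))) b 0) :
    HasDerivAt (fun r : ℝ => f ((r * R) • e)) (R * b) 1 := by
  have hshift : HasDerivAt (fun r : ℝ => (r - 1) * R) R 1 :=
    (((hasDerivAt_id (1 : ℝ)).sub_const 1).mul_const R).congr_deriv (one_mul R)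
  have hb' : HasDerivAt (fun s : ℝ => f (R • e + s • (R⁻¹ • R • e))) b ((1 - 1) * R) := by
    rwa [sub_self, zero_mul]
  refine (hb'.scomp (1 : ℝ) hshift).congr_of_eventuallyEq (Eventually.of_forall fun r => ?_)
  simp only [Function.comp_def]
  rw [inv_smul_smul₀ hR.ne', ← add_smul]
  ring_nf

lemma exists_profile_hasRadialLaplacian (hR : 0 < R)
    (hf : ContDiffOn ℝ 2 f (closedBall 0 R)) (hrad : IsRadiallyMonotone R f)
    (hb : ∀ x : EuclideanSpace ℝ (Fin (m + 1)), ‖x‖ = R →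
      HasDerivAt (fun s : ℝ => f (x + s • (R⁻¹ • x))) b 0) :
    ∃ U q : Profile, (∀ x ∈ closedBall 0 R, f x = unitExtend U (‖x‖ / R)) ∧
      HasRadialLaplacian m R b U q := by
  set e : EuclideanSpace ℝ (Fin (m + 1)) := EuclideanSpace.single 0 1
  have he : ‖e‖ = 1 := by simp [e]
  have hF : ContDiffOn ℝ 2 (fun r : ℝ => f ((r * R) • e)) (Icc (-1) 1) :=
    hf.comp (ContDiff.contDiffOn (by fun_prop)) fun r => smul_mem_closedBall_of_mem_Icc hR he
  let U : Profile := ⟨fun r => f (((r : ℝ) * R) • e),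
    hF.continuousOn.comp_continuous continuous_subtype_val fun r =>
      Icc_subset_Icc_left neg_one_lt_zero.le r.2⟩
  have heven (r : ℝ) (hr : r ∈ Icc (-1 : ℝ) 1) : f ((-r * R) • e) = f ((r * R) • e) :=
    (hrad.eq_of_norm_eq (smul_mem_closedBall_of_mem_Icc hR he hr) (by simp [norm_smul])).symm
  have hnorm : ‖R • e‖ = R := by rw [norm_smul, he, mul_one, Real.norm_of_nonneg hR.le]
  obtain ⟨q, hq⟩ := exists_hasRadialLaplacian_of_contDiffOn m hR hF heven
    (hasDerivAt_ray_of_normal hR (hb _ hnorm)) (U := U) fun _ => rfl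
  refine ⟨U, q, fun x hx => ?_, hq⟩
  rw [unitExtend_of_mem _ (norm_div_mem_Icc hR hx)]
  refine hrad.eq_of_norm_eq hx ?_
  simp [norm_smul, he, hR.ne']

end RadialData

/-! ### Continuation -/

/-- The function that follows `u` before time `T₁` and the delayed function `w (· - t₀)` from time
`T₁` on. It serves to prolong a solution `u` by a solution `w` started from its slice at time `t₀`.
-/
noncomputable def glue {X : Type*} (T₁ t₀ : ℝ) (u w : X → ℝ → ℝ) (x : X) (t : ℝ) : ℝ :=
  if t < T₁ then u x t else w x (t - t₀)

section Glue

variable {X : Type*} {T T₁ t₀ τ t : ℝ} {u w : X → ℝ → ℝ} {x : X}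

lemma glue_of_lt (ht : t < T₁) (x : X) : glue T₁ t₀ u w x t = u x t := if_pos ht

lemma glue_of_le (ht : T₁ ≤ t) (x : X) : glue T₁ t₀ u w x t = w x (t - t₀) := if_neg ht.not_gt

lemma glue_eq_left (h₀₁ : t₀ ≤ T₁) (hw : EqOn (fun t => w x (t - t₀)) (u x) (Ico t₀ T))
    (ht : t < T) : glue T₁ t₀ u w x t = u x t := by
  rcases lt_or_ge t T₁ with h | h
  · exact glue_of_lt h x
  · exact (glue_of_le h x).trans (hw ⟨h₀₁.trans h, ht⟩)

lemma glue_eq_right (h₁T : T₁ ≤ T) (hw : EqOn (fun t => w x (t - t₀)) (u x) (Ico t₀ T))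
    (ht : t₀ ≤ t) : glue T₁ t₀ u w x t = w x (t - t₀) := by
  rcases lt_or_ge t T₁ with h | h
  · exact (glue_of_lt h x).trans (hw ⟨ht, h.trans_le h₁T⟩).symm
  · exact glue_of_le h x

lemma glue_eventuallyEq_left (ht : t < T₁) (x : X) : glue T₁ t₀ u w x =ᶠ[𝓝 t] u x := by
  filter_upwards [Iio_mem_nhds ht] with s hs using glue_of_lt hs x

lemma glue_eventuallyEq_right (h₀₁ : t₀ < T₁) (h₁T : T₁ ≤ T)
    (hw : EqOn (fun t => w x (t - t₀)) (u x) (Ico t₀ T)) (ht : T₁ ≤ t) :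
    glue T₁ t₀ u w x =ᶠ[𝓝 t] fun s => w x (s - t₀) := by
  filter_upwards [Ioi_mem_nhds (h₀₁.trans_le ht)] with s hs
    using glue_eq_right h₁T hw (le_of_lt hs)

lemma continuousOn_glue [TopologicalSpace X] {K : Set X} (h₀₁ : t₀ < T₁) (h₁T : T₁ < T)
    (hu : ContinuousOn (fun p : X × ℝ => u p.1 p.2) (K ×ˢ Ico 0 T))
    (hwc : ContinuousOn (fun p : X × ℝ => w p.1 p.2) (K ×ˢ Ico 0 τ))
    (hw : ∀ x ∈ K, EqOn (fun t => w x (t - t₀)) (u x) (Ico t₀ T)) :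
    ContinuousOn (fun p : X × ℝ => glue T₁ t₀ u w p.1 p.2) (K ×ˢ Ico 0 (t₀ + τ)) := by
  rintro ⟨x, t⟩ ⟨hx, ht⟩
  rcases lt_or_ge t T₁ with h | h
  · have hnhds : K ×ˢ Ico 0 T ∈ 𝓝[K ×ˢ Ico 0 (t₀ + τ)] (x, t) := by
      filter_upwards [self_mem_nhdsWithin, mem_nhdsWithin_of_mem_nhds
        (continuous_snd.continuousAt.preimage_mem_nhds (Iio_mem_nhds (h.trans h₁T)))] with p hp hpT
      exact ⟨hp.1, hp.2.1, hpT⟩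
    refine ((hu (x, t) ⟨hx, ht.1, h.trans h₁T⟩).mono_of_mem_nhdsWithin hnhds).congr_of_eventuallyEq
      ?_ (glue_eq_left h₀₁.le (hw x hx) (h.trans h₁T))
    filter_upwards [hnhds] with p hp using glue_eq_left h₀₁.le (hw _ hp.1) hp.2.2
  · have hnhds : K ×ˢ Ico t₀ (t₀ + τ) ∈ 𝓝[K ×ˢ Ico 0 (t₀ + τ)] (x, t) := by
      filter_upwards [self_mem_nhdsWithin, mem_nhdsWithin_of_mem_nhds
        (continuous_snd.continuousAt.preimage_mem_nhds (Ioi_mem_nhds (h₀₁.trans_le h)))]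
        with p hp hp₀
      exact ⟨hp.1, le_of_lt hp₀, hp.2.2⟩
    have hdelay : ContinuousOn (fun p : X × ℝ => w p.1 (p.2 - t₀)) (K ×ˢ Ico t₀ (t₀ + τ)) :=
      hwc.comp (f := fun p : X × ℝ => (p.1, p.2 - t₀)) (by fun_prop)
        fun p hp => ⟨hp.1, sub_nonneg.2 hp.2.1, sub_lt_iff_lt_add'.2 hp.2.2⟩
    have h₀t := h₀₁.le.trans h
    refine ((hdelay (x, t) ⟨hx, h₀t, ht.2⟩).mono_of_mem_nhdsWithin hnhds).congr_of_eventuallyEq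
      ?_ (glue_eq_right h₁T.le (hw x hx) h₀t)
    filter_upwards [hnhds] with p hp using glue_eq_right h₁T.le (hw _ hp.1) hp.2.1

lemma sub_mem_Ioo_of_lt_of_mem_Ioo (h : t₀ < t) (ht : t ∈ Ioo 0 (t₀ + τ)) :
    t - t₀ ∈ Ioo 0 τ :=
  ⟨sub_pos.2 h, sub_lt_iff_lt_add'.2 ht.2⟩

lemma differentiableAt_glue (h₀₁ : t₀ < T₁) (h₁T : T₁ < T)
    (hu : ∀ t ∈ Ioo 0 T, DifferentiableAt ℝ (u x) t)
    (hwd : ∀ t ∈ Ioo 0 τ, DifferentiableAt ℝ (w x) t)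
    (hw : EqOn (fun t => w x (t - t₀)) (u x) (Ico t₀ T)) (ht : t ∈ Ioo 0 (t₀ + τ)) :
    DifferentiableAt ℝ (glue T₁ t₀ u w x) t := by
  rcases lt_or_ge t T₁ with h | h
  · exact (hu t ⟨ht.1, h.trans h₁T⟩).congr_of_eventuallyEq (glue_eventuallyEq_left h x)
  · have hdelay := hwd _ (sub_mem_Ioo_of_lt_of_mem_Ioo (h₀₁.trans_le h) ht)
    exact (differentiableAt_comp_sub_const.2 hdelay).congr_of_eventuallyEq
      (glue_eventuallyEq_right h₀₁ h₁T.le hw h)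

lemma contDiffOn_glue {E : Type*} [NormedAddCommGroup E] [NormedSpace ℝ E] {K : Set E}
    {u w : E → ℝ → ℝ} {k : WithTop ℕ∞} (h₀₁ : t₀ < T₁) (h₁T : T₁ < T)
    (hu : ∀ t ∈ Ioo 0 T, ContDiffOn ℝ k (fun x => u x t) K)
    (hw : ∀ t ∈ Ioo 0 τ, ContDiffOn ℝ k (fun x => w x t) K) (ht : t ∈ Ioo 0 (t₀ + τ)) :
    ContDiffOn ℝ k (fun x => glue T₁ t₀ u w x t) K := by
  rcases lt_or_ge t T₁ with h | h
  · simpa only [glue_of_lt h] using hu t ⟨ht.1, h.trans h₁T⟩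
  · simpa only [glue_of_le h] using hw _ (sub_mem_Ioo_of_lt_of_mem_Ioo (h₀₁.trans_le h) ht)

end Glue

namespace IsClassicalSolution

variable {n : ℕ} {R T T₁ t₀ τ lam₁ lam₂ : ℝ} {u v w z : EuclideanSpace ℝ (Fin n) → ℝ → ℝ}
  {u₀ v₀ w₀ z₀ : EuclideanSpace ℝ (Fin n) → ℝ} {x : EuclideanSpace ℝ (Fin n)} {t : ℝ}

lemma deriv_glue (h : IsClassicalSolution n R T lam₁ lam₂ u v u₀ v₀)
    (h' : IsClassicalSolution n R τ lam₁ lam₂ w z w₀ z₀) (h₀₁ : t₀ < T₁) (h₁T : T₁ < T)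
    (hx : x ∈ ball 0 R) (hw : EqOn (fun t => w x (t - t₀)) (u x) (Ico t₀ T))
    (ht : t ∈ Ioo 0 (t₀ + τ)) :
    deriv (glue T₁ t₀ u w x) t =
      lap (fun y => glue T₁ t₀ u w y t) x + lam₁ * exp (glue T₁ t₀ v z x t) := by
  rcases lt_or_ge t T₁ with hc | hc
  · simp only [(glue_eventuallyEq_left hc x).deriv_eq, glue_of_lt hc]
    exact h.pde_u x hx t ⟨ht.1, hc.trans h₁T⟩
  · simp only [(glue_eventuallyEq_right h₀₁ h₁T.le hw hc).deriv_eq, glue_of_le hc,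
      deriv_comp_sub_const]
    exact h'.pde_u x hx _ (sub_mem_Ioo_of_lt_of_mem_Ioo (h₀₁.trans_le hc) ht)

lemma normalDeriv_glue (h : IsClassicalSolution n R T lam₁ lam₂ u v u₀ v₀)
    (h' : IsClassicalSolution n R τ lam₁ lam₂ w z w₀ z₀) (h₀₁ : t₀ < T₁) (h₁T : T₁ < T)
    (hx : ‖x‖ = R) (ht : t ∈ Ioo 0 (t₀ + τ)) :
    normalDeriv R (fun y => glue T₁ t₀ u w y t) x = exp (glue T₁ t₀ v z x t) := by
  rcases lt_or_ge t T₁ with hc | hc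
  · simpa only [glue_of_lt hc] using h.bc_u x hx t ⟨ht.1, hc.trans h₁T⟩
  · simpa only [glue_of_le hc] using
      h'.bc_u x hx _ (sub_mem_Ioo_of_lt_of_mem_Ioo (h₀₁.trans_le hc) ht)

lemma congr_initial (h : IsClassicalSolution n R T lam₁ lam₂ u v u₀ v₀)
    (hu : EqOn u₀ w₀ (closedBall 0 R)) (hv : EqOn v₀ z₀ (closedBall 0 R)) :
    IsClassicalSolution n R T lam₁ lam₂ u v w₀ z₀ :=
  { h with
    init_u := fun x hx => (h.init_u x hx).trans (hu hx)
    init_v := fun x hx => (h.init_v x hx).trans (hv hx) }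

lemma eqOn_restart (h : IsClassicalSolution n R T lam₁ lam₂ u v u₀ v₀) (hR : 0 < R)
    (h₁ : 0 ≤ lam₁) (h₂ : 0 ≤ lam₂) (ht₀ : t₀ ∈ Ico 0 T) (hτ : T ≤ t₀ + τ)
    (h' : IsClassicalSolution n R τ lam₁ lam₂ w z (fun x => u x t₀) fun x => v x t₀)
    (hx : x ∈ closedBall 0 R) :
    EqOn (fun t => w x (t - t₀)) (u x) (Ico t₀ T) ∧
      EqOn (fun t => z x (t - t₀)) (v x) (Ico t₀ T) := by
  have hagree : ∀ t ∈ Ico t₀ T, w x (t - t₀) = u x t ∧ z x (t - t₀) = v x t := fun t ht => by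
    simpa only [add_sub_cancel] using h'.unique (h.shift ht₀) hR h₁ h₂ hx
      ⟨sub_nonneg.2 ht.1, by linarith [ht.2]⟩ (sub_lt_sub_right ht.2 t₀)
  exact ⟨fun t ht => (hagree t ht).1, fun t ht => (hagree t ht).2⟩

/-- The switch takes place at a time strictly inside the overlap `[t₀, T)`, where both solutions
agree by uniqueness; so near every time the glued pair coincides with a single solution. -/
theorem exists_extension (h : IsClassicalSolution n R T lam₁ lam₂ u v u₀ v₀) (hR : 0 < R)
    (h₁ : 0 ≤ lam₁) (h₂ : 0 ≤ lam₂) (ht₀ : t₀ ∈ Ico 0 T) (hτ : T ≤ t₀ + τ)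
    (h' : IsClassicalSolution n R τ lam₁ lam₂ w z (fun x => u x t₀) fun x => v x t₀) :
    ∃ u' v', IsClassicalSolution n R (t₀ + τ) lam₁ lam₂ u' v' u₀ v₀ := by
  obtain ⟨T₁, h₀₁, h₁T⟩ := exists_between ht₀.2
  have hw := fun x hx => (h.eqOn_restart hR h₁ h₂ ht₀ hτ h' (x := x) hx).1
  have hz := fun x hx => (h.eqOn_restart hR h₁ h₂ ht₀ hτ h' (x := x) hx).2
  have h0 : 0 < T₁ := ht₀.1.trans_lt h₀₁
  exact ⟨glue T₁ t₀ u w, glue T₁ t₀ v z,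
    { cont_u := continuousOn_glue h₀₁ h₁T h.cont_u h'.cont_u hw
      cont_v := continuousOn_glue h₀₁ h₁T h.cont_v h'.cont_v hz
      reg_space_u := fun t => contDiffOn_glue h₀₁ h₁T h.reg_space_u h'.reg_space_u
      reg_space_v := fun t => contDiffOn_glue h₀₁ h₁T h.reg_space_v h'.reg_space_v
      reg_time_u := fun x hx t =>
        differentiableAt_glue h₀₁ h₁T (h.reg_time_u x hx) (h'.reg_time_u x hx) (hw x hx)
      reg_time_v := fun x hx t =>
        differentiableAt_glue h₀₁ h₁T (h.reg_time_v x hx) (h'.reg_time_v x hx) (hz x hx)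
      pde_u := fun x hx t => h.deriv_glue h' h₀₁ h₁T hx (hw x (ball_subset_closedBall hx))
      pde_v := fun x hx t =>
        h.swap.deriv_glue h'.swap h₀₁ h₁T hx (hz x (ball_subset_closedBall hx))
      bc_u := fun x hx t => h.normalDeriv_glue h' h₀₁ h₁T hx
      bc_v := fun x hx t => h.swap.normalDeriv_glue h'.swap h₀₁ h₁T hx
      init_u := fun x hx => (glue_of_lt h0 x).trans (h.init_u x hx)
      init_v := fun x hx => (glue_of_lt h0 x).trans (h.init_v x hx) }⟩

end IsClassicalSolution

section BoundedContinuation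

variable {m : ℕ} {R T lam₁ lam₂ M : ℝ} {u v : EuclideanSpace ℝ (Fin (m + 1)) → ℝ → ℝ}
  {u₀ v₀ : EuclideanSpace ℝ (Fin (m + 1)) → ℝ} {e : EuclideanSpace ℝ (Fin (m + 1))}

lemma apply_one_of_eq_unitExtend {f : EuclideanSpace ℝ (Fin (m + 1)) → ℝ} {W : Profile}
    (hR : 0 < R) (he : ‖e‖ = 1)
    (hf : ∀ x ∈ closedBall (0 : EuclideanSpace ℝ (Fin (m + 1))) R, f x = unitExtend W (‖x‖ / R)) :
    f (R • e) = W 1 := by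
  have hnorm : ‖R • e‖ = R := by rw [norm_smul, he, mul_one, Real.norm_of_nonneg hR.le]
  rw [hf _ (mem_closedBall_zero_iff.2 hnorm.le), hnorm, div_self hR.ne',
    unitExtend_of_mem _ (right_mem_Icc.2 zero_le_one)]
  rfl

lemma norm_le_of_eq_unitExtend {f : EuclideanSpace ℝ (Fin (m + 1)) → ℝ} {W : Profile}
    (hR : 0 < R) (he : ‖e‖ = 1)
    (hf : ∀ x ∈ closedBall (0 : EuclideanSpace ℝ (Fin (m + 1))) R, f x = unitExtend W (‖x‖ / R))
    (hM : ∀ x ∈ closedBall (0 : EuclideanSpace ℝ (Fin (m + 1))) R, |f x| ≤ M) : ‖W‖ ≤ M := by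
  refine (ContinuousMap.norm_le_of_nonempty W).2 fun r => ?_
  have hmem := smul_mem_closedBall_of_mem_Icc hR he ⟨(neg_one_lt_zero.le).trans r.2.1, r.2.2⟩
  have hnorm : ‖((r : ℝ) * R) • e‖ / R = r := by
    rw [norm_smul, he, mul_one, Real.norm_of_nonneg (mul_nonneg r.2.1 hR.le),
      mul_div_cancel_right₀ _ hR.ne']
  have hr := hM _ hmem
  rwa [hf _ hmem, hnorm, unitExtend_coe] at hr

lemma IsClassicalSolution.exists_profile (h : IsClassicalSolution (m + 1) R T lam₁ lam₂ u v u₀ v₀)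
    (hR : 0 < R) (h₁ : 0 < lam₁) (h₂ : 0 < lam₂) (hu₀ : IsRadiallyMonotone R u₀)
    (hv₀ : IsRadiallyMonotone R v₀) (he : ‖e‖ = 1) {t : ℝ} (ht : t ∈ Ioo 0 T) :
    ∃ U q : Profile, (∀ x ∈ closedBall (0 : EuclideanSpace ℝ (Fin (m + 1))) R,
      u x t = unitExtend U (‖x‖ / R)) ∧ HasRadialLaplacian m R (exp (v (R • e) t)) U q := by
  have hnorm : ‖R • e‖ = R := by rw [norm_smul, he, mul_one, Real.norm_of_nonneg hR.le]
  have hmono := h.isRadiallyMonotone hR h₁ h₂ hu₀ hv₀ (Ioo_subset_Ico_self ht)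
  refine exists_profile_hasRadialLaplacian hR (h.reg_space_u t ht) hmono.1 fun x hx => ?_
  have hbdry : v x t = v (R • e) t :=
    hmono.2.eq_of_norm_eq (mem_closedBall_zero_iff.2 hx.le) (hx.trans hnorm.symm)
  exact hbdry ▸ h.hasDerivAt_normal hx ht

theorem exists_extension_of_abs_le (hR : 0 < R) (h₁ : 0 < lam₁) (h₂ : 0 < lam₂) (m : ℕ) (M : ℝ) :
    ∃ τ, 0 < τ ∧ ∀ {T} {u v : EuclideanSpace ℝ (Fin (m + 1)) → ℝ → ℝ} {u₀ v₀},
      IsClassicalSolution (m + 1) R T lam₁ lam₂ u v u₀ v₀ → IsRadiallyMonotone R u₀ →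
      IsRadiallyMonotone R v₀ → ∀ t₀ ∈ Ioo 0 T, T ≤ t₀ + τ →
      (∀ x ∈ closedBall 0 R, |u x t₀| ≤ M ∧ |v x t₀| ≤ M) →
      ∃ u' v', IsClassicalSolution (m + 1) R (t₀ + τ) lam₁ lam₂ u' v' u₀ v₀ := by
  obtain ⟨τ, hτ, hlocal⟩ := exists_isClassicalSolution_of_norm_le m hR h₁ h₂ M
  refine ⟨τ, hτ, fun {T u v u₀ v₀} h hu₀ hv₀ t₀ ht₀ hT hM => ?_⟩
  obtain ⟨e, he⟩ : ∃ e : EuclideanSpace ℝ (Fin (m + 1)), ‖e‖ = 1 := exists_norm_eq _ zero_le_one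
  obtain ⟨U, q, hU, hq⟩ := h.exists_profile hR h₁ h₂ hu₀ hv₀ he ht₀
  obtain ⟨V, p, hV, hp⟩ := h.swap.exists_profile hR h₂ h₁ hv₀ hu₀ he ht₀
  rw [apply_one_of_eq_unitExtend hR he hV] at hq
  rw [apply_one_of_eq_unitExtend hR he hU] at hp
  obtain ⟨w, z, hwz⟩ := hlocal U V q p
    (norm_le_of_eq_unitExtend hR he hU fun x hx => (hM x hx).1)
    (norm_le_of_eq_unitExtend hR he hV fun x hx => (hM x hx).2) hq hp
  exact h.exists_extension hR h₁.le h₂.le (Ioo_subset_Ico_self ht₀) hT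
    (hwz.congr_initial (fun x hx => (hU x hx).symm) fun x hx => (hV x hx).symm)

end BoundedContinuation

/-! ### Blow-up -/

lemma IsRadiallyMonotone.add {n : ℕ} {R : ℝ} {f g : EuclideanSpace ℝ (Fin n) → ℝ}
    (hf : IsRadiallyMonotone R f) (hg : IsRadiallyMonotone R g) :
    IsRadiallyMonotone R fun x => f x + g x := fun x hx y hy hxy =>
  add_le_add (hf x hx y hy hxy) (hg x hx y hy hxy)

lemma IsRadiallyMonotone.iSup_eq {n : ℕ} {R : ℝ} {f : EuclideanSpace ℝ (Fin n) → ℝ}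
    (hf : IsRadiallyMonotone R f) {x : EuclideanSpace ℝ (Fin n)} (hx : ‖x‖ = R) :
    ⨆ y : closedBall (0 : EuclideanSpace ℝ (Fin n)) R, f y = f x := by
  have hmem := mem_closedBall_zero_iff.2 hx.le
  have hmax : IsGreatest (range fun y : closedBall (0 : EuclideanSpace ℝ (Fin n)) R => f y) (f x) :=
    ⟨⟨⟨x, hmem⟩, rfl⟩, forall_mem_range.2 fun y =>
      hf y y.2 x hmem ((mem_closedBall_zero_iff.1 y.2).trans hx.ge)⟩
  exact hmax.csSup_eq

lemma exists_seq_tendsto_atTop_of_tendsto_add_atTop {α : Type*} {l : Filter α} [l.NeBot]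
    [l.IsCountablyGenerated] {f g : α → ℝ} {s : Set α} (hs : s ∈ l)
    (h : Tendsto (fun a => f a + g a) l atTop) :
    ∃ a : ℕ → α, (∀ k, a k ∈ s) ∧ Tendsto a atTop l ∧
      (Tendsto (fun k => f (a k)) atTop atTop ∨ Tendsto (fun k => g (a k)) atTop atTop) := by
  have hor : (∃ᶠ a in l, g a ≤ f a) ∨ ∃ᶠ a in l, f a ≤ g a :=
    frequently_or_distrib.1 (Frequently.of_forall fun a => le_total _ _)
  have hhalf : Tendsto (fun a => (f a + g a) / 2) l atTop := h.atTop_div_const two_pos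
  rcases hor with hle | hle <;>
    obtain ⟨a, ha, hmem⟩ := exists_seq_forall_of_frequently (hle.and_eventually hs) <;>
    refine ⟨a, fun k => (hmem k).2, ha, ?_⟩
  · have hbound (k : ℕ) : (f (a k) + g (a k)) / 2 ≤ f (a k) := by linarith [(hmem k).1]
    exact Or.inl (tendsto_atTop_mono hbound (hhalf.comp ha))
  · have hbound (k : ℕ) : (f (a k) + g (a k)) / 2 ≤ g (a k) := by linarith [(hmem k).1]
    exact Or.inr (tendsto_atTop_mono hbound (hhalf.comp ha))

lemma isBlowUpPoint_of_tendsto_add {n : ℕ} {R T : ℝ} {u v : EuclideanSpace ℝ (Fin n) → ℝ → ℝ}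
    {x : EuclideanSpace ℝ (Fin n)} (hT : 0 < T) (hx : x ∈ closedBall 0 R)
    (h : Tendsto (fun t => u x t + v x t) (𝓝[<] T) atTop) : IsBlowUpPoint n R T u v x := by
  obtain ⟨ts, hts, hlim, hblow⟩ :=
    exists_seq_tendsto_atTop_of_tendsto_add_atTop (Ioo_mem_nhdsLT hT) h
  exact ⟨fun _ => x, ts, fun _ => hx, hts, tendsto_const_nhds,
    hlim.mono_right nhdsWithin_le_nhds, hblow⟩

namespace IsClassicalSolution

variable {m n : ℕ} {R T lam₁ lam₂ : ℝ}

theorem not_global {u v : EuclideanSpace ℝ (Fin n) → ℝ → ℝ} {u₀ v₀ : EuclideanSpace ℝ (Fin n) → ℝ}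
    (hR : 0 < R) (h₁ : 0 < lam₁) (h₂ : 0 < lam₂) :
    ¬ ∀ T, 0 < T → IsClassicalSolution n R T lam₁ lam₂ u v u₀ v₀ := by
  intro h
  obtain ⟨a, ha⟩ := (h 1 one_pos).exists_forall_le_initial one_pos
  have hlam : 0 < min lam₁ lam₂ := lt_min h₁ h₂
  have hlife := (h (2 * exp (-a) / min lam₁ lam₂) (by positivity)).min_mul_le_exp hR h₁ h₂
    (fun x hx => (ha x hx).1) fun x hx => (ha x hx).2
  rw [mul_div_cancel₀ _ hlam.ne'] at hlife
  linarith [exp_pos (-a)]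

variable {u v : EuclideanSpace ℝ (Fin (m + 1)) → ℝ → ℝ}
  {u₀ v₀ : EuclideanSpace ℝ (Fin (m + 1)) → ℝ} {x : EuclideanSpace ℝ (Fin (m + 1))}

lemma abs_le_of_add_le (h : IsClassicalSolution (m + 1) R T lam₁ lam₂ u v u₀ v₀) (hR : 0 < R)
    (h₁ : 0 < lam₁) (h₂ : 0 < lam₂) (hu₀ : IsRadiallyMonotone R u₀)
    (hv₀ : IsRadiallyMonotone R v₀) {a b t : ℝ}
    (ha : ∀ y ∈ closedBall 0 R, a ≤ u₀ y ∧ a ≤ v₀ y) (hx : ‖x‖ = R) (ht : t ∈ Ico 0 T)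
    (hb : u x t + v x t ≤ b) {y : EuclideanSpace ℝ (Fin (m + 1))} (hy : y ∈ closedBall 0 R) :
    |u y t| ≤ |a| + |b| ∧ |v y t| ≤ |a| + |b| := by
  have hxmem := mem_closedBall_zero_iff.2 hx.le
  have hyx : ‖y‖ ≤ ‖x‖ := (mem_closedBall_zero_iff.1 hy).trans hx.ge
  have hmono := h.isRadiallyMonotone hR h₁ h₂ hu₀ hv₀ ht
  have hlow {z} (hz : z ∈ closedBall 0 R) := h.le_of_le_initial hR h₁ h₂
    (fun y hy => (ha y hy).1) (fun y hy => (ha y hy).2) hz ht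
  have hux := hmono.1 y hy x hxmem hyx
  have hvx := hmono.2 y hy x hxmem hyx
  constructor <;> rw [abs_le] <;> constructor <;>
    linarith [hlow hy, hlow hxmem, neg_abs_le a, le_abs_self b, abs_nonneg b]

theorem tendsto_add_atTop (h : IsClassicalSolution (m + 1) R T lam₁ lam₂ u v u₀ v₀) (hR : 0 < R)
    (h₁ : 0 < lam₁) (h₂ : 0 < lam₂) (hu₀ : IsRadiallyMonotone R u₀)
    (hv₀ : IsRadiallyMonotone R v₀) (hT : 0 < T)
    (hmax : ∀ T' u' v', IsClassicalSolution (m + 1) R T' lam₁ lam₂ u' v' u₀ v₀ → T' ≤ T)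
    (hx : ‖x‖ = R) : Tendsto (fun t => u x t + v x t) (𝓝[<] T) atTop := by
  obtain ⟨a, ha⟩ := h.exists_forall_le_initial hT
  refine tendsto_atTop.2 fun b => ?_
  obtain ⟨τ, hτ, hext⟩ := exists_extension_of_abs_le hR h₁ h₂ m (|a| + |b|)
  filter_upwards [Ioo_mem_nhdsLT hT, Ioo_mem_nhdsLT (sub_lt_self T hτ)] with t ht htτ
  by_contra! hb
  obtain ⟨u', v', h'⟩ := hext h hu₀ hv₀ t ht (by linarith [htτ.1]) fun y hy =>
    h.abs_le_of_add_le hR h₁ h₂ hu₀ hv₀ ha hx (Ioo_subset_Ico_self ht) hb.le hy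
  linarith [hmax _ _ _ h', htτ.1]

end IsClassicalSolution

theorem finite_time_blowup_general {n : ℕ} (hn : 1 ≤ n) {R lam1 lam2 : ℝ}
    (hR : 0 < R) (hlam1 : 0 < lam1) (hlam2 : 0 < lam2)
    {u₀ v₀ : EuclideanSpace ℝ (Fin n) → ℝ} (hu₀ : IsRadiallyMonotone R u₀)
    (hv₀ : IsRadiallyMonotone R v₀) :
    (¬ ∃ u v : EuclideanSpace ℝ (Fin n) → ℝ → ℝ, ∀ T : ℝ, 0 < T →
        IsClassicalSolution n R T lam1 lam2 u v u₀ v₀) ∧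
    (∀ (T : ℝ) (u v : EuclideanSpace ℝ (Fin n) → ℝ → ℝ), 0 < T →
        IsClassicalSolution n R T lam1 lam2 u v u₀ v₀ →
        (∀ (T' : ℝ) (u' v' : EuclideanSpace ℝ (Fin n) → ℝ → ℝ),
          IsClassicalSolution n R T' lam1 lam2 u' v' u₀ v₀ → T' ≤ T) →
        Tendsto (fun t : ℝ => ⨆ x : closedBall (0 : EuclideanSpace ℝ (Fin n)) R,
            (u x t + v x t)) (𝓝[<] T) atTop ∧
        ∀ x : EuclideanSpace ℝ (Fin n), ‖x‖ = R → IsBlowUpPoint n R T u v x) := by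
  refine ⟨fun ⟨u, v, h⟩ => IsClassicalSolution.not_global hR hlam1 hlam2 h,
    fun T u v hT h hmax => ?_⟩
  obtain ⟨m, rfl⟩ := Nat.exists_eq_add_of_le' hn
  have hblow {x} (hx : ‖x‖ = R) : Tendsto (fun t => u x t + v x t) (𝓝[<] T) atTop :=
    h.tendsto_add_atTop hR hlam1 hlam2 hu₀ hv₀ hT hmax hx
  refine ⟨?_, fun x hx =>
    isBlowUpPoint_of_tendsto_add hT (mem_closedBall_zero_iff.2 hx.le) (hblow hx)⟩
  obtain ⟨x, hx⟩ : ∃ x : EuclideanSpace ℝ (Fin (m + 1)), ‖x‖ = R := exists_norm_eq _ hR.le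
  refine (hblow hx).congr' ?_
  filter_upwards [Ioo_mem_nhdsLT hT] with t ht
  have hmono := h.isRadiallyMonotone hR hlam1 hlam2 hu₀ hv₀ (Ioo_subset_Ico_self ht)
  exact ((hmono.1.add hmono.2).iSup_eq hx).symm

/-- Finite-time blow-up (Section 2): for every choice of admissible initial data, the
classical solution of problem (1.1) is not global.  First, there is no solution defined
on `[0,T)` for every `T > 0`; second, if `(u,v)` is a classical solution on `[0,T)` whose
existence time `T` is maximal among classical solutions with the same data, then
`sup_{cl(B_R)} (u(·,t) + v(·,t)) → ∞` as `t → T⁻` and every point of `∂B_R` is a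
blow-up point. -/
theorem finite_time_blowup {n : ℕ} (hn : 1 ≤ n) {R lam1 lam2 : ℝ}
    (hR : 0 < R) (hlam1 : 0 < lam1) (hlam2 : 0 < lam2)
    {u₀ v₀ : EuclideanSpace ℝ (Fin n) → ℝ} (hdata : AdmissibleData n R u₀ v₀) :
    (¬ ∃ u v : EuclideanSpace ℝ (Fin n) → ℝ → ℝ, ∀ T : ℝ, 0 < T →
        IsClassicalSolution n R T lam1 lam2 u v u₀ v₀) ∧
    (∀ (T : ℝ) (u v : EuclideanSpace ℝ (Fin n) → ℝ → ℝ), 0 < T →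
        IsClassicalSolution n R T lam1 lam2 u v u₀ v₀ →
        (∀ (T' : ℝ) (u' v' : EuclideanSpace ℝ (Fin n) → ℝ → ℝ),
          IsClassicalSolution n R T' lam1 lam2 u' v' u₀ v₀ → T' ≤ T) →
        Tendsto (fun t : ℝ => ⨆ x : closedBall (0 : EuclideanSpace ℝ (Fin n)) R,
            (u x t + v x t)) (𝓝[<] T) atTop ∧
        ∀ x : EuclideanSpace ℝ (Fin n), ‖x‖ = R → IsBlowUpPoint n R T u v x) :=
  finite_time_blowup_general hn hR hlam1 hlam2 hdata.u0_radial_mono hdata.v0_radial_mono
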